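/- arXiv:1001.4729 — 2 statements merged into one kernel-verified Lean document; each statement's English description precedes it below -/
import Mathlib

section
/- Assume f satisfies (f1), (f2), (f3): f(s) ≥ f'(s)(s−β) for all s ≥ β, and (f4): (F/f)'(s) ≥ (n−2)/(2n) for all s > β, and let α* ∈ G₂. Then there exists δ > 0 such that for all α₁ < α₂ in (α*−δ, α*+δ): if α₁ ∈ G₂ ∪ N₂, then α₂ ∈ N₂, Z₂(α₁) > Z₂(α₂), and |u'(Z₂(α₁),α₁)| < |u'(Z₂(α₂),α₂)|; and if α₂ ∈ G₂, then α₁ ∈ F₂. -/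
open Set Filter MeasureTheory

namespace Paper

noncomputable section

/-- `F s = ∫₀ˢ f t dt`. -/
def Fint (f : ℝ → ℝ) (s : ℝ) : ℝ := ∫ t in (0:ℝ)..s, f t

/-- Hypothesis (f1): `f` is odd, `f 0 = 0`, there are `β > b > 0` with `f > 0` on `(b,∞)`,
`f ≤ 0`, `f ≢ 0` on `[0,b]`, and `F β = 0`. -/
def Hf1 (f : ℝ → ℝ) (b β : ℝ) : Prop :=
  (∀ s, f (-s) = -f s) ∧ f 0 = 0 ∧ 0 < b ∧ b < β ∧
    (∀ s, b < s → 0 < f s) ∧ (∀ s ∈ Icc (0:ℝ) b, f s ≤ 0) ∧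
    (∃ s ∈ Icc (0:ℝ) b, f s ≠ 0) ∧ Fint f β = 0

/-- Hypothesis (f2): `f` continuous on `[0,∞)`, C¹ on `(0,∞)`, `f' ∈ L¹(0,1)`. -/
def Hf2 (f : ℝ → ℝ) : Prop :=
  ContinuousOn f (Ici 0) ∧ (∀ s : ℝ, 0 < s → DifferentiableAt ℝ f s) ∧
    ContinuousOn (deriv f) (Ioi 0) ∧ IntegrableOn (deriv f) (Ioo 0 1)

/-- Hypothesis (f3): `f s ≥ f' s * (s - β)` for `s ≥ β`. -/
def Hf3 (f : ℝ → ℝ) (β : ℝ) : Prop := ∀ s, β ≤ s → deriv f s * (s - β) ≤ f s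

/-- Hypothesis (f4): `(F/f)' s ≥ (n-2)/(2n)` for `s > β`. -/
def Hf4 (n : ℕ) (f : ℝ → ℝ) (β : ℝ) : Prop :=
  ∀ s, β < s → ((n : ℝ) - 2) / (2 * (n : ℝ)) ≤ deriv (fun t => Fint f t / f t) s

/-- Hypothesis (f4'): `(F/f)' s ≥ (n-2)/2` for `s > β`. -/
def Hf4' (n : ℕ) (f : ℝ → ℝ) (β : ℝ) : Prop :=
  ∀ s, β < s → ((n : ℝ) - 2) / 2 ≤ deriv (fun t => Fint f t / f t) s

/-- Hypothesis (f5): `s ↦ s f' s / f s` is nonincreasing on `[β,∞)`. -/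
def Hf5 (f : ℝ → ℝ) (β : ℝ) : Prop := AntitoneOn (fun s => s * deriv f s / f s) (Ici β)

/-- Hypothesis (f6): `β f' β / f β ≤ n/(n-2)`. -/
def Hf6 (n : ℕ) (f : ℝ → ℝ) (β : ℝ) : Prop := β * deriv f β / f β ≤ (n : ℝ) / ((n : ℝ) - 2)

/-- Hypothesis (f1'): `f 0 = 0` and `s f s > 0` for `s > 0`. -/
def Hf1' (f : ℝ → ℝ) : Prop := f 0 = 0 ∧ ∀ s : ℝ, 0 < s → 0 < s * f s

/-- Hypothesis (f3'): `f s ≥ s f' s` for `s > 0`, with strict inequality at points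
arbitrarily close to `0`. -/
def Hf3' (f : ℝ → ℝ) : Prop :=
  (∀ s : ℝ, 0 < s → s * deriv f s ≤ f s) ∧
    ∀ ε : ℝ, 0 < ε → ∃ s ∈ Ioo (0:ℝ) ε, s * deriv f s < f s

/-- `v` is a C² solution of (E) on `(0,∞)`, continuous on `[0,∞)`,
with `v 0 = α` and `v' 0 = 0`. -/
def IVPsol (n : ℕ) (f : ℝ → ℝ) (α : ℝ) (v : ℝ → ℝ) : Prop :=
  v 0 = α ∧ deriv v 0 = 0 ∧ ContinuousOn v (Ici 0) ∧
    (∀ r : ℝ, 0 < r → DifferentiableAt ℝ v r ∧ DifferentiableAt ℝ (deriv v) r) ∧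
    (∀ r : ℝ, 0 < r → deriv (deriv v) r + ((n : ℝ) - 1) / r * deriv v r + f (v r) = 0)

/-- The family `α ↦ u α` of solutions of the IVP, with `u α r` and `u' α r`
continuous in `(α, r)`. -/
def Family (n : ℕ) (f : ℝ → ℝ) (u : ℝ → ℝ → ℝ) : Prop :=
  (∀ α : ℝ, 0 < α → IVPsol n f α (u α)) ∧
    ContinuousOn (fun p : ℝ × ℝ => u p.1 p.2) (Ioi 0 ×ˢ Ici 0) ∧
    ContinuousOn (fun p : ℝ × ℝ => deriv (u p.1) p.2) (Ioi 0 ×ˢ Ici 0)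

/-- The set whose supremum is `Z_k α`, given `T = T_{k-1} α`. -/
def ZsetAux (u : ℝ → ℝ → ℝ) (k : ℕ) (T α : ℝ) : Set ℝ :=
  {r | T < r ∧ ∀ s ∈ Ioo T r, (-1 : ℝ) ^ k * u α s < 0 ∧ 0 < (-1 : ℝ) ^ k * deriv (u α) s}

/-- The pair `(Z_k, T_k)`, with `T₀ = 0`;
`Z_k α = sup {r > T_{k-1} α | (-1)^k u < 0, (-1)^k u' > 0 on (T_{k-1} α, r)}` and
`T_k α = inf {r > Z_k α | u'(r, α) = 0}`. -/
def ZT (u : ℝ → ℝ → ℝ) : ℕ → (ℝ → ℝ) × (ℝ → ℝ)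
  | 0 => (fun _ => 0, fun _ => 0)
  | k + 1 =>
    let Z : ℝ → ℝ := fun α => sSup (ZsetAux u (k + 1) ((ZT u k).2 α) α)
    (Z, fun α => sInf {r | Z α < r ∧ deriv (u α) r = 0})

/-- `Z_k α` (as a real number; the genuine value when the defining set is bounded above). -/
def Zk (u : ℝ → ℝ → ℝ) (k : ℕ) (α : ℝ) : ℝ := (ZT u k).1 α

/-- `T_k α`, with `T₀ = 0`. -/
def Tk (u : ℝ → ℝ → ℝ) (k : ℕ) (α : ℝ) : ℝ := (ZT u k).2 α

/-- The defining set of `Z_k α`; `Z_k α = ∞` iff this set is unbounded above. -/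
def ZsetK (u : ℝ → ℝ → ℝ) (k : ℕ) (α : ℝ) : Set ℝ := ZsetAux u k (Tk u (k - 1) α) α

open Classical in
/-- The value of `u (·, α)` at `Z_k α`, as a limit `r → ∞` when `Z_k α = ∞`. -/
def uAtZ (u : ℝ → ℝ → ℝ) (k : ℕ) (α : ℝ) : ℝ :=
  if BddAbove (ZsetK u k α) then u α (Zk u k α) else limUnder atTop (u α)

open Classical in
/-- The value of `u' (·, α)` at `Z_k α`, as a limit `r → ∞` when `Z_k α = ∞`. -/
def duAtZ (u : ℝ → ℝ → ℝ) (k : ℕ) (α : ℝ) : ℝ :=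
  if BddAbove (ZsetK u k α) then deriv (u α) (Zk u k α) else limUnder atTop (deriv (u α))

open Classical in
/-- `Z_k α` as an extended real number. -/
def ZkE (u : ℝ → ℝ → ℝ) (k : ℕ) (α : ℝ) : WithTop ℝ :=
  if BddAbove (ZsetK u k α) then (Zk u k α : WithTop ℝ) else ⊤

/-- Membership in `F̃_k` (for `α ∈ N_{k-1}`): `(-1)^k u' (r, α) < 0` for all `r > Z_{k-1} α`. -/
def Ftil (u : ℝ → ℝ → ℝ) (k : ℕ) (α : ℝ) : Prop :=
  ∀ r, Zk u (k - 1) α < r → (-1 : ℝ) ^ k * deriv (u α) r < 0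

/-- The sets `N_k` (with `N₀ := (0,∞)`). -/
def Nk (u : ℝ → ℝ → ℝ) : ℕ → Set ℝ
  | 0 => Ioi 0
  | 1 => {α | 0 < α ∧ uAtZ u 1 α = 0 ∧ duAtZ u 1 α < 0}
  | k + 2 => {α | α ∈ Nk u (k + 1) ∧ ¬Ftil u (k + 2) α ∧ uAtZ u (k + 2) α = 0 ∧
      0 < (-1 : ℝ) ^ (k + 2) * duAtZ u (k + 2) α}

/-- The sets `G_k`. -/
def Gk (u : ℝ → ℝ → ℝ) : ℕ → Set ℝ
  | 0 => ∅
  | 1 => {α | 0 < α ∧ uAtZ u 1 α = 0 ∧ duAtZ u 1 α = 0}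
  | k + 2 => {α | α ∈ Nk u (k + 1) ∧ ¬Ftil u (k + 2) α ∧ uAtZ u (k + 2) α = 0 ∧
      duAtZ u (k + 2) α = 0}

/-- The set `F̃_k` (for `k ≥ 2`). -/
def FtilSet (u : ℝ → ℝ → ℝ) (k : ℕ) : Set ℝ := {α | α ∈ Nk u (k - 1) ∧ Ftil u k α}

/-- The set `F_k` (for `k ≥ 2`). -/
def Fk (u : ℝ → ℝ → ℝ) (k : ℕ) : Set ℝ :=
  {α | α ∈ Nk u (k - 1) ∧ ¬Ftil u k α ∧ (-1 : ℝ) ^ k * uAtZ u k α < 0}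

/-- The sets `P_k`. -/
def Pk (u : ℝ → ℝ → ℝ) : ℕ → Set ℝ
  | 0 => ∅
  | 1 => {α | 0 < α ∧ 0 < uAtZ u 1 α}
  | k + 2 => FtilSet u (k + 2) ∪ Fk u (k + 2)

/-- The set of extremal points (zeros of `u' (·, α)`) in `[0, A]`. -/
def ExtSet (u : ℝ → ℝ → ℝ) (α A : ℝ) : Set ℝ := {r | r ∈ Icc 0 A ∧ deriv (u α) r = 0}

/-- The conclusion of the δ₁-lemma (Lemma 4.1): every solution with initial value in
`(α*-δ₁, α*+δ₁)` has exactly `k` extremal points in `[0, T_{k-1}(α*) + a]`, with minimum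
values `< -β` and maximum values `> β`; moreover any two such solutions intersect between
any two of their consecutive extremal points, and in `(T_{k-1}(α*), Z_k(α*))`. -/
def DeltaOneLemma (f : ℝ → ℝ) (β : ℝ) (u : ℝ → ℝ → ℝ) (k : ℕ) (αs a δ₁ : ℝ) : Prop :=
  0 < a ∧ 0 < δ₁ ∧
    (∀ α ∈ Ioo (αs - δ₁) (αs + δ₁),
      (ExtSet u α (Tk u (k - 1) αs + a)).Finite ∧
        (ExtSet u α (Tk u (k - 1) αs + a)).ncard = k ∧
        ∀ r ∈ ExtSet u α (Tk u (k - 1) αs + a),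
          (IsLocalMin (u α) r → u α r < -β) ∧ (IsLocalMax (u α) r → β < u α r)) ∧
    ∀ α₁ ∈ Ioo (αs - δ₁) (αs + δ₁), ∀ α₂ ∈ Ioo (αs - δ₁) (αs + δ₁), α₁ < α₂ →
      (∀ i : ℕ, 1 ≤ i → i ≤ k - 1 →
        ∃ t, max (Tk u (i - 1) α₁) (Tk u (i - 1) α₂) < t ∧
          t < min (Tk u i α₁) (Tk u i α₂) ∧ u α₁ t = u α₂ t) ∧
      ∃ t, Tk u (k - 1) αs < t ∧ (BddAbove (ZsetK u k αs) → t < Zk u k αs) ∧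
        u α₁ t = u α₂ t

/-- `ρ` is the inverse of the monotone branch of `v` on `[t₁, t₂]`, whose set of values
is `[m, M]`. -/
def InvBranch (v ρ : ℝ → ℝ) (t₁ t₂ m M : ℝ) : Prop :=
  (∀ s ∈ Icc m M, ρ s ∈ Icc t₁ t₂ ∧ v (ρ s) = s) ∧
    ∀ s ∈ Ioo m M, HasDerivAt ρ (1 / deriv v (ρ s)) s

/-- `ρ` inverts a decreasing branch of `v` over the value interval `[m, M]`, along which
`(v')² + 2F > 0`. -/
def DecBranchInv (f : ℝ → ℝ) (v ρ : ℝ → ℝ) (m M : ℝ) : Prop :=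
  ∀ s ∈ Icc m M, 0 ≤ ρ s ∧ v (ρ s) = s ∧ deriv v (ρ s) < 0 ∧
    HasDerivAt ρ (1 / deriv v (ρ s)) s ∧ 0 < (deriv v (ρ s)) ^ 2 + 2 * Fint f s

/-- The functional `Q(s) = -4 (F/f)(s) r/r' - r²/(r')² - 2 r² F(s) + H(s)` computed along
the branch inverse `ρ`. -/
def Qfun (f H ρ : ℝ → ℝ) (s : ℝ) : ℝ :=
  -4 * (Fint f s / f s) * (ρ s / deriv ρ s) - (ρ s) ^ 2 / (deriv ρ s) ^ 2 -
    2 * (ρ s) ^ 2 * Fint f s + H s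

/-- The functional `P(s) = -2n (F/f)(s) r^{n-1}/r' - r^n/(r')² - 2 r^n F(s)`. -/
def Pfun (n : ℕ) (f : ℝ → ℝ) (ρ : ℝ → ℝ) (s : ℝ) : ℝ :=
  -(2 * (n : ℝ)) * (Fint f s / f s) * (ρ s ^ (n - 1) / deriv ρ s) -
    ρ s ^ n / (deriv ρ s) ^ 2 - 2 * ρ s ^ n * Fint f s

/-- The functional `W(s) = r(s) √((u'(r(s)))² + 2 F(s))`. -/
def Wfun (f v ρ : ℝ → ℝ) (s : ℝ) : ℝ :=
  ρ s * Real.sqrt ((deriv v (ρ s)) ^ 2 + 2 * Fint f s)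

/-- The functional `W̃(s) = r(s)^{n-1} √((u'(r(s)))² + 2 F(s))`. -/
def Wtil (n : ℕ) (f : ℝ → ℝ) (v ρ : ℝ → ℝ) (s : ℝ) : ℝ :=
  ρ s ^ (n - 1) * Real.sqrt ((deriv v (ρ s)) ^ 2 + 2 * Fint f s)

/-- `v` changes sign at `z ∈ (0,∞)`: `v z = 0` and `v` takes both signs in every
neighborhood of `z` (within `(0,∞)`). -/
def SignChange (v : ℝ → ℝ) (z : ℝ) : Prop :=
  v z = 0 ∧ ∀ ε : ℝ, 0 < ε →
    (∃ x ∈ Ioo (z - ε) (z + ε) ∩ Ioi 0, 0 < v x) ∧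
    (∃ x ∈ Ioo (z - ε) (z + ε) ∩ Ioi 0, v x < 0)

/-- `v` has exactly `m` sign changes in `(0,∞)`. -/
def ExactSignChanges (v : ℝ → ℝ) (m : ℕ) : Prop :=
  {z | 0 < z ∧ SignChange v z}.Finite ∧ {z | 0 < z ∧ SignChange v z}.ncard = m

/-- Bound state: a C² solution of (E) on `(0,∞)` with `v' 0 = 0` and `v r → 0` as `r → ∞`. -/
def BoundState (n : ℕ) (f : ℝ → ℝ) (v : ℝ → ℝ) : Prop :=
  ContinuousOn v (Ici 0) ∧
    (∀ r : ℝ, 0 < r → DifferentiableAt ℝ v r ∧ DifferentiableAt ℝ (deriv v) r) ∧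
    (∀ r : ℝ, 0 < r → deriv (deriv v) r + ((n : ℝ) - 1) / r * deriv v r + f (v r) = 0) ∧
    deriv v 0 = 0 ∧ Tendsto v atTop (nhds 0)

/-- Solution of the Dirichlet problem on the ball of radius `R`. -/
def DirichletSol (n : ℕ) (f : ℝ → ℝ) (R : ℝ) (v : ℝ → ℝ) : Prop :=
  ContinuousOn v (Icc 0 R) ∧
    (∀ r ∈ Ioo (0:ℝ) R, DifferentiableAt ℝ v r ∧ DifferentiableAt ℝ (deriv v) r) ∧
    (∀ r ∈ Ioo (0:ℝ) R, deriv (deriv v) r + ((n : ℝ) - 1) / r * deriv v r + f (v r) = 0) ∧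
    deriv v 0 = 0 ∧ v R = 0

end
end Paper

open Topology

namespace Paper

/-! ### Continuity arguments on a compact interval -/

theorem antitoneOn_Icc_of_hasDerivAt {g g' : ℝ → ℝ} {a c : ℝ} (hg : ContinuousOn g (Icc a c))
    (hd : ∀ s ∈ Ioo a c, HasDerivAt g (g' s) s) (hn : ∀ s ∈ Ioo a c, g' s ≤ 0) :
    AntitoneOn g (Icc a c) := by
  refine antitoneOn_of_deriv_nonpos (convex_Icc a c) hg ?_ ?_
  · rw [interior_Icc]
    exact fun s hs => (hd s hs).differentiableAt.differentiableWithinAt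
  · rw [interior_Icc]
    intro s hs
    rw [(hd s hs).deriv]
    exact hn s hs

theorem strictAntiOn_Icc_of_hasDerivAt {g g' : ℝ → ℝ} {a c : ℝ} (hg : ContinuousOn g (Icc a c))
    (hd : ∀ s ∈ Ioo a c, HasDerivAt g (g' s) s) (hn : ∀ s ∈ Ioo a c, g' s < 0) :
    StrictAntiOn g (Icc a c) := by
  refine strictAntiOn_of_deriv_neg (convex_Icc a c) hg ?_
  rw [interior_Icc]
  intro s hs
  rw [(hd s hs).deriv]
  exact hn s hs

theorem monotoneOn_Icc_of_hasDerivAt {g g' : ℝ → ℝ} {a c : ℝ} (hg : ContinuousOn g (Icc a c))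
    (hd : ∀ s ∈ Ioo a c, HasDerivAt g (g' s) s) (hn : ∀ s ∈ Ioo a c, 0 ≤ g' s) :
    MonotoneOn g (Icc a c) := by
  refine monotoneOn_of_deriv_nonneg (convex_Icc a c) hg ?_ ?_
  · rw [interior_Icc]
    exact fun s hs => (hd s hs).differentiableAt.differentiableWithinAt
  · rw [interior_Icc]
    intro s hs
    rw [(hd s hs).deriv]
    exact hn s hs

/-- If a continuous function takes a nonpositive value on `[a, c]`, there is a last such point. -/
theorem exists_last_nonpos {g : ℝ → ℝ} {a c s₁ : ℝ} (hg : ContinuousOn g (Icc a c))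
    (hs₁ : s₁ ∈ Icc a c) (h : g s₁ ≤ 0) :
    ∃ s ∈ Icc a c, s₁ ≤ s ∧ g s ≤ 0 ∧ ∀ t ∈ Ioc s c, 0 < g t := by
  have hclosed : IsClosed (Icc a c ∩ g ⁻¹' Iic 0) :=
    hg.preimage_isClosed_of_isClosed isClosed_Icc isClosed_Iic
  have hcpt : IsCompact (Icc a c ∩ g ⁻¹' Iic 0) :=
    isCompact_Icc.of_isClosed_subset hclosed inter_subset_left
  obtain ⟨m, hm, hmax⟩ := hcpt.exists_isGreatest ⟨s₁, hs₁, h⟩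
  refine ⟨m, hm.1, hmax ⟨hs₁, h⟩, hm.2, fun t ht => ?_⟩
  by_contra hneg
  have := hmax (show t ∈ Icc a c ∩ g ⁻¹' Iic 0 from
    ⟨⟨hm.1.1.trans ht.1.le, ht.2⟩, not_lt.mp hneg⟩)
  exact absurd ht.1 (not_lt.mpr this)

/-- Continuous induction downwards from the right end point. -/
theorem pos_of_downward {g : ℝ → ℝ} {a c : ℝ} (hg : ContinuousOn g (Icc a c)) (hc : 0 < g c)
    (step : ∀ s ∈ Ico a c, (∀ t ∈ Ioc s c, 0 < g t) → 0 < g s) : ∀ s ∈ Icc a c, 0 < g s := by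
  intro s hs
  by_contra hneg
  obtain ⟨m, hm, -, hm0, hpos⟩ := exists_last_nonpos hg hs (not_lt.mp hneg)
  have hmc : m < c := by
    rcases hm.2.lt_or_eq with h | h
    · exact h
    · subst h; exact absurd hc (not_lt.mpr hm0)
  exact absurd (step m ⟨hm.1, hmc⟩ hpos) (not_lt.mpr hm0)

/-- A continuous function that is nonpositive at `c` but not on all of `[a, c]` has a zero after
which it stays nonpositive. -/
theorem exists_last_zero {g : ℝ → ℝ} {a c : ℝ} (hg : ContinuousOn g (Icc a c)) (hc : g c ≤ 0)
    (h : ¬ ∀ s ∈ Icc a c, g s ≤ 0) :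
    ∃ s ∈ Icc a c, g s = 0 ∧ ∀ t ∈ Icc s c, g t ≤ 0 := by
  push Not at h
  obtain ⟨s₁, hs₁, hpos⟩ := h
  obtain ⟨m, hm, -, hm0, hlt⟩ := exists_last_nonpos (g := fun s => - g s) hg.neg hs₁
    (by simpa using hpos.le)
  have key : g m = 0 := by
    refine le_antisymm ?_ (by simpa using hm0)
    rcases hm.2.lt_or_eq with hmc | hmc
    · have hcont : ContinuousWithinAt g (Icc m c) m := (hg m hm).mono (Icc_subset_Icc_left hm.1)
      have hcl : m ∈ closure (Ioc m c) := by
        rw [closure_Ioc hmc.ne]; exact left_mem_Icc.mpr hmc.le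
      exact ((hcont.mono Ioc_subset_Icc_self).mem_closure hcl
        (fun t ht => (by simpa using (hlt t ht).le : g t ∈ Iic 0))
        |> fun h => by simpa using h)
    · rwa [hmc]
  refine ⟨m, hm, key, fun t ht => ?_⟩
  rcases ht.1.lt_or_eq with h' | h'
  · have := hlt t ⟨h', ht.2⟩
    linarith
  · rw [← h', key]

end Paper

namespace Paper

/-! ### Decreasing branches parametrized by the value of the solution -/

/-- `r` and `p` describe a decreasing branch of a solution `v` of (E) in dimension `k + 2`, as
functions of the value `s = v`, over the value interval `[a, c]`: `r` is the inverse of `v`, and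
`p s = -v' (r s)`. -/
structure Branch (k : ℕ) (f r p : ℝ → ℝ) (a c : ℝ) : Prop where
  cont_r : ContinuousOn r (Icc a c)
  cont_p : ContinuousOn p (Icc a c)
  r_pos : ∀ s ∈ Ioo a c, 0 < r s
  p_pos : ∀ s ∈ Ioo a c, 0 < p s
  r_nonneg : ∀ s ∈ Icc a c, 0 ≤ r s
  p_nonneg : ∀ s ∈ Icc a c, 0 ≤ p s
  deriv_r : ∀ s ∈ Ioo a c, HasDerivAt r (-(p s)⁻¹) s
  deriv_p : ∀ s ∈ Ioo a c, HasDerivAt p ((k + 1) / r s - f s / p s) s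

namespace Branch

variable {k : ℕ} {f r p r₁ p₁ r₂ p₂ : ℝ → ℝ} {a c : ℝ}

theorem mono (B : Branch k f r p a c) {a' c' : ℝ} (ha : a ≤ a') (hc : c' ≤ c) :
    Branch k f r p a' c' where
  cont_r := B.cont_r.mono (Icc_subset_Icc ha hc)
  cont_p := B.cont_p.mono (Icc_subset_Icc ha hc)
  r_pos s hs := B.r_pos s (Ioo_subset_Ioo ha hc hs)
  p_pos s hs := B.p_pos s (Ioo_subset_Ioo ha hc hs)
  r_nonneg s hs := B.r_nonneg s (Icc_subset_Icc ha hc hs)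
  p_nonneg s hs := B.p_nonneg s (Icc_subset_Icc ha hc hs)
  deriv_r s hs := B.deriv_r s (Ioo_subset_Ioo ha hc hs)
  deriv_p s hs := B.deriv_p s (Ioo_subset_Ioo ha hc hs)

theorem hasDerivAt_sq (B : Branch k f r p a c) {s : ℝ} (hs : s ∈ Ioo a c) :
    HasDerivAt (fun s => p s ^ 2) (2 * ((k + 1) * p s / r s - f s)) s := by
  have hr := (B.r_pos s hs).ne'
  have hp := (B.p_pos s hs).ne'
  refine ((B.deriv_p s hs).pow 2).congr_deriv ?_
  push_cast
  field_simp

theorem hasDerivAt_rpow (B : Branch k f r p a c) (m : ℕ) {s : ℝ} (hs : s ∈ Ioo a c) :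
    HasDerivAt (fun s => r s ^ (m + 1)) (-((m + 1) * r s ^ m / p s)) s := by
  refine ((B.deriv_r s hs).pow (m + 1)).congr_deriv ?_
  push_cast
  ring

/-- The momentum `y = r ^ (n - 1) p`. -/
theorem hasDerivAt_momentum (B : Branch k f r p a c) {s : ℝ} (hs : s ∈ Ioo a c) :
    HasDerivAt (fun s => r s ^ (k + 1) * p s) (-(r s ^ (k + 1) * f s / p s)) s := by
  have hr := (B.r_pos s hs).ne'
  have hp := (B.p_pos s hs).ne'
  refine ((B.hasDerivAt_rpow k hs).mul (B.deriv_p s hs)).congr_deriv ?_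
  field_simp
  ring

theorem hasDerivAt_momentum_sq (B : Branch k f r p a c) {s : ℝ} (hs : s ∈ Ioo a c) :
    HasDerivAt (fun s => (r s ^ (k + 1) * p s) ^ 2) (-(2 * f s * (r s ^ (k + 1)) ^ 2)) s := by
  have hp := (B.p_pos s hs).ne'
  refine ((B.hasDerivAt_momentum hs).pow 2).congr_deriv ?_
  push_cast
  field_simp

theorem hasDerivAt_energy (B : Branch k f r p a c) {F : ℝ → ℝ} {s : ℝ} (hF : HasDerivAt F (f s) s)
    (hs : s ∈ Ioo a c) :
    HasDerivAt (fun s => p s ^ 2 + 2 * F s) (2 * (k + 1) * p s / r s) s := by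
  refine ((B.hasDerivAt_sq hs).add (hF.const_mul 2)).congr_deriv ?_
  ring

/-- `r ^ (2 (n - 1)) ((u')² + 2 F)`, the square of `W̃`. -/
theorem hasDerivAt_wtil (B : Branch k f r p a c) {F : ℝ → ℝ} {s : ℝ} (hF : HasDerivAt F (f s) s)
    (hs : s ∈ Ioo a c) :
    HasDerivAt (fun s => r s ^ (2 * k + 1 + 1) * (p s ^ 2 + 2 * F s))
      (-(4 * (k + 1) * r s ^ (2 * k + 1) * F s / p s)) s := by
  have hr := (B.r_pos s hs).ne'
  have hp := (B.p_pos s hs).ne'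
  refine ((B.hasDerivAt_rpow (2 * k + 1) hs).mul (B.hasDerivAt_energy hF hs)).congr_deriv ?_
  push_cast
  field_simp
  ring

/-- While `r₁ ≤ r₂` and `p₁ ≤ p₂`, the quantity `r₁ ^ (n - 1) (p₂² - p₁²)` grows downwards, at a
rate controlled by `r₂ - r₁`. -/
theorem hasDerivAt_gap (B₁ : Branch k f r₁ p₁ a c) (B₂ : Branch k f r₂ p₂ a c) {s : ℝ}
    (hs : s ∈ Ioo a c) (hr : r₁ s ≤ r₂ s) (hp : p₁ s ≤ p₂ s) :
    ∃ d, HasDerivAt (fun s => r₁ s ^ (k + 1) * (p₂ s ^ 2 - p₁ s ^ 2)) d s ∧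
      d ≤ -(2 * (k + 1) * r₁ s ^ k * p₁ s * (r₂ s - r₁ s) / r₂ s) := by
  have r1 := B₁.r_pos s hs
  have p1 := B₁.p_pos s hs
  have r2 := B₂.r_pos s hs
  have p2 := B₂.p_pos s hs
  refine ⟨_, (B₁.hasDerivAt_rpow k hs).mul ((B₂.hasDerivAt_sq hs).sub (B₁.hasDerivAt_sq hs)), ?_⟩
  have key : -((k + 1) * r₁ s ^ k / p₁ s) * (p₂ s ^ 2 - p₁ s ^ 2) +
      r₁ s ^ (k + 1) * (2 * ((k + 1) * p₂ s / r₂ s - f s) - 2 * ((k + 1) * p₁ s / r₁ s - f s)) =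
      -(2 * (k + 1) * r₁ s ^ k * p₁ s * (r₂ s - r₁ s) / r₂ s) -
      (k + 1) * r₁ s ^ k * ((p₂ s - p₁ s) ^ 2 / p₁ s +
        2 * (p₂ s - p₁ s) * (r₂ s - r₁ s) / r₂ s) := by
    field_simp
    ring
  rw [key]
  have : 0 ≤ (k + 1) * r₁ s ^ k * ((p₂ s - p₁ s) ^ 2 / p₁ s +
        2 * (p₂ s - p₁ s) * (r₂ s - r₁ s) / r₂ s) := by
    have h1 : 0 ≤ p₂ s - p₁ s := by linarith
    have h2 : 0 ≤ r₂ s - r₁ s := by linarith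
    positivity
  linarith

theorem cont_gap (B₁ : Branch k f r₁ p₁ a c) (B₂ : Branch k f r₂ p₂ a c) :
    ContinuousOn (fun s => r₁ s ^ (k + 1) * (p₂ s ^ 2 - p₁ s ^ 2)) (Icc a c) :=
  (B₁.cont_r.pow _).mul ((B₂.cont_p.pow _).sub (B₁.cont_p.pow _))

theorem antitoneOn_gap (B₁ : Branch k f r₁ p₁ a c) (B₂ : Branch k f r₂ p₂ a c)
    (hr : ∀ s ∈ Ioo a c, r₁ s ≤ r₂ s) (hp : ∀ s ∈ Ioo a c, p₁ s ≤ p₂ s) :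
    AntitoneOn (fun s => r₁ s ^ (k + 1) * (p₂ s ^ 2 - p₁ s ^ 2)) (Icc a c) := by
  choose! d hd hle using fun s hs => hasDerivAt_gap B₁ B₂ hs (hr s hs) (hp s hs)
  refine antitoneOn_Icc_of_hasDerivAt (cont_gap B₁ B₂) hd fun s hs => (hle s hs).trans ?_
  have r1 := B₁.r_pos s hs
  have p1 := B₁.p_pos s hs
  have r2 := B₂.r_pos s hs
  have h2 : 0 ≤ r₂ s - r₁ s := by linarith [hr s hs]
  have : 0 ≤ 2 * (k + 1) * r₁ s ^ k * p₁ s * (r₂ s - r₁ s) / r₂ s := by positivity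
  linarith

/-- Before the first intersection, the slopes stay ordered. -/
theorem slope_lt_of_radius_le (B₁ : Branch k f r₁ p₁ a c) (B₂ : Branch k f r₂ p₂ a c)
    (hc : p₁ c < p₂ c) (hr : ∀ s ∈ Icc a c, r₁ s ≤ r₂ s) : ∀ s ∈ Icc a c, p₁ s < p₂ s := by
  have := pos_of_downward (g := fun s => p₂ s - p₁ s) (a := a) (c := c)
    (B₂.cont_p.sub B₁.cont_p) (by simpa using hc) ?_
  · exact fun s hs => by simpa using this s hs
  intro s hs hpos
  have hmid : (s + c) / 2 ∈ Ioo s c := ⟨by linarith [hs.2], by linarith [hs.2]⟩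
  have anti := antitoneOn_gap (B₁.mono hs.1 le_rfl) (B₂.mono hs.1 le_rfl)
    (fun t ht => hr t ⟨hs.1.trans ht.1.le, ht.2.le⟩)
    (fun t ht => by linarith [hpos t ⟨ht.1, ht.2.le⟩])
  have h1 := anti (left_mem_Icc.mpr hs.2.le) (Ioo_subset_Icc_self hmid) hmid.1.le
  have h2 : 0 < r₁ ((s + c) / 2) ^ (k + 1) * (p₂ ((s + c) / 2) ^ 2 - p₁ ((s + c) / 2) ^ 2) := by
    have hI : (s + c) / 2 ∈ Ioo a c := ⟨by linarith [hs.1, hmid.1], hmid.2⟩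
    have r1 := B₁.r_pos _ hI
    have p1 := B₁.p_pos _ hI
    have h3 := hpos _ ⟨hmid.1, hmid.2.le⟩
    have : 0 < p₂ ((s + c) / 2) ^ 2 - p₁ ((s + c) / 2) ^ 2 := by nlinarith
    positivity
  have h3 : 0 < r₁ s ^ (k + 1) * (p₂ s ^ 2 - p₁ s ^ 2) := h2.trans_le h1
  have hs' : s ∈ Icc a c := ⟨hs.1, hs.2.le⟩
  have h4 : 0 ≤ r₁ s ^ (k + 1) := pow_nonneg (B₁.r_nonneg s hs') _
  have h5 : 0 < p₂ s ^ 2 - p₁ s ^ 2 := pos_of_mul_pos_right h3 h4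
  have h6 := B₂.p_nonneg s hs'
  nlinarith [B₁.p_nonneg s hs']

/-- If `p₁ ≤ p₂`, then `r₁ - r₂` grows downwards. -/
theorem antitoneOn_radius_sub (B₁ : Branch k f r₁ p₁ a c) (B₂ : Branch k f r₂ p₂ a c)
    (hp : ∀ s ∈ Ioo a c, p₁ s ≤ p₂ s) : AntitoneOn (fun s => r₁ s - r₂ s) (Icc a c) := by
  refine antitoneOn_Icc_of_hasDerivAt (B₁.cont_r.sub B₂.cont_r)
    (fun s hs => (B₁.deriv_r s hs).sub (B₂.deriv_r s hs)) fun s hs => ?_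
  have := inv_anti₀ (B₁.p_pos s hs) (hp s hs)
  linarith

theorem strictAntiOn_radius_sub (B₁ : Branch k f r₁ p₁ a c) (B₂ : Branch k f r₂ p₂ a c)
    (hp : ∀ s ∈ Ioo a c, p₁ s < p₂ s) : StrictAntiOn (fun s => r₁ s - r₂ s) (Icc a c) := by
  refine strictAntiOn_Icc_of_hasDerivAt (B₁.cont_r.sub B₂.cont_r)
    (fun s hs => (B₁.deriv_r s hs).sub (B₂.deriv_r s hs)) fun s hs => ?_
  have := inv_strictAnti₀ (B₁.p_pos s hs) (hp s hs)
  linarith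

/-- After an intersection, where `F ≤ 0`, the functional `W̃` keeps its order. -/
theorem wtil_lt_of_nonpos (B₁ : Branch k f r₁ p₁ a c) (B₂ : Branch k f r₂ p₂ a c) {F : ℝ → ℝ}
    (hF : ∀ s, HasDerivAt F (f s) s) (hF0 : ∀ s ∈ Icc a c, F s ≤ 0)
    (hI : ∀ s ∈ Icc a c, 0 ≤ p₁ s ^ 2 + 2 * F s) (hac : a ≤ c)
    (hr : r₂ c ≤ r₁ c) (hp : p₁ c < p₂ c)
    (hV : r₁ c ^ (2 * k + 1 + 1) * (p₁ c ^ 2 + 2 * F c) <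
      r₂ c ^ (2 * k + 1 + 1) * (p₂ c ^ 2 + 2 * F c)) :
    r₂ a ≤ r₁ a ∧ r₁ a ^ (2 * k + 1 + 1) * (p₁ a ^ 2 + 2 * F a) <
      r₂ a ^ (2 * k + 1 + 1) * (p₂ a ^ 2 + 2 * F a) := by
  have hFc : ContinuousOn F (Icc a c) := fun s _ => (hF s).continuousAt.continuousWithinAt
  have main : ∀ s ∈ Icc a c, (∀ t ∈ Ioo s c, p₁ t < p₂ t) →
      r₂ s ≤ r₁ s ∧ r₁ s ^ (2 * k + 1 + 1) * (p₁ s ^ 2 + 2 * F s) <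
      r₂ s ^ (2 * k + 1 + 1) * (p₂ s ^ 2 + 2 * F s) := by
    intro s hs hlt
    have B₁' := B₁.mono hs.1 le_rfl
    have B₂' := B₂.mono hs.1 le_rfl
    have anti := antitoneOn_radius_sub B₁' B₂' fun t ht => (hlt t ht).le
    have hr' : ∀ t ∈ Icc s c, r₂ t ≤ r₁ t := fun t ht => by
      have := anti ht (right_mem_Icc.mpr hs.2) ht.2
      simp only at this
      linarith
    refine ⟨hr' s (left_mem_Icc.mpr hs.2), ?_⟩
    have anti2 := antitoneOn_Icc_of_hasDerivAt
      (g := fun t => r₂ t ^ (2 * k + 1 + 1) * (p₂ t ^ 2 + 2 * F t) -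
        r₁ t ^ (2 * k + 1 + 1) * (p₁ t ^ 2 + 2 * F t)) (a := s) (c := c)
      (((B₂'.cont_r.pow _).mul ((B₂'.cont_p.pow _).add
        (continuousOn_const.mul (hFc.mono (Icc_subset_Icc_left hs.1))))).sub
        ((B₁'.cont_r.pow _).mul ((B₁'.cont_p.pow _).add
        (continuousOn_const.mul (hFc.mono (Icc_subset_Icc_left hs.1))))))
      (fun t ht => (B₂'.hasDerivAt_wtil (hF t) ht).sub (B₁'.hasDerivAt_wtil (hF t) ht))
      (fun t ht => by
        have r1 := B₁'.r_pos t ht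
        have r2 := B₂'.r_pos t ht
        have p1 := B₁'.p_pos t ht
        have h1 : r₂ t ^ (2 * k + 1) / p₂ t ≤ r₁ t ^ (2 * k + 1) / p₁ t := by
          have := hr' t (Ioo_subset_Icc_self ht)
          have := (hlt t ht).le
          gcongr
        have h2 : 0 ≤ 4 * ((k : ℝ) + 1) * (-F t) := by
          have := hF0 t ⟨hs.1.trans ht.1.le, ht.2.le⟩
          have : 0 ≤ -F t := by linarith
          positivity
        have h3 := mul_le_mul_of_nonneg_left h1 h2
        have e1 : -(4 * (k + 1) * r₂ t ^ (2 * k + 1) * F t / p₂ t) =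
          4 * ((k : ℝ) + 1) * (-F t) * (r₂ t ^ (2 * k + 1) / p₂ t) := by ring
        have e2 : -(4 * (k + 1) * r₁ t ^ (2 * k + 1) * F t / p₁ t) =
          4 * ((k : ℝ) + 1) * (-F t) * (r₁ t ^ (2 * k + 1) / p₁ t) := by ring
        rw [e1, e2]
        linarith)
    have := anti2 (left_mem_Icc.mpr hs.2) (right_mem_Icc.mpr hs.2) hs.2
    simp only at this
    linarith
  have hlt := pos_of_downward (g := fun s => p₂ s - p₁ s) (a := a) (c := c)
    (B₂.cont_p.sub B₁.cont_p) (by simpa using hp) fun s hs hpos => by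
      have hs' : s ∈ Icc a c := ⟨hs.1, hs.2.le⟩
      obtain ⟨h1, h2⟩ := main s hs' fun t ht => by linarith [hpos t ⟨ht.1, ht.2.le⟩]
      have h3 : r₂ s ^ (2 * k + 1 + 1) ≤ r₁ s ^ (2 * k + 1 + 1) :=
        pow_le_pow_left₀ (B₂.r_nonneg s hs') h1 _
      have h4 := mul_le_mul_of_nonneg_right h3 (hI s hs')
      have h5 : 0 ≤ r₂ s ^ (2 * k + 1 + 1) := pow_nonneg (B₂.r_nonneg s hs') _
      have h6 : p₁ s ^ 2 + 2 * F s < p₂ s ^ 2 + 2 * F s :=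
        lt_of_mul_lt_mul_left (h4.trans_lt h2) h5
      nlinarith [B₂.p_nonneg s hs', B₁.p_nonneg s hs']
  exact main a (left_mem_Icc.mpr hac) fun t ht => by linarith [hlt t (Ioo_subset_Icc_self ht)]

/-- After an intersection, where `f ≤ 0`, the momentum keeps its order. -/
theorem momentum_lt_of_nonpos (B₁ : Branch k f r₁ p₁ a c) (B₂ : Branch k f r₂ p₂ a c)
    (hf0 : ∀ s ∈ Icc a c, f s ≤ 0) (hr : r₂ c ≤ r₁ c)
    (hy : r₁ c ^ (k + 1) * p₁ c < r₂ c ^ (k + 1) * p₂ c) :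
    ∀ s ∈ Icc a c, r₂ s ≤ r₁ s ∧ r₁ s ^ (k + 1) * p₁ s < r₂ s ^ (k + 1) * p₂ s := by
  have slope : ∀ s ∈ Icc a c, r₂ s ≤ r₁ s → r₁ s ^ (k + 1) * p₁ s < r₂ s ^ (k + 1) * p₂ s →
      p₁ s < p₂ s := by
    intro s hs h1 h2
    have h3 : r₂ s ^ (k + 1) ≤ r₁ s ^ (k + 1) := pow_le_pow_left₀ (B₂.r_nonneg s hs) h1 _
    exact lt_of_mul_lt_mul_left ((mul_le_mul_of_nonneg_right h3 (B₁.p_nonneg s hs)).trans_lt h2)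
      (pow_nonneg (B₂.r_nonneg s hs) _)
  have main : ∀ s ∈ Icc a c, (∀ t ∈ Ioo s c, p₁ t < p₂ t) →
      r₂ s ≤ r₁ s ∧ r₁ s ^ (k + 1) * p₁ s < r₂ s ^ (k + 1) * p₂ s := by
    intro s hs hlt
    have B₁' := B₁.mono hs.1 le_rfl
    have B₂' := B₂.mono hs.1 le_rfl
    have anti := antitoneOn_radius_sub B₁' B₂' fun t ht => (hlt t ht).le
    have hr' : ∀ t ∈ Icc s c, r₂ t ≤ r₁ t := fun t ht => by
      have := anti ht (right_mem_Icc.mpr hs.2) ht.2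
      simp only at this
      linarith
    refine ⟨hr' s (left_mem_Icc.mpr hs.2), ?_⟩
    have anti2 := antitoneOn_Icc_of_hasDerivAt
      (g := fun t => (r₂ t ^ (k + 1) * p₂ t) ^ 2 - (r₁ t ^ (k + 1) * p₁ t) ^ 2) (a := s) (c := c)
      ((((B₂'.cont_r.pow _).mul B₂'.cont_p).pow 2).sub
        (((B₁'.cont_r.pow _).mul B₁'.cont_p).pow 2))
      (fun t ht => (B₂'.hasDerivAt_momentum_sq ht).sub (B₁'.hasDerivAt_momentum_sq ht))
      (fun t ht => by
        have r2 := B₂'.r_pos t ht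
        have h1 : (r₂ t ^ (k + 1)) ^ 2 ≤ (r₁ t ^ (k + 1)) ^ 2 := by
          have := hr' t (Ioo_subset_Icc_self ht)
          gcongr
        have h2 := hf0 t ⟨hs.1.trans ht.1.le, ht.2.le⟩
        nlinarith)
    have h1 := anti2 (left_mem_Icc.mpr hs.2) (right_mem_Icc.mpr hs.2) hs.2
    simp only at h1
    have hcm : c ∈ Icc a c := ⟨hs.1.trans hs.2, le_rfl⟩
    have y1 : 0 ≤ r₁ c ^ (k + 1) * p₁ c :=
      mul_nonneg (pow_nonneg (B₁.r_nonneg c hcm) _) (B₁.p_nonneg c hcm)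
    have y2 : 0 ≤ r₂ s ^ (k + 1) * p₂ s :=
      mul_nonneg (pow_nonneg (B₂.r_nonneg s hs) _) (B₂.p_nonneg s hs)
    refine lt_of_pow_lt_pow_left₀ 2 y2 ?_
    have := pow_lt_pow_left₀ hy y1 two_ne_zero
    linarith
  intro s₀ hs₀
  have hac : a ≤ c := hs₀.1.trans hs₀.2
  have hcm : c ∈ Icc a c := right_mem_Icc.mpr hac
  have hlt := pos_of_downward (g := fun s => p₂ s - p₁ s) (a := a) (c := c)
    (B₂.cont_p.sub B₁.cont_p) (by simpa using slope c hcm hr hy) fun s hs hpos => by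
      have hs' : s ∈ Icc a c := ⟨hs.1, hs.2.le⟩
      obtain ⟨h1, h2⟩ := main s hs' fun t ht => by linarith [hpos t ⟨ht.1, ht.2.le⟩]
      linarith [slope s hs' h1 h2]
  exact main s₀ hs₀ fun t ht => by linarith [hlt t ⟨hs₀.1.trans ht.1.le, ht.2.le⟩]

end Branch

end Paper

namespace Paper

theorem nonneg_of_pos_Ioc {g : ℝ → ℝ} {s c : ℝ} (hsc : s < c) (hg : ContinuousOn g (Icc s c))
    (hpos : ∀ t ∈ Ioc s c, 0 < g t) : 0 ≤ g s := by
  have hcl : s ∈ closure (Ioc s c) := by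
    rw [closure_Ioc hsc.ne]; exact left_mem_Icc.mpr hsc.le
  have hcont : ContinuousWithinAt g (Ioc s c) s :=
    (hg s (left_mem_Icc.mpr hsc.le)).mono Ioc_subset_Icc_self
  have := hcont.mem_closure hcl (t := Ici 0) (fun t ht => (hpos t ht).le)
  exact isClosed_Ici.closure_subset this

/-- The Pohozaev functional `P = 2 n (F/f) r ^ (n - 1) p - r ^ n (p² + 2 F)` for `n = k + 2`, with
`G` in the role of `F / f`. -/
def poh (k : ℕ) (F G r p : ℝ → ℝ) (s : ℝ) : ℝ :=
  2 * (k + 2) * G s * (r s ^ (k + 1) * p s) - r s ^ (k + 2) * (p s ^ 2 + 2 * F s)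

/-- `G` plays the role of `F / f` on `[a, c]`, with derivative at least `(n - 2) / (2 n)`. -/
structure PohWeight (k : ℕ) (f F G : ℝ → ℝ) (a c : ℝ) : Prop where
  cont : ContinuousOn G (Icc a c)
  mul_eq : ∀ s ∈ Icc a c, G s * f s = F s
  diff : ∀ s ∈ Ioo a c, DifferentiableAt ℝ G s
  le_deriv : ∀ s ∈ Ioo a c, (k : ℝ) ≤ 2 * (k + 2) * deriv G s

theorem PohWeight.mono {k : ℕ} {f F G : ℝ → ℝ} {a c a' c' : ℝ} (H : PohWeight k f F G a c)
    (ha : a ≤ a') (hc : c' ≤ c) : PohWeight k f F G a' c' where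
  cont := H.cont.mono (Icc_subset_Icc ha hc)
  mul_eq s hs := H.mul_eq s (Icc_subset_Icc ha hc hs)
  diff s hs := H.diff s (Ioo_subset_Ioo ha hc hs)
  le_deriv s hs := H.le_deriv s (Ioo_subset_Ioo ha hc hs)

namespace Branch

variable {k : ℕ} {f F G r p r₁ p₁ r₂ p₂ : ℝ → ℝ} {a c β : ℝ}

theorem momentum_nonneg (B : Branch k f r p a c) {s : ℝ} (hs : s ∈ Icc a c) :
    0 ≤ r s ^ (k + 1) * p s :=
  mul_nonneg (pow_nonneg (B.r_nonneg s hs) _) (B.p_nonneg s hs)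

theorem cont_momentum (B : Branch k f r p a c) :
    ContinuousOn (fun s => r s ^ (k + 1) * p s) (Icc a c) :=
  (B.cont_r.pow _).mul B.cont_p

theorem momentum_le (B₁ : Branch k f r₁ p₁ a c) (B₂ : Branch k f r₂ p₂ a c) {s : ℝ}
    (hs : s ∈ Icc a c) (hr : r₁ s ≤ r₂ s) (hp : p₁ s ≤ p₂ s) :
    r₁ s ^ (k + 1) * p₁ s ≤ r₂ s ^ (k + 1) * p₂ s :=
  mul_le_mul (pow_le_pow_left₀ (B₁.r_nonneg s hs) hr _) hp (B₁.p_nonneg s hs)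
    (pow_nonneg (B₂.r_nonneg s hs) _)

theorem cont_poh (B : Branch k f r p a c) (hF : ∀ s, HasDerivAt F (f s) s)
    (H : PohWeight k f F G a c) : ContinuousOn (poh k F G r p) (Icc a c) := by
  have hFc : ContinuousOn F (Icc a c) := fun s _ => (hF s).continuousAt.continuousWithinAt
  exact ((continuousOn_const.mul H.cont).mul B.cont_momentum).sub
    ((B.cont_r.pow _).mul ((B.cont_p.pow _).add (continuousOn_const.mul hFc)))

theorem hasDerivAt_poh (B : Branch k f r p a c) (hF : ∀ s, HasDerivAt F (f s) s)
    (H : PohWeight k f F G a c) {s : ℝ} (hs : s ∈ Ioo a c) :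
    HasDerivAt (poh k F G r p)
      ((2 * (k + 2) * deriv G s - k) * (r s ^ (k + 1) * p s)) s := by
  have hr := (B.r_pos s hs).ne'
  have hp := (B.p_pos s hs).ne'
  have hG := H.mul_eq s (Ioo_subset_Icc_self hs)
  refine ((((H.diff s hs).hasDerivAt.const_mul (2 * ((k : ℝ) + 2))).mul
    (B.hasDerivAt_momentum hs)).sub
    ((B.hasDerivAt_rpow (k + 1) hs).mul (B.hasDerivAt_energy (hF s) hs))).congr_deriv ?_
  rw [← hG]
  push_cast
  field_simp
  ring

theorem monotoneOn_poh (B : Branch k f r p a c) (hF : ∀ s, HasDerivAt F (f s) s)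
    (H : PohWeight k f F G a c) : MonotoneOn (poh k F G r p) (Icc a c) :=
  monotoneOn_Icc_of_hasDerivAt (B.cont_poh hF H) (fun _ hs => B.hasDerivAt_poh hF H hs)
    fun s hs => mul_nonneg (by linarith [H.le_deriv s hs])
      (B.momentum_nonneg (Ioo_subset_Icc_self hs))

theorem antitoneOn_poh_sub (B₁ : Branch k f r₁ p₁ a c) (B₂ : Branch k f r₂ p₂ a c)
    (hF : ∀ s, HasDerivAt F (f s) s) (H : PohWeight k f F G a c)
    (hy : ∀ s ∈ Ioo a c, r₁ s ^ (k + 1) * p₁ s ≤ r₂ s ^ (k + 1) * p₂ s) :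
    AntitoneOn (fun s => poh k F G r₁ p₁ s - poh k F G r₂ p₂ s) (Icc a c) :=
  antitoneOn_Icc_of_hasDerivAt ((B₁.cont_poh hF H).sub (B₂.cont_poh hF H))
    (fun _ hs => (B₁.hasDerivAt_poh hF H hs).sub (B₂.hasDerivAt_poh hF H hs))
    fun s hs => by nlinarith [H.le_deriv s hs, hy s hs]

/-- Comparison of two first branches: given the order of the radii on `[β, c]`, the slopes and the
Pohozaev functionals are ordered at the lowest common level. -/
theorem slope_lt_and_poh_lt (B₁ : Branch k f r₁ p₁ a c) (B₂ : Branch k f r₂ p₂ a c)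
    (hF : ∀ s, HasDerivAt F (f s) s) (H : PohWeight k f F G a (-β))
    (ha : a < -β) (hβ : 0 < β) (hc : β < c) (hpc : p₁ c < p₂ c)
    (hr : ∀ s ∈ Icc β c, r₁ s ≤ r₂ s) (hF0 : ∀ s ∈ Icc (-β) β, F s ≤ 0) (hFβ : F (-β) = 0)
    (hGβ : G (-β) = 0)
    (hI : ∀ s ∈ Icc (-β) β, 0 ≤ p₁ s ^ 2 + 2 * F s) (hf0 : ∀ s ∈ Icc a (-β), f s ≤ 0) :
    p₁ a < p₂ a ∧ poh k F G r₂ p₂ a < poh k F G r₁ p₁ a := by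
  have hmem : -β ∈ Ioo a c := ⟨ha, by linarith⟩
  have r1 := B₁.r_pos _ hmem
  have r2 := B₂.r_pos _ hmem
  have p1 := B₁.p_pos _ hmem
  suffices h : p₁ a < p₂ a ∧ (∀ s ∈ Icc a (-β), r₁ s ^ (k + 1) * p₁ s ≤ r₂ s ^ (k + 1) * p₂ s) ∧
      r₁ (-β) ^ (k + 2) * p₁ (-β) ^ 2 < r₂ (-β) ^ (k + 2) * p₂ (-β) ^ 2 by
    refine ⟨h.1, ?_⟩
    have anti := antitoneOn_poh_sub (B₁.mono le_rfl hmem.2.le) (B₂.mono le_rfl hmem.2.le) hF H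
      (fun s hs => h.2.1 s (Ioo_subset_Icc_self hs))
    have h1 := anti (left_mem_Icc.mpr ha.le) (right_mem_Icc.mpr ha.le) ha.le
    have h2 := h.2.2
    simp only [poh, hFβ, hGβ] at h1 ⊢
    linarith
  by_cases hall : ∀ s ∈ Icc a β, r₁ s - r₂ s ≤ 0
  · have hall' : ∀ s ∈ Icc a c, r₁ s ≤ r₂ s := fun s hs => by
      rcases le_total s β with h | h
      · linarith [hall s ⟨hs.1, h⟩]
      · exact hr s ⟨h, hs.2⟩
    have hp := slope_lt_of_radius_le B₁ B₂ hpc hall'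
    refine ⟨hp a ⟨le_rfl, by linarith⟩, fun s hs => ?_, ?_⟩
    · have hs' : s ∈ Icc a c := ⟨hs.1, hs.2.trans hmem.2.le⟩
      exact momentum_le B₁ B₂ hs' (hall' s hs') (hp s hs').le
    · have h1 := hall' _ (Ioo_subset_Icc_self hmem)
      have h2 := hp _ (Ioo_subset_Icc_self hmem)
      exact mul_lt_mul' (by gcongr) (by gcongr) (by positivity) (by positivity)
  obtain ⟨σ, hσ, hσ0, hσle⟩ := exists_last_zero (g := fun s => r₁ s - r₂ s)
    ((B₁.mono le_rfl hc.le).cont_r.sub (B₂.mono le_rfl hc.le).cont_r)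
    (by simpa using hr β ⟨le_rfl, hc.le⟩) hall
  have hrσ : r₂ σ = r₁ σ := by linarith
  have hle : ∀ s ∈ Icc σ c, r₁ s ≤ r₂ s := fun s hs => by
    rcases le_total s β with h | h
    · have := hσle s ⟨hs.1, h⟩
      linarith
    · exact hr s ⟨h, hs.2⟩
  have hσc : σ < c := hσ.2.trans_lt hc
  have hp := slope_lt_of_radius_le (B₁.mono hσ.1 le_rfl) (B₂.mono hσ.1 le_rfl) hpc hle
  have slope : r₂ a ≤ r₁ a → r₁ a ^ (k + 1) * p₁ a < r₂ a ^ (k + 1) * p₂ a → p₁ a < p₂ a := by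
    intro h1 h2
    have ham : a ∈ Icc a c := ⟨le_rfl, by linarith⟩
    have h3 : r₂ a ^ (k + 1) ≤ r₁ a ^ (k + 1) := pow_le_pow_left₀ (B₂.r_nonneg a ham) h1 _
    exact lt_of_mul_lt_mul_left ((mul_le_mul_of_nonneg_right h3 (B₁.p_nonneg a ham)).trans_lt h2)
      (pow_nonneg (B₂.r_nonneg a ham) _)
  rcases le_total (-β) σ with hcase | hcase
  · have hpσ := hp σ (left_mem_Icc.mpr hσc.le)
    have rσ : 0 < r₂ σ := B₂.r_pos σ ⟨ha.trans_le hcase, hσc⟩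
    obtain ⟨hr', hV⟩ := wtil_lt_of_nonpos (B₁.mono ha.le hσc.le) (B₂.mono ha.le hσc.le) hF
      (fun s hs => hF0 s ⟨hs.1, hs.2.trans hσ.2⟩) (fun s hs => hI s ⟨hs.1, hs.2.trans hσ.2⟩)
      hcase hrσ.le hpσ (by
        rw [hrσ] at rσ ⊢
        have h0 := B₁.p_nonneg σ ⟨hσ.1, hσc.le⟩
        gcongr)
    rw [hFβ] at hV
    have hy : r₁ (-β) ^ (k + 1) * p₁ (-β) < r₂ (-β) ^ (k + 1) * p₂ (-β) := by
      refine lt_of_pow_lt_pow_left₀ 2 (B₂.momentum_nonneg (Ioo_subset_Icc_self hmem)) ?_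
      calc _ = r₁ (-β) ^ (2 * k + 1 + 1) * (p₁ (-β) ^ 2 + 2 * 0) := by ring
        _ < _ := hV
        _ = _ := by ring
    have hmom := momentum_lt_of_nonpos (B₁.mono le_rfl hmem.2.le) (B₂.mono le_rfl hmem.2.le)
      hf0 hr' hy
    have haI := hmom a (left_mem_Icc.mpr ha.le)
    refine ⟨slope haI.1 haI.2, fun s hs => (hmom s hs).2.le, ?_⟩
    have h3 : r₂ (-β) ^ k ≤ r₁ (-β) ^ k := by gcongr
    have h4 : r₁ (-β) ^ k * (r₁ (-β) ^ (k + 2) * p₁ (-β) ^ 2) <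
        r₁ (-β) ^ k * (r₂ (-β) ^ (k + 2) * p₂ (-β) ^ 2) :=
      calc _ = r₁ (-β) ^ (2 * k + 1 + 1) * (p₁ (-β) ^ 2 + 2 * 0) := by ring
        _ < _ := hV
        _ = r₂ (-β) ^ k * (r₂ (-β) ^ (k + 2) * p₂ (-β) ^ 2) := by ring
        _ ≤ _ := by gcongr
    exact lt_of_mul_lt_mul_left h4 (by positivity)
  · have hdir : ∀ s ∈ Icc σ (-β), r₁ s ≤ r₂ s ∧ p₁ s < p₂ s := fun s hs =>
      have hs' : s ∈ Icc σ c := ⟨hs.1, hs.2.trans hmem.2.le⟩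
      ⟨hle s hs', hp s hs'⟩
    have hend : r₁ (-β) ^ (k + 2) * p₁ (-β) ^ 2 < r₂ (-β) ^ (k + 2) * p₂ (-β) ^ 2 := by
      obtain ⟨h1, h2⟩ := hdir _ (right_mem_Icc.mpr hcase)
      exact mul_lt_mul' (by gcongr) (by gcongr) (by positivity) (by positivity)
    have hdir' : ∀ s ∈ Icc σ (-β), r₁ s ^ (k + 1) * p₁ s ≤ r₂ s ^ (k + 1) * p₂ s := fun s hs =>
      momentum_le B₁ B₂ ⟨hσ.1.trans hs.1, hs.2.trans hmem.2.le⟩ (hdir s hs).1 (hdir s hs).2.le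
    rcases hσ.1.lt_or_eq with haσ | haσ
    · have rσ : 0 < r₁ σ := B₁.r_pos σ ⟨haσ, hσc⟩
      have hmom := momentum_lt_of_nonpos (B₁.mono le_rfl hσc.le) (B₂.mono le_rfl hσc.le)
        (fun s hs => hf0 s ⟨hs.1, hs.2.trans hcase⟩) hrσ.le (by
          rw [hrσ]
          exact mul_lt_mul_of_pos_left (hdir σ (left_mem_Icc.mpr hcase)).2 (by positivity))
      have haI := hmom a (left_mem_Icc.mpr haσ.le)
      refine ⟨slope haI.1 haI.2, fun s hs => ?_, hend⟩
      rcases le_total s σ with h | h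
      · exact (hmom s ⟨hs.1, h⟩).2.le
      · exact hdir' s ⟨h, hs.2⟩
    · rw [← haσ] at hdir hdir'
      exact ⟨(hdir a (left_mem_Icc.mpr ha.le)).2, hdir', hend⟩

/-- Where `p₁ < p₂` and `f > 0`, the quotient of the momenta is controlled by the Pohozaev
functionals. -/
theorem momentum_mul_poh_lt (B₁ : Branch k f r₁ p₁ a c) (B₂ : Branch k f r₂ p₂ a c)
    (hF : ∀ s, HasDerivAt F (f s) s) (H : PohWeight k f F G a c) (hac : a < c)
    (hf0 : ∀ s ∈ Icc a c, 0 ≤ f s) (hP₂ : ∀ s ∈ Icc a c, poh k F G r₂ p₂ s ≤ 0)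
    (hPc : poh k F G r₂ p₂ c < poh k F G r₁ p₁ c) (hpc : p₁ c = 0)
    (hp : ∀ s ∈ Ioo a c, p₁ s < p₂ s) (hypos : ∀ s ∈ Icc a c, 0 < r₂ s ^ (k + 1) * p₂ s)
    (hy : r₂ a ^ (k + 1) * p₂ a ≤ r₁ a ^ (k + 1) * p₁ a) :
    r₁ a ^ (k + 1) * p₁ a * poh k F G r₂ p₂ a < r₂ a ^ (k + 1) * p₂ a * poh k F G r₁ p₁ a := by
  have ham : a ∈ Icc a c := left_mem_Icc.mpr hac.le
  have hcm : c ∈ Icc a c := right_mem_Icc.mpr hac.le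
  have hya := hypos a ham
  have after : ∀ σ ∈ Icc a c,
      (∀ s ∈ Icc σ c, r₁ s ^ (k + 1) * p₁ s - r₂ s ^ (k + 1) * p₂ s ≤ 0) →
      poh k F G r₂ p₂ σ < poh k F G r₁ p₁ σ := by
    intro σ hσ hle
    have anti := antitoneOn_poh_sub (B₁.mono hσ.1 le_rfl) (B₂.mono hσ.1 le_rfl) hF
      (H.mono hσ.1 le_rfl) (fun s hs => by linarith [hle s (Ioo_subset_Icc_self hs)])
    have := anti (left_mem_Icc.mpr hσ.2) (right_mem_Icc.mpr hσ.2) hσ.2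
    simp only at this
    linarith
  by_cases hall : ∀ s ∈ Icc a c, r₁ s ^ (k + 1) * p₁ s - r₂ s ^ (k + 1) * p₂ s ≤ 0
  · have h1 := after a ham hall
    have h2 : r₁ a ^ (k + 1) * p₁ a = r₂ a ^ (k + 1) * p₂ a := by linarith [hall a ham]
    rw [h2]
    exact mul_lt_mul_of_pos_left h1 hya
  obtain ⟨σ, hσ, hσ0, hσle⟩ := exists_last_zero
    (g := fun s => r₁ s ^ (k + 1) * p₁ s - r₂ s ^ (k + 1) * p₂ s)
    (B₁.cont_momentum.sub B₂.cont_momentum)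
    (by have := B₂.momentum_nonneg hcm; simp [hpc]; simpa using this) hall
  have hPσ := after σ hσ hσle
  have hypos' : ∀ s ∈ Icc a σ, 0 < r₂ s ^ (k + 1) * p₂ s := fun s hs =>
    hypos s ⟨hs.1, hs.2.trans hσ.2⟩
  have hsub : Icc a σ ⊆ Icc a c := Icc_subset_Icc_right hσ.2
  have anti := antitoneOn_Icc_of_hasDerivAt (a := a) (c := σ)
    (g := fun s => poh k F G r₁ p₁ s -
      r₁ s ^ (k + 1) * p₁ s / (r₂ s ^ (k + 1) * p₂ s) * poh k F G r₂ p₂ s)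
    (g' := fun s => r₁ s ^ (k + 1) * p₁ s / (r₂ s ^ (k + 1) * p₂ s) *
      (f s * (1 / p₁ s ^ 2 - 1 / p₂ s ^ 2)) * poh k F G r₂ p₂ s)
    (((B₁.cont_poh hF H).mono hsub).sub (((B₁.cont_momentum.mono hsub).div
      (B₂.cont_momentum.mono hsub) fun s hs => (hypos' s hs).ne').mul
      ((B₂.cont_poh hF H).mono hsub)))
    (fun s hs => by
      have hs' : s ∈ Ioo a c := ⟨hs.1, hs.2.trans_le hσ.2⟩
      have r1 := (B₁.r_pos s hs').ne'
      have p1 := (B₁.p_pos s hs').ne'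
      have r2 := (B₂.r_pos s hs').ne'
      have p2 := (B₂.p_pos s hs').ne'
      refine ((B₁.hasDerivAt_poh hF H hs').sub (((B₁.hasDerivAt_momentum hs').div
        (B₂.hasDerivAt_momentum hs') (hypos' s (Ioo_subset_Icc_self hs)).ne').mul
        (B₂.hasDerivAt_poh hF H hs'))).congr_deriv ?_
      generalize poh k F G r₂ p₂ s = P
      simp only [Pi.div_apply]
      field_simp
      ring)
    (fun s hs => by
      have hs' : s ∈ Ioo a c := ⟨hs.1, hs.2.trans_le hσ.2⟩
      have r1 := B₁.r_pos s hs'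
      have p1 := B₁.p_pos s hs'
      have r2 := B₂.r_pos s hs'
      have p2 := B₂.p_pos s hs'
      have h1 : 1 / p₂ s ^ 2 ≤ 1 / p₁ s ^ 2 := by
        have := hp s hs'
        gcongr
      have h2 : 0 ≤ f s * (1 / p₁ s ^ 2 - 1 / p₂ s ^ 2) :=
        mul_nonneg (hf0 s (Ioo_subset_Icc_self hs')) (by linarith)
      exact mul_nonpos_of_nonneg_of_nonpos (by positivity) (hP₂ s (Ioo_subset_Icc_self hs')))
  have h1 := anti (left_mem_Icc.mpr hσ.1) (right_mem_Icc.mpr hσ.1) hσ.1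
  have h2 : r₁ σ ^ (k + 1) * p₁ σ = r₂ σ ^ (k + 1) * p₂ σ := by linarith
  simp only [h2, div_self (hypos' σ (right_mem_Icc.mpr hσ.1)).ne'] at h1
  have h3 : 0 < poh k F G r₁ p₁ a -
      r₁ a ^ (k + 1) * p₁ a / (r₂ a ^ (k + 1) * p₂ a) * poh k F G r₂ p₂ a := by linarith
  have h4 := mul_pos hya h3
  rw [mul_sub, ← mul_assoc, mul_div_cancel₀ _ hya.ne'] at h4
  linarith

/-- Comparison of two second branches on `[β, m]`. -/
theorem slope_lt_of_poh_lt {m : ℝ} (B₁ : Branch k f r₁ p₁ β m) (B₂ : Branch k f r₂ p₂ β m)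
    (hF : ∀ s, HasDerivAt F (f s) s) (H : PohWeight k f F G β m) (hβm : β < m)
    (hf0 : ∀ s ∈ Icc β m, 0 ≤ f s) (hFβ : F β = 0) (hF0 : ∀ s ∈ Icc β m, 0 ≤ F s)
    (hP₂ : ∀ s ∈ Icc β m, poh k F G r₂ p₂ s ≤ 0)
    (hPm : poh k F G r₂ p₂ m < poh k F G r₁ p₁ m) (hpm : p₁ m = 0)
    (hr₁ : ∀ s ∈ Icc β m, 0 < r₁ s) (hr₂ : ∀ s ∈ Icc β m, 0 < r₂ s)
    (hp₁ : 0 < p₁ β) (hp₂ : ∀ s ∈ Icc β m, 0 < p₂ s) :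
    (∀ s ∈ Icc β m, p₁ s < p₂ s) ∧ (r₂ β ≤ r₁ β → r₁ β * p₁ β < r₂ β * p₂ β) := by
  have hmm : m ∈ Icc β m := right_mem_Icc.mpr hβm.le
  have key : ∀ s ∈ Ico β m, (∀ t ∈ Ioo s m, p₁ t < p₂ t) →
      r₂ s ^ (k + 1) * p₂ s ≤ r₁ s ^ (k + 1) * p₁ s →
      0 < p₁ s * p₂ s * (r₂ s * p₂ s - r₁ s * p₁ s) + 2 * F s * (p₁ s * r₂ s - p₂ s * r₁ s) := by
    intro s hs hlt hy
    have hs' : s ∈ Icc β m := ⟨hs.1, hs.2.le⟩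
    have r1 := hr₁ s hs'
    have r2 := hr₂ s hs'
    have h1 := momentum_mul_poh_lt (B₁.mono hs.1 le_rfl) (B₂.mono hs.1 le_rfl) hF
      (H.mono hs.1 le_rfl) hs.2 (fun t ht => hf0 t ⟨hs.1.trans ht.1, ht.2⟩)
      (fun t ht => hP₂ t ⟨hs.1.trans ht.1, ht.2⟩) hPm hpm hlt
      (fun t ht => mul_pos (pow_pos (hr₂ t ⟨hs.1.trans ht.1, ht.2⟩) _)
        (hp₂ t ⟨hs.1.trans ht.1, ht.2⟩)) hy
    have h2 : 0 < r₁ s ^ (k + 1) * r₂ s ^ (k + 1) * (p₁ s * p₂ s * (r₂ s * p₂ s - r₁ s * p₁ s) +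
        2 * F s * (p₁ s * r₂ s - p₂ s * r₁ s)) := by
      rw [poh, poh] at h1
      linear_combination h1
    exact pos_of_mul_pos_right h2 (by positivity)
  have hlt : ∀ s ∈ Icc β m, p₁ s < p₂ s := by
    have := pos_of_downward (g := fun s => p₂ s - p₁ s) (a := β) (c := m)
      (B₂.cont_p.sub B₁.cont_p) (by simpa [hpm] using hp₂ m hmm) ?_
    · exact fun s hs => by linarith [this s hs]
    intro s hs hpos
    have hs' : s ∈ Icc β m := ⟨hs.1, hs.2.le⟩
    have hle := nonneg_of_pos_Ioc hs.2
      ((B₂.cont_p.sub B₁.cont_p).mono (Icc_subset_Icc_left hs.1)) hpos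
    simp only [Pi.sub_apply] at hle
    have hlt : ∀ t ∈ Ioo s m, p₁ t < p₂ t := fun t ht => by linarith [hpos t ⟨ht.1, ht.2.le⟩]
    have B₁' := B₁.mono hs.1 le_rfl
    have B₂' := B₂.mono hs.1 le_rfl
    by_contra hneg
    have heq : p₂ s = p₁ s := by linarith
    rcases le_or_gt (r₁ s) (r₂ s) with h | h
    · have anti := antitoneOn_radius_sub B₁' B₂' fun t ht => (hlt t ht).le
      have := slope_lt_of_radius_le B₁' B₂' (by linarith [hpos m ⟨hs.2, le_rfl⟩]) (fun t ht => by
        have := anti (left_mem_Icc.mpr hs.2.le) ht ht.1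
        simp only at this
        linarith) s (left_mem_Icc.mpr hs.2.le)
      linarith
    · have p2 := hp₂ s hs'
      have r2 := hr₂ s hs'
      have h1 := key s hs hlt (by rw [heq] at p2 ⊢; gcongr)
      have h2 := hF0 s hs'
      rw [heq] at h1 p2
      have h3 : 0 < (r₂ s - r₁ s) * (p₁ s * (p₁ s ^ 2 + 2 * F s)) := by linear_combination h1
      have h4 : 0 ≤ p₁ s * (p₁ s ^ 2 + 2 * F s) := by positivity
      nlinarith
  refine ⟨hlt, fun hr => ?_⟩
  have hβ : β ∈ Icc β m := left_mem_Icc.mpr hβm.le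
  have r2 := hr₂ β hβ
  have p2 := hp₂ β hβ
  rcases le_or_gt (r₂ β ^ (k + 1) * p₂ β) (r₁ β ^ (k + 1) * p₁ β) with h | h
  · have h1 := key β ⟨le_rfl, hβm⟩ (fun t ht => hlt t (Ioo_subset_Icc_self ht)) h
    rw [hFβ, mul_zero, zero_mul, add_zero] at h1
    linarith [pos_of_mul_pos_right h1 (by positivity)]
  · have h1 : r₂ β ^ k ≤ r₁ β ^ k := by gcongr
    have r1 := hr₁ β hβ
    have h2 : r₂ β ^ k * (r₁ β * p₁ β) < r₂ β ^ k * (r₂ β * p₂ β) :=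
      calc _ ≤ r₁ β ^ k * (r₁ β * p₁ β) := by gcongr
        _ = r₁ β ^ (k + 1) * p₁ β := by ring
        _ < _ := h
        _ = _ := by ring
    exact lt_of_mul_lt_mul_left h2 (by positivity)

end Branch

end Paper

namespace Paper

namespace Branch

variable {k : ℕ} {f F G r p r₁ p₁ r₂ p₂ : ℝ → ℝ} {a c : ℝ}

/-- The functional `W = r √((u')² + 2 F)`. -/
theorem hasDerivAt_w (B : Branch k f r p a c) {s : ℝ} (hF : HasDerivAt F (f s) s)
    (hs : s ∈ Ioo a c) (hI : 0 < p s ^ 2 + 2 * F s) :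
    HasDerivAt (fun s => r s * √(p s ^ 2 + 2 * F s))
      ((k * p s - 2 * F s / p s) / √(p s ^ 2 + 2 * F s)) s := by
  have hr := (B.r_pos s hs).ne'
  have hp := (B.p_pos s hs).ne'
  have hq := (Real.sqrt_pos.mpr hI).ne'
  refine ((B.deriv_r s hs).mul ((B.hasDerivAt_energy hF hs).sqrt hI.ne')).congr_deriv ?_
  have hsq : √(p s ^ 2 + 2 * F s) ^ 2 = p s ^ 2 + 2 * F s := Real.sq_sqrt hI.le
  field_simp
  rw [hsq]
  ring

theorem w_rate_le {x y A κ : ℝ} (hA : A ≤ 0) (hx : 0 < x) (hxy : x ≤ y) (hI : 0 < x ^ 2 + 2 * A)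
    (hκ : 0 ≤ κ) :
    (κ * y - 2 * A / y) / √(y ^ 2 + 2 * A) ≤ (κ * x - 2 * A / x) / √(x ^ 2 + 2 * A) := by
  have hy : 0 < y := hx.trans_le hxy
  have hxy2 : x ^ 2 ≤ y ^ 2 := by gcongr
  have hI' : 0 < y ^ 2 + 2 * A := by linarith
  have qx := Real.sqrt_pos.mpr hI
  have qy := Real.sqrt_pos.mpr hI'
  have h1 : y / √(y ^ 2 + 2 * A) ≤ x / √(x ^ 2 + 2 * A) := by
    rw [div_le_div_iff₀ qy qx]
    refine le_of_sq_le_sq ?_ (by positivity)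
    rw [mul_pow, mul_pow, Real.sq_sqrt hI.le, Real.sq_sqrt hI'.le]
    nlinarith
  have h2 : (1 / y) / √(y ^ 2 + 2 * A) ≤ (1 / x) / √(x ^ 2 + 2 * A) := by
    gcongr
  have h3 := mul_le_mul_of_nonneg_left h1 hκ
  have h4 := mul_le_mul_of_nonneg_left h2 (show 0 ≤ -(2 * A) by linarith)
  calc _ = κ * (y / √(y ^ 2 + 2 * A)) + -(2 * A) * ((1 / y) / √(y ^ 2 + 2 * A)) := by ring
    _ ≤ κ * (x / √(x ^ 2 + 2 * A)) + -(2 * A) * ((1 / x) / √(x ^ 2 + 2 * A)) := by linarith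
    _ = _ := by ring

/-- After an intersection, where `F ≤ 0`, the difference of the functionals `W` does not
decrease. -/
theorem w_sub_le (B₁ : Branch k f r₁ p₁ a c) (B₂ : Branch k f r₂ p₂ a c)
    (hF : ∀ s, HasDerivAt F (f s) s) (hF0 : ∀ s ∈ Icc a c, F s ≤ 0)
    (hI : ∀ s ∈ Ioc a c, 0 < p₁ s ^ 2 + 2 * F s)
    (hr : r₂ c ≤ r₁ c) (hp : p₁ c < p₂ c)
    (hW : r₁ c * √(p₁ c ^ 2 + 2 * F c) < r₂ c * √(p₂ c ^ 2 + 2 * F c)) :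
    ∀ s ∈ Icc a c, p₁ s < p₂ s ∧ (s < c → r₂ s < r₁ s) ∧
      r₁ s * √(p₁ s ^ 2 + 2 * F s) + (r₂ c * √(p₂ c ^ 2 + 2 * F c) -
        r₁ c * √(p₁ c ^ 2 + 2 * F c)) ≤ r₂ s * √(p₂ s ^ 2 + 2 * F s) := by
  have hFc : ContinuousOn F (Icc a c) := fun s _ => (hF s).continuousAt.continuousWithinAt
  have main : ∀ s ∈ Icc a c, (∀ t ∈ Ioo s c, p₁ t < p₂ t) →
      (s < c → r₂ s < r₁ s) ∧ r₁ s * √(p₁ s ^ 2 + 2 * F s) + (r₂ c * √(p₂ c ^ 2 + 2 * F c) -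
        r₁ c * √(p₁ c ^ 2 + 2 * F c)) ≤ r₂ s * √(p₂ s ^ 2 + 2 * F s) := by
    intro s hs hlt
    have B₁' := B₁.mono hs.1 le_rfl
    have B₂' := B₂.mono hs.1 le_rfl
    have hsm := left_mem_Icc.mpr hs.2
    have hcm := right_mem_Icc.mpr hs.2
    have hsub : Icc s c ⊆ Icc a c := Icc_subset_Icc_left hs.1
    refine ⟨fun hsc => ?_, ?_⟩
    · have := strictAntiOn_radius_sub B₁' B₂' hlt hsm hcm hsc
      simp only at this
      linarith
    have anti := antitoneOn_Icc_of_hasDerivAt (a := s) (c := c)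
      (g := fun t => r₂ t * √(p₂ t ^ 2 + 2 * F t) - r₁ t * √(p₁ t ^ 2 + 2 * F t))
      ((B₂'.cont_r.mul ((B₂'.cont_p.pow 2).add (continuousOn_const.mul (hFc.mono hsub))).sqrt).sub
        (B₁'.cont_r.mul ((B₁'.cont_p.pow 2).add (continuousOn_const.mul (hFc.mono hsub))).sqrt))
      (fun t ht => by
        have hI₁ := hI t ⟨hs.1.trans_lt ht.1, ht.2.le⟩
        have p1 := B₁'.p_pos t ht
        have hI₂ : 0 < p₂ t ^ 2 + 2 * F t := by nlinarith [hlt t ht]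
        exact (B₂'.hasDerivAt_w (hF t) ht hI₂).sub (B₁'.hasDerivAt_w (hF t) ht hI₁))
      (fun t ht => by
        have := w_rate_le (κ := (k : ℝ)) (hF0 t (hsub (Ioo_subset_Icc_self ht))) (B₁'.p_pos t ht)
          (hlt t ht).le (hI t ⟨hs.1.trans_lt ht.1, ht.2.le⟩) (by positivity)
        linarith)
    have := anti hsm hcm hs.2
    simp only at this
    linarith
  have hlt := pos_of_downward (g := fun s => p₂ s - p₁ s) (a := a) (c := c)
    (B₂.cont_p.sub B₁.cont_p) (by simpa using hp) fun s hs hpos => by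
      have hs' : s ∈ Icc a c := ⟨hs.1, hs.2.le⟩
      obtain ⟨h1, h2⟩ := main s hs' fun t ht => by linarith [hpos t ⟨ht.1, ht.2.le⟩]
      have h3 : r₂ s * √(p₁ s ^ 2 + 2 * F s) ≤ r₁ s * √(p₁ s ^ 2 + 2 * F s) :=
        mul_le_mul_of_nonneg_right (h1 hs.2).le (Real.sqrt_nonneg _)
      have h4 : √(p₁ s ^ 2 + 2 * F s) < √(p₂ s ^ 2 + 2 * F s) :=
        lt_of_mul_lt_mul_left (a := r₂ s) (by linarith) (B₂.r_nonneg s hs')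
      have h5 : p₁ s ^ 2 + 2 * F s < p₂ s ^ 2 + 2 * F s := lt_of_not_ge fun h =>
        absurd (Real.sqrt_le_sqrt h) (not_le.mpr h4)
      nlinarith [B₂.p_nonneg s hs', B₁.p_nonneg s hs']
  exact fun s hs => ⟨by linarith [hlt s hs], main s hs fun t ht => by
    linarith [hlt t ⟨hs.1.trans ht.1.le, ht.2.le⟩]⟩

theorem strictAntiOn_radius (B : Branch k f r p a c) : StrictAntiOn r (Icc a c) :=
  strictAntiOn_Icc_of_hasDerivAt B.cont_r B.deriv_r fun s hs => by simpa using B.p_pos s hs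

theorem monotoneOn_slope (B : Branch k f r p a c) (hf0 : ∀ s ∈ Icc a c, f s ≤ 0) :
    MonotoneOn p (Icc a c) :=
  monotoneOn_Icc_of_hasDerivAt B.cont_p B.deriv_p fun s hs => by
    have r1 := B.r_pos s hs
    have p1 := B.p_pos s hs
    have h := hf0 s (Ioo_subset_Icc_self hs)
    have h1 : 0 ≤ ((k : ℝ) + 1) / r s := by positivity
    have h2 : f s / p s ≤ 0 := div_nonpos_of_nonpos_of_nonneg h p1.le
    linarith

theorem monotoneOn_momentum (B : Branch k f r p a c) (hf0 : ∀ s ∈ Icc a c, f s ≤ 0) :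
    MonotoneOn (fun s => r s ^ (k + 1) * p s) (Icc a c) :=
  monotoneOn_Icc_of_hasDerivAt B.cont_momentum (fun _ hs => B.hasDerivAt_momentum hs) fun s hs => by
    have r1 := B.r_pos s hs
    have p1 := B.p_pos s hs
    have h := hf0 s (Ioo_subset_Icc_self hs)
    have : r s ^ (k + 1) * f s / p s ≤ 0 := div_nonpos_of_nonpos_of_nonneg
      (mul_nonpos_of_nonneg_of_nonpos (by positivity) h) p1.le
    linarith

/-- Two ordered branches must intersect before the slope of the steeper one gets small. -/
theorem exists_crossing_threshold {b Q ρ R σ τ : ℝ} (k : ℕ) (hb : 0 < b)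
    (hf0 : ∀ s ∈ Icc 0 b, f s ≤ 0) (hfQ : ∀ s ∈ Icc 0 b, -f s ≤ Q)
    (hρ : 0 < ρ) (hR : 0 < R) (hσ : 0 < σ) (hτ : 0 < τ) :
    ∃ η > 0, ∀ ⦃ε : ℝ⦄ ⦃r₁ p₁ r₂ p₂ : ℝ → ℝ⦄, 0 < ε → ε < b / 2 →
      Branch k f r₁ p₁ ε b → Branch k f r₂ p₂ ε b → (∀ s ∈ Icc ε b, 0 < p₁ s ∧ p₁ s < p₂ s) →
      (∀ s ∈ Icc ε b, ρ ≤ r₁ s) → r₂ (b / 2) ≤ R → σ ≤ p₁ (b / 2) → p₂ (b / 2) ≤ τ → p₂ ε ≤ η →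
      ∃ s ∈ Icc ε b, r₂ s < r₁ s := by
  have hQ : 0 ≤ Q := by linarith [hf0 0 ⟨le_rfl, hb.le⟩, hfQ 0 ⟨le_rfl, hb.le⟩]
  obtain ⟨C, hC, hCd⟩ : ∃ C > 0, C = R ^ (k + 1) * τ := ⟨_, by positivity, rfl⟩
  obtain ⟨M, hM, hMd⟩ : ∃ M > 0, M = (k + 1) * τ / ρ + Q := ⟨_, by positivity, rfl⟩
  obtain ⟨q, hq, hqd⟩ : ∃ q > 0, q = 2 * (k + 1) * ρ ^ k * σ / R := ⟨_, by positivity, rfl⟩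
  refine ⟨σ * Real.exp (-(2 * C * M / (q * (b / 2)))), by positivity, ?_⟩
  intro ε r₁ p₁ r₂ p₂ hε hεb B₁ B₂ hp hr₁ hr₂ hσ₁ hτ₂ hη
  by_contra! hle
  have hd : b / 2 ∈ Icc ε b := ⟨hεb.le, by linarith⟩
  have hεm : ε ∈ Icc ε b := ⟨le_rfl, by linarith⟩
  have hbm : b ∈ Icc ε b := ⟨by linarith, le_rfl⟩
  have hf0' : ∀ s ∈ Icc ε b, f s ≤ 0 := fun s hs => hf0 s ⟨hε.le.trans hs.1, hs.2⟩
  have hstrict := strictAntiOn_radius_sub B₁ B₂ fun s hs => (hp s (Ioo_subset_Icc_self hs)).2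
  have hanti := hstrict.antitoneOn
  have hh : 0 < r₂ (b / 2) - r₁ (b / 2) := by
    have h1 := hstrict hεm hd hεb
    have h2 := hle ε hεm
    simp only at h1
    linarith
  set h := r₂ (b / 2) - r₁ (b / 2) with hhd
  set K := r₁ (b / 2) ^ (k + 1) * (p₂ (b / 2) ^ 2 - p₁ (b / 2) ^ 2) with hK
  have upper : q * (b / 2) * h ≤ K := by
    have B₁' := B₁.mono hd.1 le_rfl
    have B₂' := B₂.mono hd.1 le_rfl
    have hsub : Icc (b / 2) b ⊆ Icc ε b := Icc_subset_Icc_left hd.1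
    choose! d hd' hdle using fun s (hs : s ∈ Ioo (b / 2) b) => hasDerivAt_gap B₁' B₂' hs
      (hle s (hsub (Ioo_subset_Icc_self hs))) (hp s (hsub (Ioo_subset_Icc_self hs))).2.le
    have anti := antitoneOn_Icc_of_hasDerivAt (a := b / 2) (c := b)
      (g := fun s => r₁ s ^ (k + 1) * (p₂ s ^ 2 - p₁ s ^ 2) + q * h * s)
      ((cont_gap B₁' B₂').add (continuousOn_const.mul continuousOn_id))
      (fun s hs => (hd' s hs).add ((hasDerivAt_id s).const_mul (q * h))) (fun s hs => by
        have hs' := hsub (Ioo_subset_Icc_self hs)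
        have h1 : h ≤ r₂ s - r₁ s := by
          have := hanti hd hs' hs.1.le
          simp only at this
          linarith
        have h2 : σ ≤ p₁ s := hσ₁.trans (B₁.monotoneOn_slope hf0' hd hs' hs.1.le)
        have h3 : r₂ s ≤ R := (B₂.strictAntiOn_radius.antitoneOn hd hs' hs.1.le).trans hr₂
        have h4 := hr₁ s hs'
        have h5 : 0 < r₂ s := hρ.trans_le (h4.trans (hle s hs'))
        have h6 : q * h ≤ 2 * (k + 1) * r₁ s ^ k * p₁ s * (r₂ s - r₁ s) / r₂ s := by
          calc q * h = 2 * (k + 1) * ρ ^ k * σ * h / R := by rw [hqd]; ring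
            _ ≤ _ := by
              have := hρ.trans_le h4
              have := hσ.trans_le h2
              have := hh.le.trans h1
              gcongr
        have := hdle s hs
        simp only [mul_one]
        linarith)
    have h1 := anti (left_mem_Icc.mpr hd.2) (right_mem_Icc.mpr hd.2) hd.2
    simp only at h1
    have h2 : 0 ≤ r₁ b ^ (k + 1) * (p₂ b ^ 2 - p₁ b ^ 2) := by
      have h3 := hp b hbm
      have : 0 ≤ p₂ b ^ 2 - p₁ b ^ 2 := by nlinarith
      have := B₁.r_nonneg b hbm
      positivity
    nlinarith
  have lower : K / (2 * C * M) * (Real.log (p₂ (b / 2)) - Real.log (p₂ ε)) ≤ h := by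
    have hKpos : 0 < K := lt_of_lt_of_le (by positivity) upper
    have B₁' := B₁.mono le_rfl hd.2
    have B₂' := B₂.mono le_rfl hd.2
    have hsub : Icc ε (b / 2) ⊆ Icc ε b := Icc_subset_Icc_right hd.2
    have hpos2 : ∀ s ∈ Icc ε b, 0 < p₂ s := fun s hs => (hp s hs).1.trans (hp s hs).2
    have gap := antitoneOn_gap B₁' B₂' (fun s hs => hle s (hsub (Ioo_subset_Icc_self hs)))
      (fun s hs => (hp s (hsub (Ioo_subset_Icc_self hs))).2.le)
    have mono := monotoneOn_Icc_of_hasDerivAt (a := ε) (c := b / 2)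
      (g := fun s => r₂ s - r₁ s - K / (2 * C * M) * Real.log (p₂ s))
      ((B₂'.cont_r.sub B₁'.cont_r).sub (continuousOn_const.mul
        (B₂'.cont_p.log fun s hs => (hpos2 s (hsub hs)).ne')))
      (fun s hs => ((B₂'.deriv_r s hs).sub (B₁'.deriv_r s hs)).sub
        (((B₂'.deriv_p s hs).log (B₂'.p_pos s hs).ne').const_mul _)) (fun s hs => by
        have hs₀ := Ioo_subset_Icc_self hs
        have hs' := hsub hs₀
        obtain ⟨p1, hlt⟩ := hp s hs'
        have p2 := hpos2 s hs'
        have r1 : 0 < r₁ s := hρ.trans_le (hr₁ s hs')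
        have hρ₂ : ρ ≤ r₂ s := (hr₁ s hs').trans (hle s hs')
        have r2 : 0 < r₂ s := hρ.trans_le hρ₂
        have y1 : r₁ s ^ (k + 1) * p₁ s ≤ C := by
          refine (B₁.monotoneOn_momentum hf0' hs' hd hs.2.le).trans ?_
          rw [hCd]
          have h1 := (hle _ hd).trans hr₂
          have h2 := (hp _ hd).2.le.trans hτ₂
          have h3 := B₁.r_nonneg _ hd
          have h4 := B₁.p_nonneg _ hd
          show r₁ (b / 2) ^ (k + 1) * p₁ (b / 2) ≤ _
          gcongr
        have hKs : K ≤ r₁ s ^ (k + 1) * (p₂ s ^ 2 - p₁ s ^ 2) :=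
          gap hs₀ (right_mem_Icc.mpr hd.1) hs.2.le
        have e1 : K / (2 * C) / p₂ s ^ 2 ≤ (p₁ s)⁻¹ - (p₂ s)⁻¹ := by
          have e : (p₁ s)⁻¹ - (p₂ s)⁻¹ = r₁ s ^ (k + 1) * (p₂ s ^ 2 - p₁ s ^ 2) /
              (r₁ s ^ (k + 1) * p₁ s * (p₂ s * (p₁ s + p₂ s))) := by
            field_simp
            ring
          rw [e]
          calc K / (2 * C) / p₂ s ^ 2 = K / (C * (p₂ s * (p₂ s + p₂ s))) := by
                field_simp
                ring
            _ ≤ _ := by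
              have := hKpos.le.trans hKs
              gcongr
        have e2 : ((k + 1) / r₂ s - f s / p₂ s) / p₂ s ≤ M / p₂ s ^ 2 := by
          have h1 : ((k + 1) / r₂ s - f s / p₂ s) / p₂ s =
              ((k + 1) * p₂ s / r₂ s + -f s) / p₂ s ^ 2 := by
            field_simp
            ring
          rw [h1, hMd]
          have h2 := hfQ s ⟨hε.le.trans hs'.1, hs'.2⟩
          have h3 : p₂ s ≤ τ := (B₂.monotoneOn_slope hf0' hs' hd hs.2.le).trans hτ₂
          gcongr
        have e3 : K / (2 * C * M) * (((k + 1) / r₂ s - f s / p₂ s) / p₂ s) ≤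
            K / (2 * C) / p₂ s ^ 2 := by
          calc _ ≤ K / (2 * C * M) * (M / p₂ s ^ 2) := by gcongr
            _ = _ := by field_simp
        linarith)
    have h1 := mono (left_mem_Icc.mpr hd.1) (right_mem_Icc.mpr hd.1) hd.1
    have h2 := hle ε hεm
    simp only at h1
    linarith
  have hlog : 2 * C * M / (q * (b / 2)) < Real.log (p₂ (b / 2)) - Real.log (p₂ ε) := by
    have h1 : Real.log (p₂ ε) ≤ Real.log σ - 2 * C * M / (q * (b / 2)) := by
      have h2 := Real.log_le_log ((hp ε hεm).1.trans (hp ε hεm).2) hη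
      rwa [Real.log_mul hσ.ne' (Real.exp_pos _).ne', Real.log_exp, ← sub_eq_add_neg] at h2
    have h3 := Real.log_lt_log hσ (hσ₁.trans_lt (hp _ hd).2)
    linarith
  have hL : 0 < Real.log (p₂ (b / 2)) - Real.log (p₂ ε) := lt_of_le_of_lt (by positivity) hlog
  have h1 : q * (b / 2) * h / (2 * C * M) * (Real.log (p₂ (b / 2)) - Real.log (p₂ ε)) ≤ h := by
    refine le_trans ?_ lower
    gcongr
  have h2 : q * (b / 2) * h / (2 * C * M) * (2 * C * M / (q * (b / 2))) <
      q * (b / 2) * h / (2 * C * M) * (Real.log (p₂ (b / 2)) - Real.log (p₂ ε)) := by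
    gcongr
  have h3 : q * (b / 2) * h / (2 * C * M) * (2 * C * M / (q * (b / 2))) = h := by
    field_simp
  linarith

end Branch

end Paper

namespace Paper

/-- Continuous induction upwards from the left end point. -/
theorem pos_of_upward {g : ℝ → ℝ} {a c : ℝ} (hg : ContinuousOn g (Icc a c)) (ha : 0 < g a)
    (step : ∀ s ∈ Ioc a c, (∀ t ∈ Ico a s, 0 < g t) → 0 < g s) : ∀ s ∈ Icc a c, 0 < g s := by
  have hmaps : MapsTo (fun s : ℝ => -s) (Icc (-c) (-a)) (Icc a c) := fun s hs =>
    ⟨by linarith [hs.2], by linarith [hs.1]⟩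
  have := pos_of_downward (g := fun s => g (-s)) (a := -c) (c := -a)
    (hg.comp continuous_neg.continuousOn hmaps) (by simpa using ha) fun s hs hpos =>
      step (-s) ⟨by linarith [hs.2], by linarith [hs.1]⟩ fun t ht => by
        simpa using hpos (-t) ⟨by linarith [ht.2], by linarith [ht.1]⟩
  intro s hs
  simpa using this (-s) ⟨by linarith [hs.2], by linarith [hs.1]⟩

/-! ### Solutions and their decreasing branches -/

/-- `v` is a solution of (E) on `(0, ∞)` in dimension `k + 2`, of class `C¹` up to `0`, where
`v' = 0`. -/
structure Sol (k : ℕ) (f v : ℝ → ℝ) : Prop where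
  cont : ContinuousOn v (Ici 0)
  cont_deriv : ContinuousOn (deriv v) (Ici 0)
  deriv_zero : deriv v 0 = 0
  hasDerivAt : ∀ r, 0 < r → HasDerivAt v (deriv v r) r
  hasDerivAt_deriv : ∀ r, 0 < r →
    HasDerivAt (deriv v) (-((k + 1) / r * deriv v r) - f (v r)) r

namespace Sol

variable {k : ℕ} {f v v₁ v₂ : ℝ → ℝ}

theorem neg (S : Sol k f v) (hodd : ∀ s, f (-s) = -f s) : Sol k f (fun r => -v r) := by
  have hd : deriv (fun r => -v r) = fun r => -deriv v r := by
    funext r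
    exact deriv.fun_neg
  refine ⟨S.cont.neg, ?_, ?_, ?_, ?_⟩
  · rw [hd]; exact S.cont_deriv.neg
  · rw [hd]; simp [S.deriv_zero]
  · intro r hr; rw [hd]; exact (S.hasDerivAt r hr).neg
  · intro r hr
    rw [hd]
    refine (S.hasDerivAt_deriv r hr).neg.congr_deriv ?_
    rw [hodd]
    ring

theorem strictAntiOn (S : Sol k f v) {A B : ℝ} (hA : 0 ≤ A) (hneg : ∀ x ∈ Ioo A B, deriv v x < 0) :
    StrictAntiOn v (Icc A B) :=
  strictAntiOn_Icc_of_hasDerivAt (S.cont.mono fun _ hx => hA.trans hx.1)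
    (fun x hx => S.hasDerivAt x (hA.trans_lt hx.1)) hneg

/-- A decreasing piece of a solution, parametrized by its values. -/
theorem exists_branch (S : Sol k f v) {A B : ℝ} (hA : 0 ≤ A) (hAB : A < B)
    (hneg : ∀ x ∈ Ioo A B, deriv v x < 0) :
    ∃ r p : ℝ → ℝ, Branch k f r p (v B) (v A) ∧ (∀ x ∈ Icc A B, r (v x) = x) ∧
      (∀ s ∈ Icc (v B) (v A), r s ∈ Icc A B ∧ v (r s) = s) ∧ ∀ s, p s = -deriv v (r s) := by
  have anti := S.strictAntiOn hA hneg
  have hcont : ContinuousOn v (Icc A B) := S.cont.mono fun _ hx => hA.trans hx.1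
  have himg : v '' Icc A B = Icc (v B) (v A) := by
    refine Subset.antisymm ?_ (intermediate_value_Icc' hAB.le hcont)
    rintro _ ⟨x, hx, rfl⟩
    exact ⟨anti.antitoneOn hx (right_mem_Icc.mpr hAB.le) hx.2,
      anti.antitoneOn (left_mem_Icc.mpr hAB.le) hx hx.1⟩
  obtain ⟨r, hrd⟩ : ∃ r, r = Function.invFunOn v (Icc A B) := ⟨_, rfl⟩
  have hright : ∀ s ∈ Icc (v B) (v A), r s ∈ Icc A B ∧ v (r s) = s := by
    intro s hs
    rw [← himg] at hs
    rw [hrd]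
    exact ⟨Function.invFunOn_mem hs, Function.invFunOn_eq hs⟩
  have hleft : ∀ x ∈ Icc A B, r (v x) = x := by
    intro x hx
    have := hright (v x) (himg ▸ mem_image_of_mem v hx)
    exact anti.injOn this.1 hx this.2
  have hrc : ContinuousOn r (Icc (v B) (v A)) := by
    rw [continuousOn_iff_isClosed]
    intro t ht
    refine ⟨v '' (t ∩ Icc A B), ((isCompact_Icc.inter_left ht).image_of_continuousOn
      (hcont.mono inter_subset_right)).isClosed, ?_⟩
    ext s
    constructor
    · rintro ⟨h1, h2⟩
      exact ⟨⟨r s, ⟨h1, (hright s h2).1⟩, (hright s h2).2⟩, h2⟩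
    · rintro ⟨⟨x, hx, rfl⟩, h2⟩
      refine ⟨?_, h2⟩
      rw [mem_preimage, hleft x hx.2]
      exact hx.1
  have hmem : ∀ s ∈ Ioo (v B) (v A), r s ∈ Ioo A B := by
    intro s hs
    obtain ⟨h1, h2⟩ := hright s (Ioo_subset_Icc_self hs)
    refine ⟨h1.1.lt_of_ne fun h => ?_, h1.2.lt_of_ne fun h => ?_⟩
    · rw [← h] at h2; linarith [hs.2]
    · rw [h] at h2; linarith [hs.1]
  have hdr : ∀ s ∈ Ioo (v B) (v A), HasDerivAt r (deriv v (r s))⁻¹ s := by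
    intro s hs
    have hx := hmem s hs
    refine HasDerivAt.of_local_left_inverse (f := v) (hrc.continuousAt (Icc_mem_nhds hs.1 hs.2))
      (S.hasDerivAt _ (hA.trans_lt hx.1)) (hneg _ hx).ne ?_
    filter_upwards [Ioo_mem_nhds hs.1 hs.2] with t ht
    exact (hright t (Ioo_subset_Icc_self ht)).2
  have hnonpos : ∀ x ∈ Icc A B, deriv v x ≤ 0 := by
    intro x hx
    have hcl : x ∈ closure (Ioo A B) := by rwa [closure_Ioo hAB.ne]
    have hcw : ContinuousWithinAt (deriv v) (Ioo A B) x :=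
      (S.cont_deriv x (hA.trans hx.1)).mono fun y hy => hA.trans hy.1.le
    have := hcw.mem_closure (t := Iic 0) hcl fun y hy => (hneg y hy).le
    exact isClosed_Iic.closure_subset this
  refine ⟨r, fun s => -deriv v (r s), ⟨hrc, ?_, ?_, ?_, ?_, ?_, ?_, ?_⟩, hleft, hright,
    fun s => rfl⟩
  · exact (S.cont_deriv.comp hrc fun s hs => hA.trans (hright s hs).1.1).neg
  · exact fun s hs => hA.trans_lt (hmem s hs).1
  · exact fun s hs => neg_pos.mpr (hneg _ (hmem s hs))
  · exact fun s hs => hA.trans (hright s hs).1.1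
  · exact fun s hs => neg_nonneg.mpr (hnonpos _ (hright s hs).1)
  · intro s hs
    refine (hdr s hs).congr_deriv ?_
    rw [inv_neg, neg_neg]
  · intro s hs
    have hx := hmem s hs
    have hx0 := hA.trans_lt hx.1
    have hne := (hneg _ hx).ne
    refine ((S.hasDerivAt_deriv _ hx0).comp s (hdr s hs)).neg.congr_deriv ?_
    rw [(hright s (Ioo_subset_Icc_self hs)).2]
    have := hx0.ne'
    field_simp
    ring

/-- Sturm comparison: while `v₁ > β`, the solution with the larger initial value stays above. -/
theorem lt_of_superlinear (S₁ : Sol k f v₁) (S₂ : Sol k f v₂) {β X : ℝ}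
    (hf : ∀ s t, β < s → s ≤ t → f t * (s - β) ≤ f s * (t - β)) (h0 : v₁ 0 < v₂ 0)
    (hβ : ∀ x ∈ Icc 0 X, β < v₁ x) : ∀ x ∈ Icc 0 X, v₁ x < v₂ x := by
  have hsub : ∀ {y : ℝ}, Icc 0 y ⊆ Ici 0 := by
    intro y
    exact Icc_subset_Ici_self
  have := pos_of_upward (g := fun x => v₂ x - v₁ x) (a := 0) (c := X)
    ((S₂.cont.sub S₁.cont).mono hsub) (by simpa using h0) ?_
  · exact fun x hx => by linarith [this x hx]
  intro x₀ hx₀ hpos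
  by_contra hneg
  have hw₁ : ∀ x ∈ Icc 0 x₀, 0 < v₁ x - β := fun x hx => by
    linarith [hβ x ⟨hx.1, hx.2.trans hx₀.2⟩]
  have hle : 0 ≤ v₂ x₀ - v₁ x₀ := by
    have hcl : x₀ ∈ closure (Ico 0 x₀) := by
      rw [closure_Ico hx₀.1.ne]; exact right_mem_Icc.mpr hx₀.1.le
    have hcw : ContinuousWithinAt (fun x => v₂ x - v₁ x) (Ico 0 x₀) x₀ :=
      ((S₂.cont.sub S₁.cont) x₀ hx₀.1.le).mono fun y hy => hy.1
    have := hcw.mem_closure (t := Ici 0) hcl fun y hy => (hpos y hy).le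
    exact isClosed_Ici.closure_subset this
  have hw : ∀ x ∈ Icc 0 x₀, v₁ x ≤ v₂ x := fun x hx => by
    rcases hx.2.lt_or_eq with h | h
    · linarith [hpos x ⟨hx.1, h⟩]
    · rw [h]; linarith
  have hw₂ : ∀ x ∈ Icc 0 x₀, 0 < v₂ x - β := fun x hx => by linarith [hw x hx, hw₁ x hx]
  have wron := antitoneOn_Icc_of_hasDerivAt (a := 0) (c := x₀)
    (g := fun x => x ^ (k + 1) * (deriv v₁ x * (v₂ x - β) - (v₁ x - β) * deriv v₂ x))
    (g' := fun x => x ^ (k + 1) * (f (v₂ x) * (v₁ x - β) - f (v₁ x) * (v₂ x - β)))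
    ((continuousOn_pow _).mul (((S₁.cont_deriv.mono hsub).mul
      ((S₂.cont.mono hsub).sub continuousOn_const)).sub
      (((S₁.cont.mono hsub).sub continuousOn_const).mul (S₂.cont_deriv.mono hsub))))
    (fun x hx => by
      have hx0 := hx.1
      refine ((hasDerivAt_pow (k + 1) x).mul (((S₁.hasDerivAt_deriv x hx0).mul
        ((S₂.hasDerivAt x hx0).sub_const β)).sub (((S₁.hasDerivAt x hx0).sub_const β).mul
        (S₂.hasDerivAt_deriv x hx0)))).congr_deriv ?_
      have := hx0.ne'
      simp only [Pi.sub_apply, Pi.mul_apply]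
      push_cast
      field_simp
      ring)
    (fun x hx => by
      have hx' := Ioo_subset_Icc_self hx
      have h1 := hf (v₁ x) (v₂ x) (by linarith [hw₁ x hx']) (hw x hx')
      exact mul_nonpos_of_nonneg_of_nonpos (pow_nonneg hx.1.le _) (by linarith))
  have hwron : ∀ x ∈ Ioo 0 x₀, deriv v₁ x * (v₂ x - β) - (v₁ x - β) * deriv v₂ x ≤ 0 := by
    intro x hx
    have h1 := wron (left_mem_Icc.mpr hx₀.1.le) (Ioo_subset_Icc_self hx) hx.1.le
    simp only [zero_pow (Nat.succ_ne_zero k), zero_mul] at h1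
    exact nonpos_of_mul_nonpos_right h1 (pow_pos hx.1 _)
  have ratio := antitoneOn_Icc_of_hasDerivAt (a := 0) (c := x₀)
    (g := fun x => (v₁ x - β) / (v₂ x - β))
    (((S₁.cont.mono hsub).sub continuousOn_const).div ((S₂.cont.mono hsub).sub continuousOn_const)
      fun x hx => (hw₂ x hx).ne')
    (fun x hx => ((S₁.hasDerivAt x hx.1).sub_const β).div ((S₂.hasDerivAt x hx.1).sub_const β)
      (hw₂ x (Ioo_subset_Icc_self hx)).ne')
    (fun x hx => div_nonpos_of_nonpos_of_nonneg (hwron x hx) (sq_nonneg _))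
  have hz := left_mem_Icc.mpr hx₀.1.le
  have hz' := right_mem_Icc.mpr hx₀.1.le
  have h1 := ratio hz hz' hx₀.1.le
  have h2 : v₂ x₀ = v₁ x₀ := by linarith
  simp only [h2, div_self (hw₁ x₀ hz').ne'] at h1
  rw [le_div_iff₀ (hw₂ 0 hz)] at h1
  linarith

end Sol

end Paper

namespace Paper

/-! ### The nonlinearity -/

/-- The consequences of (f1)–(f4) in dimension `k + 2` used below. -/
structure Nonlin (k : ℕ) (f : ℝ → ℝ) (b β : ℝ) : Prop where
  cont : Continuous f
  odd : ∀ s, f (-s) = -f s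
  b_pos : 0 < b
  b_lt : b < β
  pos : ∀ s, b < s → 0 < f s
  nonpos : ∀ s ∈ Icc 0 b, f s ≤ 0
  hasDerivAt : ∀ s, HasDerivAt (Fint f) (f s) s
  prim_zero : Fint f 0 = 0
  prim_even : ∀ s, Fint f (-s) = Fint f s
  prim_β : Fint f β = 0
  prim_nonpos : ∀ s ∈ Icc (-β) β, Fint f s ≤ 0
  prim_pos : ∀ s, β < s → 0 < Fint f s
  superlinear : ∀ s t, β < s → s ≤ t → f t * (s - β) ≤ f s * (t - β)
  weight : ∀ m, PohWeight k f (Fint f) (fun t => Fint f t / f t) β m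
  weight_neg : ∀ m, PohWeight k f (Fint f) (fun t => Fint f t / f t) m (-β)

theorem nonlin_of_hyps {k : ℕ} {f : ℝ → ℝ} {b β : ℝ} (hf : Continuous f) (h1 : Hf1 f b β)
    (h2 : Hf2 f) (h3 : Hf3 f β) (h4 : Hf4 (k + 2) f β) : Nonlin k f b β := by
  obtain ⟨odd, -, b_pos, b_lt, pos, nonpos, -, prim_β⟩ := h1
  have hasD : ∀ s, HasDerivAt (Fint f) (f s) s := fun s =>
    intervalIntegral.integral_hasDerivAt_right (hf.intervalIntegrable _ _)
      hf.stronglyMeasurable.stronglyMeasurableAtFilter hf.continuousAt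
  have contF : Continuous (Fint f) := continuous_iff_continuousAt.mpr fun s =>
    (hasD s).continuousAt
  have prim_zero : Fint f 0 = 0 := intervalIntegral.integral_same
  have prim_even : ∀ s, Fint f (-s) = Fint f s := by
    intro s
    have h := intervalIntegral.integral_comp_neg (a := 0) (b := s) f
    simp only [odd, intervalIntegral.integral_neg, neg_zero] at h
    rw [Fint, Fint, intervalIntegral.integral_symm, ← h, neg_neg]
  have mono : ∀ m, StrictMonoOn (Fint f) (Icc b m) := fun m =>
    strictMonoOn_of_deriv_pos (convex_Icc b m) contF.continuousOn fun s hs => by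
      rw [interior_Icc] at hs
      rw [(hasD s).deriv]
      exact pos s hs.1
  have anti : AntitoneOn (Fint f) (Icc 0 b) :=
    antitoneOn_Icc_of_hasDerivAt contF.continuousOn (fun s _ => hasD s)
      fun s hs => nonpos s (Ioo_subset_Icc_self hs)
  have nonpos' : ∀ s ∈ Icc 0 β, Fint f s ≤ 0 := by
    intro s hs
    rcases le_total s b with h | h
    · rw [← prim_zero]
      exact anti (left_mem_Icc.mpr b_pos.le) ⟨hs.1, h⟩ hs.1
    · rw [← prim_β]
      exact (mono β).monotoneOn ⟨h, hs.2⟩ (right_mem_Icc.mpr b_lt.le) hs.2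
  have oddG : ∀ s, Fint f (-s) / f (-s) = -(Fint f s / f s) := fun s => by
    rw [prim_even, odd, div_neg]
  have diffG : ∀ s, β < s → DifferentiableAt ℝ (fun t => Fint f t / f t) s := fun s hs =>
    (hasD s).differentiableAt.div (h2.2.1 s (by linarith)) (pos s (by linarith)).ne'
  have leG : ∀ s, β < s → (k : ℝ) ≤ 2 * (k + 2) * deriv (fun t => Fint f t / f t) s := by
    intro s hs
    have := h4 s hs
    push_cast at this
    rw [div_le_iff₀ (by positivity)] at this
    linarith
  have negG : ∀ s, s < -β → HasDerivAt (fun t => Fint f t / f t)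
      (deriv (fun t => Fint f t / f t) (-s)) s := by
    intro s hs
    have h5 := ((diffG (-s) (by linarith)).hasDerivAt.comp s (hasDerivAt_neg s)).neg
    refine (h5.congr_of_eventuallyEq (Eventually.of_forall fun t => ?_)).congr_deriv (by simp)
    have := oddG (-t)
    rw [neg_neg] at this
    simpa using this
  refine ⟨hf, odd, b_pos, b_lt, pos, nonpos, hasD, prim_zero, prim_even, prim_β, ?_, ?_, ?_, ?_, ?_⟩
  · intro s hs
    rcases le_total 0 s with h | h
    · exact nonpos' s ⟨h, hs.2⟩
    · rw [← prim_even]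
      exact nonpos' (-s) ⟨by linarith, by linarith [hs.1]⟩
  · intro s hs
    rw [← prim_β]
    exact mono s ⟨b_lt.le, hs.le⟩ (right_mem_Icc.mpr (b_lt.trans hs).le) hs
  · intro s t hs hst
    have hd : ∀ x, β < x → DifferentiableAt ℝ f x := fun x hx => h2.2.1 x (by linarith)
    have := antitoneOn_Icc_of_hasDerivAt (a := s) (c := t) (g := fun x => f x / (x - β))
      (hf.continuousOn.div (continuousOn_id.sub continuousOn_const)
        fun x hx => by have := hs.trans_le hx.1; exact (sub_pos.mpr this).ne')
      (fun x hx => (hd x (hs.trans hx.1)).hasDerivAt.div ((hasDerivAt_id x).sub_const β)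
        (sub_pos.mpr (hs.trans hx.1)).ne')
      (fun x hx => div_nonpos_of_nonpos_of_nonneg
        (by have := h3 x (hs.trans hx.1).le; simp only [mul_one]; linarith) (sq_nonneg _))
      (left_mem_Icc.mpr hst) (right_mem_Icc.mpr hst) hst
    simp only at this
    rwa [div_le_div_iff₀ (by linarith) (by linarith)] at this
  · intro m
    refine ⟨contF.continuousOn.div hf.continuousOn fun s hs => (pos s (b_lt.trans_le hs.1)).ne',
      fun s hs => div_mul_cancel₀ _ (pos s (b_lt.trans_le hs.1)).ne',
      fun s hs => diffG s hs.1, fun s hs => leG s hs.1⟩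
  · intro m
    have hne : ∀ s ∈ Icc m (-β), f s ≠ 0 := fun s hs => by
      have := pos (-s) (by linarith [hs.2])
      rw [odd] at this
      linarith
    refine ⟨contF.continuousOn.div hf.continuousOn hne, fun s hs => div_mul_cancel₀ _ (hne s hs),
      fun s hs => (negG s hs.2).differentiableAt, fun s hs => ?_⟩
    rw [(negG s hs.2).deriv]
    exact leG (-s) (by linarith [hs.2])

end Paper

namespace Paper

/-! ### Comparison of two solutions through the second branch -/

/-- `v` decreases from `v 0 > β` to its first minimum `v T < -β`. -/
structure Descent (k : ℕ) (f : ℝ → ℝ) (β : ℝ) (v : ℝ → ℝ) (T : ℝ) : Prop where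
  sol : Sol k f v
  pos : 0 < T
  deriv_neg : ∀ x ∈ Ioo 0 T, deriv v x < 0
  deriv_eq : deriv v T = 0
  top : β < v 0
  bot : v T < -β

namespace Branch

variable {k : ℕ} {f r p r₁ p₁ r₂ p₂ : ℝ → ℝ} {a c a₁ a₂ m₁ m₂ b β : ℝ}

theorem monotoneOn_energy (B : Branch k f r p a c) (N : Nonlin k f b β) :
    MonotoneOn (fun s => p s ^ 2 + 2 * Fint f s) (Icc a c) := by
  have hFc : ContinuousOn (Fint f) (Icc a c) :=
    fun s _ => (N.hasDerivAt s).continuousAt.continuousWithinAt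
  refine monotoneOn_Icc_of_hasDerivAt ((B.cont_p.pow 2).add (hFc.const_smul (2 : ℝ)))
    (fun s hs => B.hasDerivAt_energy (N.hasDerivAt s) hs) fun s hs => ?_
  have := B.r_pos s hs
  have := B.p_pos s hs
  positivity

/-- Comparison of two second branches on `[β, m₁]`, from the data at the minima. -/
theorem slope_lt_second (N : Nonlin k f b β) (B₁ : Branch k f r₁ p₁ a₁ m₁)
    (B₂ : Branch k f r₂ p₂ a₂ m₂) (ha₁ : a₁ < β) (ha₂ : a₂ < β) (hβ : β < m₁) (hm : m₁ < m₂)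
    (hr₁ : 0 < r₁ m₁) (hr₂ : 0 < r₂ m₂) (hp₁ : p₁ m₁ = 0) (hp₂ : p₂ m₂ = 0)
    (hP : r₁ m₁ ^ (k + 2) * Fint f m₁ < r₂ m₂ ^ (k + 2) * Fint f m₂) :
    (∀ s ∈ Icc β m₁, p₁ s < p₂ s) ∧ (r₂ β ≤ r₁ β → r₁ β * p₁ β < r₂ β * p₂ β) := by
  have hFm : 0 < Fint f m₂ := N.prim_pos _ (hβ.trans hm)
  have mono := monotoneOn_poh (B₂.mono ha₂.le le_rfl) N.hasDerivAt (N.weight m₂)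
  have htop : m₂ ∈ Icc β m₂ := right_mem_Icc.mpr (hβ.trans hm).le
  have hval₂ : poh k (Fint f) (fun t => Fint f t / f t) r₂ p₂ m₂
      = -(2 * (r₂ m₂ ^ (k + 2) * Fint f m₂)) := by
    simp only [poh, hp₂]; ring
  have hval₁ : poh k (Fint f) (fun t => Fint f t / f t) r₁ p₁ m₁
      = -(2 * (r₁ m₁ ^ (k + 2) * Fint f m₁)) := by
    simp only [poh, hp₁]; ring
  have hpos : 0 < r₂ m₂ ^ (k + 2) * Fint f m₂ := by positivity
  refine slope_lt_of_poh_lt (B₁.mono ha₁.le le_rfl) (B₂.mono ha₂.le hm.le) N.hasDerivAt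
    (N.weight m₁) hβ (fun s hs => (N.pos s (N.b_lt.trans_le hs.1)).le) N.prim_β ?_ ?_ ?_ hp₁ ?_ ?_
    (B₁.p_pos β ⟨ha₁, hβ⟩) ?_
  · intro s hs
    rcases hs.1.lt_or_eq with h | h
    · exact (N.prim_pos s h).le
    · rw [← h, N.prim_β]
  · intro s hs
    have := mono ⟨hs.1, hs.2.trans hm.le⟩ htop (hs.2.trans hm.le)
    linarith
  · have := mono ⟨hβ.le, hm.le⟩ htop hm.le
    linarith
  · intro s hs
    rcases hs.2.lt_or_eq with h | h
    · exact B₁.r_pos s ⟨ha₁.trans_le hs.1, h⟩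
    · rwa [h]
  · exact fun s hs => B₂.r_pos s ⟨ha₂.trans_le hs.1, hs.2.trans_lt hm⟩
  · exact fun s hs => B₂.p_pos s ⟨ha₂.trans_le hs.1, hs.2.trans_lt hm⟩

/-- Below level `β`, the branches reach a level where their radii are in the reverse order while
the functionals `W` are ordered. -/
theorem exists_w_lt (N : Nonlin k f b β) {ε : ℝ} (B₁ : Branch k f r₁ p₁ ε m₁)
    (B₂ : Branch k f r₂ p₂ ε m₂) (hε : ε < β) (h₁ : β < m₁) (h₂ : β < m₂) (hr : 0 < r₁ ε)
    (hI : 0 ≤ p₁ ε ^ 2 + 2 * Fint f ε)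
    (hp : p₁ β < p₂ β) (hrp : r₂ β ≤ r₁ β → r₁ β * p₁ β < r₂ β * p₂ β)
    (hcross : (∀ s ∈ Icc ε β, p₁ s < p₂ s) → ∃ s ∈ Icc ε β, r₂ s < r₁ s) :
    ∃ σ ∈ Icc ε β, r₂ σ ≤ r₁ σ ∧ p₁ σ < p₂ σ ∧
      r₁ σ * √(p₁ σ ^ 2 + 2 * Fint f σ) < r₂ σ * √(p₂ σ ^ 2 + 2 * Fint f σ) := by
  rcases le_or_gt (r₂ β) (r₁ β) with h | h
  · refine ⟨β, ⟨hε.le, le_rfl⟩, h, hp, ?_⟩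
    have q₁ := B₁.p_pos β ⟨hε, h₁⟩
    have q₂ := B₂.p_pos β ⟨hε, h₂⟩
    rw [N.prim_β, mul_zero, add_zero, add_zero, Real.sqrt_sq q₁.le, Real.sqrt_sq q₂.le]
    exact hrp h
  have C₁ := B₁.mono le_rfl h₁.le
  have C₂ := B₂.mono le_rfl h₂.le
  obtain ⟨σ, hσ, h0, hle⟩ := exists_last_zero (g := fun s => r₁ s - r₂ s) (a := ε) (c := β)
    (C₁.cont_r.sub C₂.cont_r) (by simp [h.le]) (by
      intro hall
      obtain ⟨s, hs, hlt⟩ := hcross (slope_lt_of_radius_le C₁ C₂ hp fun s hs => by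
        have := hall s hs; linarith)
      have := hall s hs
      linarith)
  have hreq : r₁ σ = r₂ σ := by linarith
  have hpσ := slope_lt_of_radius_le (C₁.mono hσ.1 le_rfl) (C₂.mono hσ.1 le_rfl) hp
    (fun s hs => by have := hle s hs; linarith) σ ⟨le_rfl, hσ.2⟩
  have hr0 : 0 < r₁ σ := by
    rcases hσ.1.lt_or_eq with h | h
    · exact B₁.r_pos σ ⟨h, hσ.2.trans_lt h₁⟩
    · rwa [← h]
  refine ⟨σ, hσ, hreq.ge, hpσ, ?_⟩
  rw [← hreq]
  refine mul_lt_mul_of_pos_left (Real.sqrt_lt_sqrt ?_ ?_) hr0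
  · have := (B₁.monotoneOn_energy N) ⟨le_rfl, (hε.trans h₁).le⟩ ⟨hσ.1, hσ.2.trans h₁.le⟩ hσ.1
    simp only at this
    linarith
  · have := C₁.p_nonneg σ hσ
    nlinarith

end Branch

namespace Descent

variable {k : ℕ} {f v₁ v₂ : ℝ → ℝ} {b β T₁ T₂ : ℝ}

/-- The solution with the larger initial value has the deeper minimum, and the values of the
Pohozaev functional there are ordered. -/
theorem min_lt (N : Nonlin k f b β) (D₁ : Descent k f β v₁ T₁) (D₂ : Descent k f β v₂ T₂)
    (h0 : v₁ 0 < v₂ 0) :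
    v₂ T₂ < v₁ T₁ ∧
      T₁ ^ (k + 2) * Fint f (-v₁ T₁) < T₂ ^ (k + 2) * Fint f (-v₂ T₂) := by
  have hβ : 0 < β := N.b_pos.trans N.b_lt
  obtain ⟨r₁, p₁, B₁, left₁, right₁, hp₁⟩ := D₁.sol.exists_branch le_rfl D₁.pos D₁.deriv_neg
  obtain ⟨r₂, p₂, B₂, left₂, right₂, hp₂⟩ := D₂.sol.exists_branch le_rfl D₂.pos D₂.deriv_neg
  have anti₁ := D₁.sol.strictAntiOn le_rfl D₁.deriv_neg
  have m0₁ : (0 : ℝ) ∈ Icc 0 T₁ := ⟨le_rfl, D₁.pos.le⟩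
  have mT₁ : T₁ ∈ Icc 0 T₁ := ⟨D₁.pos.le, le_rfl⟩
  have mT₂ : T₂ ∈ Icc 0 T₂ := ⟨D₂.pos.le, le_rfl⟩
  have hlev : v₁ T₁ < v₁ 0 := anti₁ m0₁ mT₁ D₁.pos
  have top := D₁.top
  have bot₁ := D₁.bot
  have bot₂ := D₂.bot
  have hr : ∀ s ∈ Icc β (v₁ 0), r₁ s ≤ r₂ s := by
    intro s hs
    by_contra! hlt
    obtain ⟨x₁, e₁⟩ := right₁ s ⟨by linarith [hs.1], hs.2⟩
    obtain ⟨x₂, e₂⟩ := right₂ s ⟨by linarith [hs.1], by linarith [hs.2]⟩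
    have hlow : ∀ x ∈ Icc 0 (r₂ s), β < v₁ x := by
      intro x hx
      have := anti₁ ⟨hx.1, by linarith [hx.2, x₁.2]⟩ x₁ (by linarith [hx.2])
      linarith [hs.1]
    have h1 := D₁.sol.lt_of_superlinear D₂.sol N.superlinear h0 hlow (r₂ s) ⟨x₂.1, le_rfl⟩
    have h2 := anti₁ ⟨x₂.1, by linarith [x₁.2]⟩ x₁ hlt
    linarith
  have hFneg : Fint f (-β) = 0 := by rw [N.prim_even, N.prim_β]
  have hen := B₁.monotoneOn_energy N
  have hpT₁ : p₁ (v₁ T₁) = 0 := by rw [hp₁, left₁ _ mT₁, D₁.deriv_eq, neg_zero]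
  have hpT₂ : p₂ (v₂ T₂) = 0 := by rw [hp₂, left₂ _ mT₂, D₂.deriv_eq, neg_zero]
  have hF₁ : 0 < Fint f (v₁ T₁) := by
    rw [← N.prim_even]; exact N.prim_pos _ (by linarith)
  have hfneg : ∀ s, s ≤ -β → f s ≤ 0 := by
    intro s hs
    have := N.pos (-s) (by linarith [N.b_lt])
    rw [N.odd] at this
    linarith
  have hpc : p₁ (v₁ 0) < p₂ (v₁ 0) := by
    have e : p₁ (v₁ 0) = 0 := by rw [hp₁, left₁ _ m0₁, D₁.sol.deriv_zero, neg_zero]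
    rw [e]
    exact B₂.p_pos _ ⟨by linarith, h0⟩
  have main := fun (a : ℝ) (ha₁ : v₁ T₁ ≤ a) (ha₂ : v₂ T₂ ≤ a) (ha : a < -β) =>
    Branch.slope_lt_and_poh_lt (B₁.mono ha₁ le_rfl) (B₂.mono ha₂ h0.le) N.hasDerivAt
      (N.weight_neg a) ha hβ top hpc hr N.prim_nonpos hFneg (by simp [hFneg])
      (fun s hs => by
        have := hen ⟨le_rfl, hlev.le⟩ ⟨by linarith [hs.1], by linarith [hs.2]⟩
          (show v₁ T₁ ≤ s by linarith [hs.1])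
        simp only [hpT₁] at this
        nlinarith) fun s hs => hfneg s hs.2
  have hlt : v₂ T₂ < v₁ T₁ := by
    by_contra! hle
    have := (main (v₂ T₂) hle le_rfl bot₂).1
    rw [hpT₂] at this
    linarith [B₁.p_nonneg (v₂ T₂) ⟨hle, by linarith⟩]
  refine ⟨hlt, ?_⟩
  have hP := (main (v₁ T₁) le_rfl hlt.le bot₁).2
  have hmono := Branch.monotoneOn_poh (B₂.mono le_rfl (show -β ≤ v₂ 0 by linarith)) N.hasDerivAt
    (N.weight_neg _) ⟨le_rfl, bot₂.le⟩ ⟨hlt.le, bot₁.le⟩ hlt.le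
  rw [N.prim_even, N.prim_even]
  simp only [poh, hpT₁, hpT₂, left₁ _ mT₁, left₂ _ mT₂] at hP hmono
  linarith

end Descent

end Paper

namespace Paper

/-- `v` increases on `[T, X]` and reaches the levels `-b / 2` and `-ε` there, at radii `x` and `y`,
with bounds on the radii and slopes. -/
structure Ascent (b ε ρ R σ τ η : ℝ) (v : ℝ → ℝ) (T x y X : ℝ) : Prop where
  le_T : ρ ≤ T
  mid_mem : x ∈ Icc T X
  low_mem : y ∈ Ioo T X
  deriv_pos : ∀ t ∈ Ioo T X, 0 < deriv v t
  mid : v x = -(b / 2)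
  mid_le : x ≤ R
  le_slope : σ ≤ deriv v x
  slope_le : deriv v x ≤ τ
  low : v y = -ε
  low_slope : deriv v y ≤ η

/-- `η` forces two ordered branches to intersect: the conclusion of the threshold lemma. -/
def Threshold (k : ℕ) (f : ℝ → ℝ) (b ρ R σ τ η : ℝ) : Prop :=
  ∀ ⦃ε : ℝ⦄ ⦃r₁ p₁ r₂ p₂ : ℝ → ℝ⦄, 0 < ε → ε < b / 2 →
    Branch k f r₁ p₁ ε b → Branch k f r₂ p₂ ε b → (∀ s ∈ Icc ε b, 0 < p₁ s ∧ p₁ s < p₂ s) →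
    (∀ s ∈ Icc ε b, ρ ≤ r₁ s) → r₂ (b / 2) ≤ R → σ ≤ p₁ (b / 2) → p₂ (b / 2) ≤ τ → p₂ ε ≤ η →
    ∃ s ∈ Icc ε b, r₂ s < r₁ s

theorem Branch.strictMonoOn_energy {k : ℕ} {f r p : ℝ → ℝ} {a c b β : ℝ} (B : Branch k f r p a c)
    (N : Nonlin k f b β) : StrictMonoOn (fun s => p s ^ 2 + 2 * Fint f s) (Icc a c) := by
  have hFc : ContinuousOn (Fint f) (Icc a c) :=
    fun s _ => (N.hasDerivAt s).continuousAt.continuousWithinAt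
  refine strictMonoOn_of_deriv_pos (convex_Icc a c)
    ((B.cont_p.pow 2).add (hFc.const_smul (2 : ℝ))) fun s hs => ?_
  rw [interior_Icc] at hs
  rw [(B.hasDerivAt_energy (N.hasDerivAt s) hs).deriv]
  have := B.r_pos s hs
  have := B.p_pos s hs
  positivity

/-- The branch of `-v` over an interval `[T, X]` where `v` increases. -/
theorem Sol.exists_branch_neg {k : ℕ} {f v : ℝ → ℝ} {T X : ℝ} (S : Sol k f v)
    (hodd : ∀ s, f (-s) = -f s) (hT : 0 ≤ T) (hTX : T < X) (hpos : ∀ x ∈ Ioo T X, 0 < deriv v x) :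
    ∃ r p : ℝ → ℝ, Branch k f r p (-v X) (-v T) ∧ (∀ x ∈ Icc T X, r (-v x) = x) ∧
      (∀ s ∈ Icc (-v X) (-v T), r s ∈ Icc T X ∧ -v (r s) = s) ∧ ∀ s, p s = deriv v (r s) := by
  have hd : deriv (fun r => -v r) = fun r => -deriv v r := by
    funext r
    exact deriv.fun_neg
  obtain ⟨r, p, B, h1, h2, h3⟩ := (S.neg hodd).exists_branch hT hTX (by
    intro x hx
    rw [hd]
    simpa using hpos x hx)
  refine ⟨r, p, B, h1, h2, fun s => ?_⟩
  rw [h3, hd, neg_neg]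

theorem Sol.strictMonoOn {k : ℕ} {f v : ℝ → ℝ} (S : Sol k f v) {A B : ℝ} (hA : 0 ≤ A)
    (hpos : ∀ x ∈ Ioo A B, 0 < deriv v x) : StrictMonoOn v (Icc A B) := by
  refine strictMonoOn_of_deriv_pos (convex_Icc A B) (S.cont.mono fun _ hx => hA.trans hx.1) ?_
  rwa [interior_Icc]

namespace Descent

variable {k : ℕ} {f v₁ v₂ : ℝ → ℝ} {b β T₁ T₂ : ℝ}

/-- Separation of the second branches of two solutions near the level `0`. -/
theorem exists_separation (N : Nonlin k f b β) (D₁ : Descent k f β v₁ T₁)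
    (D₂ : Descent k f β v₂ T₂) (h0 : v₁ 0 < v₂ 0) {ε ρ R σ τ η x₁ y₁ X₁ x₂ y₂ X₂ : ℝ}
    (hε : 0 < ε) (hεb : ε < b / 2) (hthr : Threshold k f b ρ R σ τ η)
    (A₁ : Ascent b ε ρ R σ τ η v₁ T₁ x₁ y₁ X₁) (A₂ : Ascent b ε ρ R σ τ η v₂ T₂ x₂ y₂ X₂)
    (hE : 0 ≤ deriv v₁ y₁ ^ 2 + 2 * Fint f ε) :
    ∃ κ > 0, ∀ z₁ z₂, T₁ < z₁ → T₂ < z₂ → (∀ t ∈ Ioo T₁ z₁, 0 < deriv v₁ t) →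
      (∀ t ∈ Ioo T₂ z₂, 0 < deriv v₂ t) → v₁ z₁ = v₂ z₂ → -ε < v₁ z₁ → v₁ z₁ ≤ 0 →
      0 ≤ deriv v₁ z₁ ^ 2 + 2 * Fint f (-v₁ z₁) →
      deriv v₁ z₁ < deriv v₂ z₂ ∧ z₂ < z₁ ∧
        z₁ * √(deriv v₁ z₁ ^ 2 + 2 * Fint f (-v₁ z₁)) + κ
          ≤ z₂ * √(deriv v₂ z₂ ^ 2 + 2 * Fint f (-v₂ z₂)) := by
  have hb := N.b_pos
  have hbβ := N.b_lt
  have bot₁ := D₁.bot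
  have bot₂ := D₂.bot
  obtain ⟨hm, hP⟩ := D₁.min_lt N D₂ h0
  have hX₁ : T₁ < X₁ := A₁.low_mem.1.trans A₁.low_mem.2
  have hX₂ : T₂ < X₂ := A₂.low_mem.1.trans A₂.low_mem.2
  obtain ⟨r₁, p₁, B₁, left₁, right₁, hp₁⟩ :=
    D₁.sol.exists_branch_neg N.odd D₁.pos.le hX₁ A₁.deriv_pos
  obtain ⟨r₂, p₂, B₂, left₂, right₂, hp₂⟩ :=
    D₂.sol.exists_branch_neg N.odd D₂.pos.le hX₂ A₂.deriv_pos
  have mono₁ := D₁.sol.strictMonoOn D₁.pos.le A₁.deriv_pos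
  have mono₂ := D₂.sol.strictMonoOn D₂.pos.le A₂.deriv_pos
  have hlow₁ : -v₁ X₁ < ε := by
    have := mono₁ (Ioo_subset_Icc_self A₁.low_mem) ⟨hX₁.le, le_rfl⟩ A₁.low_mem.2
    rw [A₁.low] at this
    linarith
  have hlow₂ : -v₂ X₂ < ε := by
    have := mono₂ (Ioo_subset_Icc_self A₂.low_mem) ⟨hX₂.le, le_rfl⟩ A₂.low_mem.2
    rw [A₂.low] at this
    linarith
  have hT₁ : T₁ ∈ Icc T₁ X₁ := ⟨le_rfl, hX₁.le⟩
  have hT₂ : T₂ ∈ Icc T₂ X₂ := ⟨le_rfl, hX₂.le⟩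
  have hrε₁ : r₁ ε = y₁ := by
    have := left₁ y₁ (Ioo_subset_Icc_self A₁.low_mem); rwa [A₁.low, neg_neg] at this
  have hrε₂ : r₂ ε = y₂ := by
    have := left₂ y₂ (Ioo_subset_Icc_self A₂.low_mem); rwa [A₂.low, neg_neg] at this
  have hrb₁ : r₁ (b / 2) = x₁ := by have := left₁ x₁ A₁.mid_mem; rwa [A₁.mid, neg_neg] at this
  have hrb₂ : r₂ (b / 2) = x₂ := by have := left₂ x₂ A₂.mid_mem; rwa [A₂.mid, neg_neg] at this
  obtain ⟨hslope, hmom⟩ := Branch.slope_lt_second N B₁ B₂ (by linarith) (by linarith) (by linarith)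
    (by linarith) (by rw [left₁ _ hT₁]; exact D₁.pos) (by rw [left₂ _ hT₂]; exact D₂.pos)
    (by rw [hp₁, left₁ _ hT₁, D₁.deriv_eq]) (by rw [hp₂, left₂ _ hT₂, D₂.deriv_eq])
    (by rwa [left₁ _ hT₁, left₂ _ hT₂])
  obtain ⟨σ', hσ', hrσ, hpσ, hW⟩ := Branch.exists_w_lt N (B₁.mono hlow₁.le le_rfl)
    (B₂.mono hlow₂.le le_rfl) (by linarith) (by linarith) (by linarith)
    (by rw [hrε₁]; exact D₁.pos.trans A₁.low_mem.1) (by rwa [hp₁, hrε₁])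
    (hslope β ⟨le_rfl, by linarith⟩) hmom (by
      intro hlt
      obtain ⟨s, hs, h⟩ := hthr hε hεb (B₁.mono hlow₁.le (by linarith))
        (B₂.mono hlow₂.le (by linarith))
        (fun s hs => ⟨B₁.p_pos s ⟨hlow₁.trans_le hs.1, by linarith [hs.2]⟩,
          hlt s ⟨hs.1, hs.2.trans hbβ.le⟩⟩)
        (fun s hs => A₁.le_T.trans (right₁ s ⟨hlow₁.le.trans hs.1, by linarith [hs.2]⟩).1.1)
        (by rw [hrb₂]; exact A₂.mid_le) (by rw [hp₁, hrb₁]; exact A₁.le_slope)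
        (by rw [hp₂, hrb₂]; exact A₂.slope_le) (by rw [hp₂, hrε₂]; exact A₂.low_slope)
      exact ⟨s, ⟨hs.1, hs.2.trans hbβ.le⟩, h⟩)
  refine ⟨_, sub_pos.mpr hW, ?_⟩
  intro z₁ z₂ hz₁ hz₂ hd₁ hd₂ hv hvε hv0 hEz
  obtain ⟨r₁', p₁', B₁', left₁', -, hp₁'⟩ := D₁.sol.exists_branch_neg N.odd D₁.pos.le hz₁ hd₁
  obtain ⟨r₂', p₂', B₂', left₂', -, hp₂'⟩ := D₂.sol.exists_branch_neg N.odd D₂.pos.le hz₂ hd₂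
  have hagree₁ : r₁' σ' = r₁ σ' := by
    obtain ⟨h1, h2⟩ := right₁ σ' ⟨hlow₁.le.trans hσ'.1, by linarith [hσ'.2]⟩
    have : r₁ σ' ≤ z₁ := by
      by_contra! hlt
      linarith [mono₁ ⟨hz₁.le, hlt.le.trans h1.2⟩ h1 hlt, hσ'.1]
    have := left₁' (r₁ σ') ⟨h1.1, this⟩
    rwa [h2] at this
  have hagree₂ : r₂' σ' = r₂ σ' := by
    obtain ⟨h1, h2⟩ := right₂ σ' ⟨hlow₂.le.trans hσ'.1, by linarith [hσ'.2]⟩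
    have : r₂ σ' ≤ z₂ := by
      by_contra! hlt
      linarith [mono₂ ⟨hz₂.le, hlt.le.trans h1.2⟩ h1 hlt, hσ'.1]
    have := left₂' (r₂ σ') ⟨h1.1, this⟩
    rwa [h2] at this
  have hpagree₁ : p₁' σ' = p₁ σ' := by rw [hp₁', hp₁, hagree₁]
  have hpagree₂ : p₂' σ' = p₂ σ' := by rw [hp₂', hp₂, hagree₂]
  have hz₁m : z₁ ∈ Icc T₁ z₁ := ⟨hz₁.le, le_rfl⟩
  have hz₂m : z₂ ∈ Icc T₂ z₂ := ⟨hz₂.le, le_rfl⟩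
  have e₁ : r₁' (-v₁ z₁) = z₁ := left₁' _ hz₁m
  have e₂ : r₂' (-v₁ z₁) = z₂ := by rw [hv]; exact left₂' _ hz₂m
  have hlt : -v₁ z₁ < σ' := by linarith [hσ'.1]
  have key := Branch.w_sub_le (B₁'.mono le_rfl (show σ' ≤ _ by linarith [hσ'.2]))
    (B₂'.mono (show _ ≤ -v₁ z₁ by rw [hv]) (show σ' ≤ _ by linarith [hσ'.2])) N.hasDerivAt
    (fun s hs => N.prim_nonpos s ⟨by linarith [hs.1], hs.2.trans hσ'.2⟩)
    (fun s hs => by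
      have := B₁'.strictMonoOn_energy N ⟨le_rfl, by linarith [hσ'.2]⟩
        ⟨hs.1.le, by linarith [hs.2, hσ'.2]⟩ hs.1
      simp only [hp₁' (-v₁ z₁), e₁] at this
      linarith)
    (by rwa [hagree₁, hagree₂]) (by rwa [hpagree₁, hpagree₂])
    (by rwa [hagree₁, hagree₂, hpagree₁, hpagree₂]) (-v₁ z₁) ⟨le_rfl, hlt.le⟩
  rw [hp₁', hp₂', e₁, e₂, hagree₁, hagree₂, hpagree₁, hpagree₂] at key
  rw [← hv]
  exact ⟨key.1, key.2.1 hlt, key.2.2⟩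

end Descent

end Paper

namespace Paper

/-! ### The sets defining the zeros and extremal points -/

/-- The end points of the intervals starting at `T` on which `v` is negative and increasing. -/
def Rise (v : ℝ → ℝ) (T : ℝ) : Set ℝ := {r | T < r ∧ ∀ s ∈ Ioo T r, v s < 0 ∧ 0 < deriv v s}

theorem mem_rise_sSup {v : ℝ → ℝ} {T : ℝ} (hne : (Rise v T).Nonempty) (hb : BddAbove (Rise v T)) :
    sSup (Rise v T) ∈ Rise v T := by
  obtain ⟨r, hr⟩ := hne
  refine ⟨hr.1.trans_le (le_csSup hb hr), fun s hs => ?_⟩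
  obtain ⟨r', hr', hlt⟩ := exists_lt_of_lt_csSup ⟨r, hr⟩ hs.2
  exact hr'.2 s ⟨hs.1, hlt⟩

theorem forall_of_not_bddAbove_rise {v : ℝ → ℝ} {T : ℝ} (hb : ¬BddAbove (Rise v T)) :
    ∀ s, T < s → v s < 0 ∧ 0 < deriv v s := by
  intro s hs
  rw [not_bddAbove_iff] at hb
  obtain ⟨r, hr, hlt⟩ := hb s
  exact hr.2 s ⟨hs, hlt⟩

namespace Sol

variable {k : ℕ} {f v : ℝ → ℝ} {T Z : ℝ} {b β : ℝ}

theorem continuousAt (S : Sol k f v) {r : ℝ} (hr : 0 < r) : ContinuousAt v r :=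
  (S.hasDerivAt r hr).continuousAt

theorem continuousAt_deriv (S : Sol k f v) {r : ℝ} (hr : 0 < r) : ContinuousAt (deriv v) r :=
  (S.hasDerivAt_deriv r hr).continuousAt

theorem le_of_mem_rise (S : Sol k f v) (hT : 0 ≤ T) (hZ : Z ∈ Rise v T) :
    v Z ≤ 0 ∧ 0 ≤ deriv v Z := by
  have h0 : 0 < Z := hT.trans_lt hZ.1
  have hev : ∀ᶠ s in 𝓝[<] Z, v s < 0 ∧ 0 < deriv v s := by
    filter_upwards [Ioo_mem_nhdsLT hZ.1] with s hs using hZ.2 s hs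
  exact ⟨le_of_tendsto ((S.continuousAt h0).continuousWithinAt (s := Iio Z))
    (hev.mono fun s hs => hs.1.le),
    ge_of_tendsto ((S.continuousAt_deriv h0).continuousWithinAt (s := Iio Z))
    (hev.mono fun s hs => hs.2.le)⟩

theorem exists_gt_mem_rise (S : Sol k f v) (hT : 0 ≤ T) (hZ : Z ∈ Rise v T) (h1 : v Z < 0)
    (h2 : 0 < deriv v Z) : ∃ r ∈ Rise v T, Z < r := by
  have h0 : 0 < Z := hT.trans_lt hZ.1
  have hev : ∀ᶠ s in 𝓝 Z, v s < 0 ∧ 0 < deriv v s :=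
    ((S.continuousAt h0).eventually_lt_const h1).and
      ((S.continuousAt_deriv h0).eventually_const_lt h2)
  obtain ⟨d, hd, hball⟩ := Metric.eventually_nhds_iff.mp hev
  refine ⟨Z + d, ⟨by linarith [hZ.1], fun s hs => ?_⟩, by linarith⟩
  rcases lt_or_ge s Z with h | h
  · exact hZ.2 s ⟨hs.1, h⟩
  · exact hball (by rw [Real.dist_eq, abs_of_nonneg (by linarith)]; linarith [hs.2])

theorem eq_zero_or_of_sSup (S : Sol k f v) (hT : 0 ≤ T) (hne : (Rise v T).Nonempty)
    (hb : BddAbove (Rise v T)) : v (sSup (Rise v T)) = 0 ∨ deriv v (sSup (Rise v T)) = 0 := by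
  by_contra! h
  have hZ := mem_rise_sSup hne hb
  obtain ⟨h1, h2⟩ := S.le_of_mem_rise hT hZ
  obtain ⟨r, hr, hlt⟩ := S.exists_gt_mem_rise hT hZ (lt_of_le_of_ne h1 h.1)
    (lt_of_le_of_ne h2 h.2.symm)
  exact absurd (le_csSup hb hr) (not_le.mpr hlt)

theorem hasDerivAt_energy (S : Sol k f v) (N : Nonlin k f b β) {r : ℝ} (hr : 0 < r) :
    HasDerivAt (fun r => deriv v r ^ 2 + 2 * Fint f (v r)) (-(2 * (k + 1) / r * deriv v r ^ 2))
      r := by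
  have h1 := ((S.hasDerivAt_deriv r hr).pow 2).add
    (((N.hasDerivAt (v r)).comp r (S.hasDerivAt r hr)).const_mul 2)
  refine h1.congr_deriv ?_
  simp only [Nat.cast_ofNat, Nat.add_one_sub_one, pow_one]
  ring

theorem continuousOn_energy (S : Sol k f v) (N : Nonlin k f b β) :
    ContinuousOn (fun r => deriv v r ^ 2 + 2 * Fint f (v r)) (Ici 0) := by
  have hF : Continuous (Fint f) := continuous_iff_continuousAt.mpr fun s =>
    (N.hasDerivAt s).continuousAt
  exact (S.cont_deriv.pow 2).add ((hF.comp_continuousOn S.cont).const_smul (2 : ℝ))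

theorem antitoneOn_energy (S : Sol k f v) (N : Nonlin k f b β) :
    AntitoneOn (fun r => deriv v r ^ 2 + 2 * Fint f (v r)) (Ici 0) := by
  refine antitoneOn_of_deriv_nonpos (convex_Ici 0) (S.continuousOn_energy N) ?_ ?_
  · intro r hr
    rw [interior_Ici] at hr
    exact (S.hasDerivAt_energy N hr).differentiableAt.differentiableWithinAt
  · intro r hr
    rw [interior_Ici] at hr
    rw [(S.hasDerivAt_energy N hr).deriv]
    have : 0 < r := hr
    have : 0 ≤ 2 * (k + 1) / r * deriv v r ^ 2 := by positivity
    linarith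

theorem energy_lt (S : Sol k f v) (N : Nonlin k f b β) {A B : ℝ} (hA : 0 ≤ A) (hAB : A < B)
    (h : ∀ x ∈ Ioo A B, deriv v x ≠ 0) :
    deriv v B ^ 2 + 2 * Fint f (v B) < deriv v A ^ 2 + 2 * Fint f (v A) := by
  refine strictAntiOn_Icc_of_hasDerivAt
    ((S.continuousOn_energy N).mono fun x hx => hA.trans hx.1)
    (fun x hx => S.hasDerivAt_energy N (hA.trans_lt hx.1)) (fun x hx => ?_)
    (left_mem_Icc.mpr hAB.le) (right_mem_Icc.mpr hAB.le) hAB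
  have h1 := h x hx
  have h2 : 0 < x := hA.trans_lt hx.1
  have : 0 < 2 * (k + 1) / x * deriv v x ^ 2 := by positivity
  linarith

/-- A negative increasing solution on a half line converges. -/
theorem exists_tendsto (S : Sol k f v) (hT : 0 ≤ T)
    (h : ∀ s, T < s → v s < 0 ∧ 0 < deriv v s) : ∃ L ≤ 0, Tendsto v atTop (𝓝 L) := by
  have hmono : MonotoneOn v (Ici T) := by
    refine monotoneOn_of_deriv_nonneg (convex_Ici T) (S.cont.mono fun x hx => hT.trans hx) ?_ ?_
    · intro x hx
      rw [interior_Ici] at hx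
      exact (S.hasDerivAt x (hT.trans_lt hx)).differentiableAt.differentiableWithinAt
    · intro x hx
      rw [interior_Ici] at hx
      exact (h x hx).2.le
  have hm : Monotone fun x => v (max x T) := fun x y hxy =>
    hmono (mem_Ici.mpr (le_max_right _ _)) (mem_Ici.mpr (le_max_right _ _)) (max_le_max_right _ hxy)
  have hev : (fun x => v (max x T)) =ᶠ[atTop] v := by
    filter_upwards [eventually_ge_atTop T] with x hx
    rw [max_eq_left hx]
  have hneg : ∀ x, v (max x T) ≤ 0 := by
    intro x
    have := hm (show x ≤ max x T + 1 by linarith [le_max_left x T])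
    simp only at this
    rw [max_eq_left (a := max x T + 1) (by linarith [le_max_right x T])] at this
    exact this.trans (h _ (by linarith [le_max_right x T])).1.le
  have hb : BddAbove (range fun x => v (max x T)) := ⟨0, by rintro _ ⟨x, rfl⟩; exact hneg x⟩
  have hl := (tendsto_atTop_ciSup hm hb).congr' hev
  exact ⟨_, ciSup_le hneg, hl⟩

theorem tendsto_zero_of_limUnder (S : Sol k f v) (hT : 0 ≤ T)
    (h : ∀ s, T < s → v s < 0 ∧ 0 < deriv v s) (hlim : limUnder atTop v = 0) :
    Tendsto v atTop (𝓝 0) := by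
  obtain ⟨L, -, hL⟩ := S.exists_tendsto hT h
  rw [hL.limUnder_eq] at hlim
  rwa [hlim] at hL

/-- Near the level `0`, the derivative of an increasing solution is decreasing; hence it tends to
`0` when the solution does. -/
theorem tendsto_deriv_zero (S : Sol k f v) (N : Nonlin k f b β) (hT : 0 ≤ T)
    (h : ∀ s, T < s → v s < 0 ∧ 0 < deriv v s) (hlim : Tendsto v atTop (𝓝 0)) :
    Tendsto (deriv v) atTop (𝓝 0) := by
  obtain ⟨r₀, hr₀⟩ := eventually_atTop.mp
    (hlim.eventually_const_lt (show -b < 0 by linarith [N.b_pos]))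
  obtain ⟨M, hM⟩ : ∃ M, M = max r₀ (T + 1) := ⟨_, rfl⟩
  have hMT : T < M := by rw [hM]; linarith [le_max_right r₀ (T + 1)]
  have hMr : r₀ ≤ M := by rw [hM]; exact le_max_left _ _
  have hanti : AntitoneOn (deriv v) (Ici M) := by
    refine antitoneOn_of_deriv_nonpos (convex_Ici M)
      (S.cont_deriv.mono fun x hx => (hT.trans hMT.le).trans hx) ?_ ?_
    · intro x hx
      rw [interior_Ici] at hx
      exact (S.hasDerivAt_deriv x (by linarith [mem_Ioi.mp hx])).differentiableAt.differentiableWithinAt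
    · intro x hx
      rw [interior_Ici, mem_Ioi] at hx
      have hx0 : 0 < x := by linarith
      rw [(S.hasDerivAt_deriv x hx0).deriv]
      obtain ⟨h1, h2⟩ := h x (hMT.trans hx)
      have h3 := N.nonpos (-v x) ⟨by linarith, by linarith [hr₀ x (by linarith)]⟩
      rw [N.odd] at h3
      have : 0 ≤ (k + 1) / x * deriv v x := by positivity
      linarith
  have hbound : ∀ᶠ x in atTop, deriv v x ≤ v x - v (x - 1) := by
    filter_upwards [eventually_ge_atTop (M + 1)] with x hx
    obtain ⟨c, hc, hcd⟩ := exists_hasDerivAt_eq_slope v (deriv v) (show x - 1 < x by linarith)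
      (S.cont.mono fun y hy => mem_Ici.mpr (by linarith [hy.1]))
      fun y hy => S.hasDerivAt y (by linarith [hy.1])
    rw [sub_sub_cancel, div_one] at hcd
    rw [← hcd]
    exact hanti (show M ≤ c by linarith [hc.1]) (show M ≤ x by linarith) hc.2.le
  have hshift : Tendsto (fun x => v x - v (x - 1)) atTop (𝓝 0) := by
    have := hlim.sub (hlim.comp (tendsto_atTop_add_const_right atTop (-1 : ℝ) tendsto_id))
    simpa [Function.comp_def, sub_eq_add_neg] using this
  refine tendsto_of_tendsto_of_tendsto_of_le_of_le' tendsto_const_nhds hshift ?_ hbound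
  filter_upwards [eventually_gt_atTop T] with x hx using (h x hx).2.le

/-- The energy of a solution that tends to `0` is nonnegative. -/
theorem energy_nonneg_of_tendsto (S : Sol k f v) (N : Nonlin k f b β)
    (hlim : Tendsto v atTop (𝓝 0)) {x : ℝ} (hx : 0 ≤ x) :
    0 ≤ deriv v x ^ 2 + 2 * Fint f (v x) := by
  have hF : Tendsto (fun r => 2 * Fint f (v r)) atTop (𝓝 0) := by
    have h1 : Tendsto (Fint f) (𝓝 0) (𝓝 0) := by
      have := (N.hasDerivAt 0).continuousAt.tendsto
      rwa [N.prim_zero] at this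
    simpa using (h1.comp hlim).const_mul 2
  refine le_of_tendsto hF ?_
  filter_upwards [eventually_ge_atTop x] with r hr
  have := S.antitoneOn_energy N (mem_Ici.mpr hx) (mem_Ici.mpr (hx.trans hr)) hr
  simp only at this
  linarith [sq_nonneg (deriv v r)]

end Sol

end Paper

namespace Paper

theorem zsetK_one (u : ℝ → ℝ → ℝ) (α : ℝ) :
    ZsetK u 1 α = {r | 0 < r ∧ ∀ s ∈ Ioo 0 r, 0 < u α s ∧ deriv (u α) s < 0} := by
  have : ZsetK u 1 α = ZsetAux u 1 0 α := rfl
  rw [this]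
  simp [ZsetAux]

theorem zk_one (u : ℝ → ℝ → ℝ) (α : ℝ) : Zk u 1 α = sSup (ZsetK u 1 α) := rfl

theorem tk_one (u : ℝ → ℝ → ℝ) (α : ℝ) :
    Tk u 1 α = sInf {r | Zk u 1 α < r ∧ deriv (u α) r = 0} := rfl

theorem zsetK_two (u : ℝ → ℝ → ℝ) (α : ℝ) : ZsetK u 2 α = Rise (u α) (Tk u 1 α) := by
  have : ZsetK u 2 α = ZsetAux u 2 (Tk u 1 α) α := rfl
  rw [this]
  simp [ZsetAux, Rise]

theorem zk_two (u : ℝ → ℝ → ℝ) (α : ℝ) : Zk u 2 α = sSup (ZsetK u 2 α) := rfl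

theorem ftil_two (u : ℝ → ℝ → ℝ) (α : ℝ) :
    Ftil u 2 α ↔ ∀ r, Zk u 1 α < r → deriv (u α) r < 0 := by
  simp [Ftil]

theorem mem_Nk_two {u : ℝ → ℝ → ℝ} {α : ℝ} :
    α ∈ Nk u 2 ↔ α ∈ Nk u 1 ∧ ¬Ftil u 2 α ∧ uAtZ u 2 α = 0 ∧ 0 < duAtZ u 2 α := by
  have : α ∈ Nk u 2 ↔ α ∈ Nk u 1 ∧ ¬Ftil u 2 α ∧ uAtZ u 2 α = 0 ∧
    0 < (-1 : ℝ) ^ 2 * duAtZ u 2 α := Iff.rfl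
  rw [this]
  simp

theorem mem_Gk_two {u : ℝ → ℝ → ℝ} {α : ℝ} :
    α ∈ Gk u 2 ↔ α ∈ Nk u 1 ∧ ¬Ftil u 2 α ∧ uAtZ u 2 α = 0 ∧ duAtZ u 2 α = 0 := Iff.rfl

theorem mem_Fk_two {u : ℝ → ℝ → ℝ} {α : ℝ} :
    α ∈ Fk u 2 ↔ α ∈ Nk u 1 ∧ ¬Ftil u 2 α ∧ uAtZ u 2 α < 0 := by
  have : α ∈ Fk u 2 ↔ α ∈ Nk u 1 ∧ ¬Ftil u 2 α ∧ (-1 : ℝ) ^ 2 * uAtZ u 2 α < 0 := Iff.rfl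
  rw [this]
  simp

theorem Family.sol {k : ℕ} {f : ℝ → ℝ} {u : ℝ → ℝ → ℝ} (hu : Family (k + 2) f u) {α : ℝ}
    (hα : 0 < α) : Sol k f (u α) := by
  obtain ⟨-, hd, hc, hdiff, heq⟩ := hu.1 α hα
  refine ⟨hc, ?_, hd, fun r hr => (hdiff r hr).1.hasDerivAt, fun r hr => ?_⟩
  · exact hu.2.2.comp (f := fun r : ℝ => (α, r)) (by fun_prop) fun r hr => ⟨hα, hr⟩
  · refine (hdiff r hr).2.hasDerivAt.congr_deriv ?_
    have := heq r hr
    push_cast at this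
    rw [show (k : ℝ) + 2 - 1 = k + 1 by ring] at this
    linarith

namespace Descent

variable {k : ℕ} {f v : ℝ → ℝ} {u : ℝ → ℝ → ℝ} {b β T α : ℝ}

theorem mem_Nk_one_and (N : Nonlin k f b β) (D : Descent k f β (u α) T) (hα : 0 < α) :
    α ∈ Nk u 1 ∧ ¬Ftil u 2 α ∧ Tk u 1 α = T := by
  have hβ : 0 < β := N.b_pos.trans N.b_lt
  have anti := D.sol.strictAntiOn le_rfl D.deriv_neg
  have top := D.top
  have bot := D.bot
  obtain ⟨z, hz, hz0⟩ : (0 : ℝ) ∈ u α '' Icc 0 T :=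
    intermediate_value_Icc' D.pos.le (D.sol.cont.mono Icc_subset_Ici_self)
      ⟨by linarith, by linarith⟩
  have hz1 : 0 < z := hz.1.lt_of_ne fun h => by rw [← h] at hz0; linarith
  have hz2 : z < T := hz.2.lt_of_ne fun h => by rw [h] at hz0; linarith
  have hset : ZsetK u 1 α = Ioc 0 z := by
    rw [zsetK_one]
    ext r
    refine ⟨fun hr => ⟨hr.1, ?_⟩, fun hr => ⟨hr.1, fun s hs => ⟨?_, ?_⟩⟩⟩
    · by_contra! h
      have := (hr.2 z ⟨hz1, h⟩).1
      linarith
    · have := anti ⟨hs.1.le, by linarith [hs.2, hr.2]⟩ hz (hs.2.trans_le hr.2)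
      linarith
    · exact D.deriv_neg s ⟨hs.1, by linarith [hs.2, hr.2]⟩
  have hbdd : BddAbove (ZsetK u 1 α) := by rw [hset]; exact bddAbove_Ioc
  have hZ : Zk u 1 α = z := by rw [zk_one, hset, csSup_Ioc hz1]
  refine ⟨⟨hα, ?_, ?_⟩, ?_, ?_⟩
  · rw [uAtZ, if_pos hbdd, hZ, hz0]
  · rw [duAtZ, if_pos hbdd, hZ]
    exact D.deriv_neg z ⟨hz1, hz2⟩
  · rw [ftil_two, hZ]
    intro h
    have := h T hz2
    rw [D.deriv_eq] at this
    exact lt_irrefl _ this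
  · rw [tk_one, hZ]
    refine IsLeast.csInf_eq ⟨⟨hz2, D.deriv_eq⟩, fun r hr => ?_⟩
    by_contra! h
    have := D.deriv_neg r ⟨hz1.trans hr.1, h⟩
    rw [hr.2] at this
    exact lt_irrefl _ this

theorem rise_nonempty (N : Nonlin k f b β) (D : Descent k f β v T) : (Rise v T).Nonempty := by
  have hβ : 0 < β := N.b_pos.trans N.b_lt
  have bot := D.bot
  have hd : 0 < deriv (deriv v) T := by
    rw [(D.sol.hasDerivAt_deriv T D.pos).deriv, D.deriv_eq]
    have := N.pos (-v T) (by linarith [N.b_lt])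
    rw [N.odd] at this
    linarith
  have hev := (eventually_nhdsWithin_sign_eq_of_deriv_pos hd D.deriv_eq).and
    ((D.sol.continuousAt D.pos).eventually_lt_const (show v T < 0 by linarith))
  obtain ⟨d, hd0, hball⟩ := Metric.eventually_nhds_iff.mp hev
  refine ⟨T + d, by linarith, fun s hs => ?_⟩
  obtain ⟨h1, h2⟩ := hball (y := s)
    (by rw [Real.dist_eq, abs_of_pos (by linarith [hs.1])]; linarith [hs.2])
  rw [sign_pos (show 0 < s - T by linarith [hs.1])] at h1
  exact ⟨h2, sign_eq_one_iff.mp h1⟩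

theorem rise_eq (N : Nonlin k f b β) (D : Descent k f β (u α) T) (hα : 0 < α) :
    ZsetK u 2 α = Rise (u α) T := by
  rw [zsetK_two, (D.mem_Nk_one_and N hα).2.2]

theorem exists_of_mem_Gk (N : Nonlin k f b β) (S : Sol k f (u α)) (h0 : u α 0 = α)
    (h : α ∈ Gk u 2) : ∃ T, Descent k f β (u α) T := by
  obtain ⟨⟨hα, hz0, hz1⟩, hF, hZ0, hZ1⟩ := mem_Gk_two.mp h
  rw [ftil_two] at hF
  have hb1 : BddAbove (ZsetK u 1 α) := by
    by_contra hb
    refine hF fun r hr => ?_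
    rw [zk_one, Real.sSup_of_not_bddAbove hb] at hr
    rw [zsetK_one, not_bddAbove_iff] at hb
    obtain ⟨r', hr', hlt⟩ := hb r
    exact (hr'.2 r ⟨hr, hlt⟩).2
  rw [uAtZ, if_pos hb1] at hz0
  rw [duAtZ, if_pos hb1] at hz1
  obtain ⟨z, hz⟩ : ∃ z, z = Zk u 1 α := ⟨_, rfl⟩
  have htk := tk_one u α
  rw [← hz] at hz0 hz1 hF htk
  have hne1 : (ZsetK u 1 α).Nonempty := by
    by_contra hne
    rw [not_nonempty_iff_eq_empty] at hne
    rw [zk_one, hne, Real.sSup_empty] at hz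
    rw [hz, h0] at hz0
    exact hα.ne' hz0
  have hdown : ∀ s ∈ Ioo 0 z, 0 < u α s ∧ deriv (u α) s < 0 := by
    intro s hs
    rw [hz, zk_one] at hs
    obtain ⟨r, hr, hlt⟩ := exists_lt_of_lt_csSup hne1 hs.2
    rw [zsetK_one] at hr
    exact hr.2 s ⟨hs.1, hlt⟩
  have hzpos : 0 < z := by
    obtain ⟨r, hr⟩ := hne1
    have := le_csSup hb1 hr
    rw [← zk_one, ← hz] at this
    rw [zsetK_one] at hr
    exact hr.1.trans_le this
  push Not at hF
  obtain ⟨q, hq, hq0⟩ := hF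
  have hroot : ∀ x, z < x → 0 ≤ deriv (u α) x → ∃ y ∈ Icc z x, deriv (u α) y = 0 := fun x hx hx0 =>
    intermediate_value_Icc hx.le (S.cont_deriv.mono fun y hy => hzpos.le.trans hy.1) ⟨hz1.le, hx0⟩
  obtain ⟨A, hA⟩ : ∃ A, A = {r | z < r ∧ deriv (u α) r = 0} := ⟨_, rfl⟩
  have hAr : ∀ y, z ≤ y → deriv (u α) y = 0 → y ∈ A := by
    intro y hy hy0
    rw [hA]
    exact ⟨hy.lt_of_ne fun h => by rw [h, hy0] at hz1; exact lt_irrefl _ hz1, hy0⟩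
  have hAeq : A = Ici z ∩ deriv (u α) ⁻¹' {0} := by
    ext y
    refine ⟨fun hy => ?_, fun hy => hAr y hy.1 hy.2⟩
    rw [hA] at hy
    exact ⟨hy.1.le, hy.2⟩
  have hAcl : IsClosed A := by
    rw [hAeq]
    exact (S.cont_deriv.mono fun y hy => hzpos.le.trans hy).preimage_isClosed_of_isClosed
      isClosed_Ici isClosed_singleton
  have hAne : A.Nonempty := by
    obtain ⟨y, hy, hy0⟩ := hroot q hq hq0
    exact ⟨y, hAr y hy.1 hy0⟩
  have hAb : BddBelow A := ⟨z, fun y hy => by rw [hAeq] at hy; exact hy.1⟩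
  obtain ⟨T, hT⟩ : ∃ T, T = Tk u 1 α := ⟨_, rfl⟩
  rw [← hT, ← hA] at htk
  have hTA : T ∈ A := htk ▸ hAcl.csInf_mem hAne hAb
  have hTz : z < T ∧ deriv (u α) T = 0 := by rw [hA] at hTA; exact hTA
  have hTpos : 0 < T := hzpos.trans hTz.1
  have hneg : ∀ x ∈ Ioo 0 T, deriv (u α) x < 0 := by
    intro x hx
    rcases lt_trichotomy x z with h | h | h
    · exact (hdown x ⟨hx.1, h⟩).2
    · rwa [h]
    · by_contra! hx0
      obtain ⟨y, hy, hy0⟩ := hroot x h hx0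
      have := csInf_le hAb (hAr y hy.1 hy0)
      rw [← htk] at this
      linarith [hy.2, hx.2]
  have hTneg : u α T < 0 := by
    have := S.strictAntiOn le_rfl hneg ⟨hzpos.le, hTz.1.le⟩ ⟨hTpos.le, le_rfl⟩ hTz.1
    linarith
  have hE : 0 < deriv (u α) T ^ 2 + 2 * Fint f (u α T) := by
    have hset := zsetK_two u α
    rw [← hT] at hset
    by_cases hb2 : BddAbove (ZsetK u 2 α)
    · rw [uAtZ, if_pos hb2] at hZ0
      rw [duAtZ, if_pos hb2] at hZ1
      have hne2 : (ZsetK u 2 α).Nonempty := by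
        by_contra hne
        rw [not_nonempty_iff_eq_empty] at hne
        rw [zk_two, hne, Real.sSup_empty, h0] at hZ0
        exact hα.ne' hZ0
      rw [zk_two, hset] at hZ0 hZ1
      rw [hset] at hb2 hne2
      have hm := mem_rise_sSup hne2 hb2
      have := S.energy_lt N hTpos.le hm.1 fun x hx => (hm.2 x hx).2.ne'
      rwa [hZ0, hZ1, N.prim_zero, mul_zero, add_zero, zero_pow two_ne_zero] at this
    · rw [uAtZ, if_neg hb2] at hZ0
      rw [hset] at hb2
      have hall := forall_of_not_bddAbove_rise hb2
      have h1 := S.energy_nonneg_of_tendsto N (S.tendsto_zero_of_limUnder hTpos.le hall hZ0)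
        (show 0 ≤ T + 1 by linarith)
      have h2 := S.energy_lt N hTpos.le (show T < T + 1 by linarith)
        fun x hx => (hall x hx.1).2.ne'
      linarith
  have hβ : 0 < β := N.b_pos.trans N.b_lt
  have hE0 : 0 < deriv (u α) 0 ^ 2 + 2 * Fint f (u α 0) :=
    hE.trans (S.energy_lt N le_rfl hTpos fun x hx => (hneg x hx).ne)
  rw [hTz.2] at hE
  rw [S.deriv_zero] at hE0
  refine ⟨T, S, hTpos, hneg, hTz.2, ?_, ?_⟩
  · by_contra! hle
    have := N.prim_nonpos (u α 0) ⟨by linarith, hle⟩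
    linarith
  · by_contra! hle
    have := N.prim_nonpos (u α T) ⟨hle, by linarith⟩
    linarith

end Descent

end Paper

namespace Paper

/-- A function on a half line whose derivative is at least `κ / r` is unbounded. -/
theorem exists_nonneg_of_le_deriv {v v' : ℝ → ℝ} {M κ : ℝ} (hM : 0 < M) (hκ : 0 < κ)
    (hd : ∀ r, M ≤ r → HasDerivAt v (v' r) r) (hle : ∀ r, M ≤ r → κ ≤ r * v' r) :
    ∃ r, M ≤ r ∧ 0 ≤ v r := by
  have hmono : MonotoneOn (fun r => v r - κ * Real.log r) (Ici M) := by
    have hder : ∀ r, M ≤ r → HasDerivAt (fun r => v r - κ * Real.log r) (v' r - κ * r⁻¹) r :=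
      fun r hr => (hd r hr).sub ((Real.hasDerivAt_log (hM.trans_le hr).ne').const_mul κ)
    refine monotoneOn_of_deriv_nonneg (convex_Ici M)
      (fun r hr => (hder r hr).continuousAt.continuousWithinAt)
      (fun r hr => (hder r (interior_subset hr)).differentiableAt.differentiableWithinAt)
      fun r hr => ?_
    have hr' : M ≤ r := interior_subset hr
    have hr0 : 0 < r := hM.trans_le hr'
    rw [(hder r hr').deriv, sub_nonneg, ← div_eq_mul_inv, div_le_iff₀ hr0]
    linarith [hle r hr']
  have htop : Tendsto (fun r => v M - κ * Real.log M + κ * Real.log r) atTop atTop :=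
    tendsto_atTop_add_const_left _ _ (Real.tendsto_log_atTop.const_mul_atTop hκ)
  obtain ⟨r, hr, hrM⟩ := ((htop.eventually_ge_atTop 0).and (eventually_ge_atTop M)).exists
  refine ⟨r, hrM, ?_⟩
  have := hmono (mem_Ici.mpr le_rfl) (mem_Ici.mpr hrM) hrM
  simp only at this
  linarith

theorem sqrt_sq_add_le {p A : ℝ} (hp : 0 ≤ p) (hA : A ≤ 0) : √(p ^ 2 + 2 * A) ≤ p :=
  Real.sqrt_le_iff.mpr ⟨hp, by linarith⟩

namespace Descent

variable {k : ℕ} {f : ℝ → ℝ} {u : ℝ → ℝ → ℝ} {b β T₁ T₂ α₁ α₂ : ℝ}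

/-- The comparison of the second zeros of two solutions. -/
theorem mem_Nk_and_lt (N : Nonlin k f b β) (D₁ : Descent k f β (u α₁) T₁)
    (D₂ : Descent k f β (u α₂) T₂) (h0 : u α₁ 0 < u α₂ 0) (hα₁ : 0 < α₁) (hα₂ : 0 < α₂)
    {ε ρ R σ τ η x₁ y₁ X₁ x₂ y₂ X₂ : ℝ}
    (hε : 0 < ε) (hεb : ε < b / 2) (hthr : Threshold k f b ρ R σ τ η)
    (A₁ : Ascent b ε ρ R σ τ η (u α₁) T₁ x₁ y₁ X₁) (A₂ : Ascent b ε ρ R σ τ η (u α₂) T₂ x₂ y₂ X₂)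
    (hu : uAtZ u 2 α₁ = 0) (hdu : 0 ≤ duAtZ u 2 α₁) :
    α₂ ∈ Nk u 2 ∧ ZkE u 2 α₂ < ZkE u 2 α₁ ∧ |duAtZ u 2 α₁| < |duAtZ u 2 α₂| := by
  have S₁ := D₁.sol
  have S₂ := D₂.sol
  have hb := N.b_pos
  have hbβ := N.b_lt
  obtain ⟨hN₂, hF₂, hTk₂⟩ := D₂.mem_Nk_one_and N hα₂
  have hset₁ := D₁.rise_eq N hα₁
  have hset₂ := D₂.rise_eq N hα₂
  have hne₁ := D₁.rise_nonempty N
  have hne₂ := D₂.rise_nonempty N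
  have bot₁ := D₁.bot
  have hT₁ := D₁.pos
  have hT₂ := D₂.pos
  obtain ⟨hEy, hreach⟩ : 0 ≤ deriv (u α₁) y₁ ^ 2 + 2 * Fint f ε ∧
      ∀ s, -ε < s → s < 0 → ∃ z, T₁ < z ∧ (∀ t ∈ Ioo T₁ z, 0 < deriv (u α₁) t) ∧ u α₁ z = s ∧
        0 ≤ deriv (u α₁) z ^ 2 + 2 * Fint f (-u α₁ z) := by
    have hy₁ : 0 < y₁ := hT₁.trans A₁.low_mem.1
    by_cases hbd : BddAbove (Rise (u α₁) T₁)
    · rw [uAtZ, hset₁, if_pos hbd, zk_two, hset₁] at hu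
      have hZ := mem_rise_sSup hne₁ hbd
      obtain ⟨Z, hZd⟩ : ∃ Z, Z = sSup (Rise (u α₁) T₁) := ⟨_, rfl⟩
      rw [← hZd] at hu hZ
      have hE : ∀ x, 0 ≤ x → x ≤ Z → 0 ≤ deriv (u α₁) x ^ 2 + 2 * Fint f (u α₁ x) := by
        intro x hx hxZ
        have := S₁.antitoneOn_energy N (mem_Ici.mpr hx) (mem_Ici.mpr (hx.trans hxZ)) hxZ
        simp only [hu, N.prim_zero] at this
        nlinarith [sq_nonneg (deriv (u α₁) Z)]
      constructor
      · have hyZ : y₁ ≤ Z := by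
          by_contra! hlt
          have := S₁.strictMonoOn hT₁.le A₁.deriv_pos ⟨hZ.1.le, hlt.le.trans A₁.low_mem.2.le⟩
            (Ioo_subset_Icc_self A₁.low_mem) hlt
          rw [hu, A₁.low] at this
          linarith
        have := hE y₁ hy₁.le hyZ
        rwa [A₁.low, N.prim_even] at this
      · intro s hs hs0
        obtain ⟨z, hz, hzs⟩ : s ∈ u α₁ '' Icc T₁ Z :=
          intermediate_value_Icc hZ.1.le (S₁.cont.mono fun x hx => hT₁.le.trans hx.1)
            ⟨by linarith, by rw [hu]; exact hs0.le⟩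
        refine ⟨z, hz.1.lt_of_ne fun h => ?_, fun t ht => (hZ.2 t ⟨ht.1, ht.2.trans_le hz.2⟩).2,
          hzs, ?_⟩
        · rw [← h] at hzs; linarith
        · rw [N.prim_even]; exact hE z (hT₁.le.trans hz.1) hz.2
    · rw [uAtZ, hset₁, if_neg hbd] at hu
      have hall := forall_of_not_bddAbove_rise hbd
      have hlim := S₁.tendsto_zero_of_limUnder hT₁.le hall hu
      constructor
      · have := S₁.energy_nonneg_of_tendsto N hlim hy₁.le
        rwa [A₁.low, N.prim_even] at this
      · intro s hs hs0
        obtain ⟨r, hr, hrT⟩ := ((hlim.eventually_const_lt hs0).and (eventually_gt_atTop T₁)).exists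
        obtain ⟨z, hz, hzs⟩ : s ∈ u α₁ '' Icc T₁ r :=
          intermediate_value_Icc hrT.le (S₁.cont.mono fun x hx => hT₁.le.trans hx.1)
            ⟨by linarith, hr.le⟩
        refine ⟨z, hz.1.lt_of_ne fun h => ?_, fun t ht => (hall t ht.1).2, hzs, ?_⟩
        · rw [← h] at hzs; linarith
        · rw [N.prim_even]; exact S₁.energy_nonneg_of_tendsto N hlim (hT₁.le.trans hz.1)
  obtain ⟨κ, hκ, hsep⟩ := D₁.exists_separation N D₂ h0 hε hεb hthr A₁ A₂ hEy
  have hsep₂ : ∀ z, T₂ < z → (∀ t ∈ Ioo T₂ z, 0 < deriv (u α₂) t) → -ε < u α₂ z → u α₂ z < 0 →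
      κ ≤ z * √(deriv (u α₂) z ^ 2 + 2 * Fint f (-u α₂ z)) := by
    intro z hz hd h1 h2
    obtain ⟨z₁, hz₁, hd₁, hv, hE⟩ := hreach _ h1 h2
    have := (hsep z₁ z hz₁ hz hd₁ hd hv (hv ▸ h1) (hv ▸ h2.le) hE).2.2
    have hz0 : 0 < z₁ := hT₁.trans hz₁
    have : 0 ≤ z₁ * √(deriv (u α₁) z₁ ^ 2 + 2 * Fint f (-u α₁ z₁)) := by positivity
    linarith
  have hFneg : ∀ z, -ε < u α₂ z → u α₂ z ≤ 0 → Fint f (-u α₂ z) ≤ 0 := fun z h1 h2 =>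
    N.prim_nonpos _ ⟨by linarith, by linarith⟩
  have hy₂ : 0 < y₂ := hT₂.trans A₂.low_mem.1
  have habove : ∀ z, y₂ < z → (∀ t ∈ Ioo T₂ z, 0 < deriv (u α₂) t) → -ε < u α₂ z := by
    intro z hz hd
    have := S₂.strictMonoOn hT₂.le hd ⟨A₂.low_mem.1.le, hz.le⟩
      ⟨(A₂.low_mem.1.trans hz).le, le_rfl⟩ hz
    rwa [A₂.low] at this
  have hmom : ∀ z, y₂ < z → (∀ t ∈ Ioo T₂ z, 0 < deriv (u α₂) t) → u α₂ z < 0 →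
      0 ≤ deriv (u α₂) z → κ ≤ z * deriv (u α₂) z := by
    intro z hz hd h2 h3
    have h1 := habove z hz hd
    refine (hsep₂ z (A₂.low_mem.1.trans hz) hd h1 h2).trans ?_
    exact mul_le_mul_of_nonneg_left (sqrt_sq_add_le h3 (hFneg z h1 h2.le)) (hy₂.trans hz).le
  have hbd₂ : BddAbove (Rise (u α₂) T₂) := by
    by_contra hbd
    have hall := forall_of_not_bddAbove_rise hbd
    obtain ⟨r, hr, hr0⟩ := exists_nonneg_of_le_deriv (v := u α₂) (v' := deriv (u α₂))
      (M := y₂ + 1) (by linarith) hκ (fun r hr => S₂.hasDerivAt r (by linarith)) fun r hr =>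
        hmom r (by linarith) (fun t ht => (hall t ht.1).2)
          (hall r (by linarith [A₂.low_mem.1])).1 (hall r (by linarith [A₂.low_mem.1])).2.le
    linarith [(hall r (by linarith [A₂.low_mem.1])).1]
  have hZ := mem_rise_sSup hne₂ hbd₂
  have hdich := S₂.eq_zero_or_of_sSup hT₂.le hne₂ hbd₂
  obtain ⟨Z, hZd⟩ : ∃ Z, Z = sSup (Rise (u α₂) T₂) := ⟨_, rfl⟩
  rw [← hZd] at hZ hdich
  have hdZ : ∀ t ∈ Ioo T₂ Z, 0 < deriv (u α₂) t := fun t ht => (hZ.2 t ht).2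
  obtain ⟨hle, hge⟩ := S₂.le_of_mem_rise hT₂.le hZ
  have hZy : y₂ < Z := by
    by_contra! h
    have h1 := (S₂.strictMonoOn hT₂.le A₂.deriv_pos).monotoneOn
      ⟨hZ.1.le, h.trans A₂.low_mem.2.le⟩ (Ioo_subset_Icc_self A₂.low_mem) h
    have h2 := A₂.deriv_pos Z ⟨hZ.1, h.trans_lt A₂.low_mem.2⟩
    rw [A₂.low] at h1
    rcases hdich with h | h <;> linarith
  have hZ0 : 0 < Z := hy₂.trans hZy
  have hvZ : u α₂ Z = 0 := by
    by_contra hne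
    have hlt := lt_of_le_of_ne hle hne
    have h1 := hmom Z hZy hdZ hlt hge
    rw [hdich.resolve_left hne, mul_zero] at h1
    linarith
  have hdvZ : 0 < deriv (u α₂) Z := by
    have hcont : Tendsto (fun z => z * deriv (u α₂) z) (𝓝[<] Z) (𝓝 (Z * deriv (u α₂) Z)) :=
      (continuousAt_id.mul (S₂.continuousAt_deriv hZ0)).continuousWithinAt
    have : κ ≤ Z * deriv (u α₂) Z := by
      refine ge_of_tendsto hcont ?_
      filter_upwards [Ioo_mem_nhdsLT hZy] with z hz
      obtain ⟨h1, h2⟩ := hZ.2 z ⟨A₂.low_mem.1.trans hz.1, hz.2⟩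
      exact hmom z hz.1 (fun t ht => hdZ t ⟨ht.1, ht.2.trans hz.2⟩) h1 h2.le
    exact (pos_iff_pos_of_mul_pos (hκ.trans_le this)).mp hZ0
  have hzk : Zk u 2 α₂ = Z := by rw [zk_two, hset₂, hZd]
  have hu₂ : uAtZ u 2 α₂ = 0 := by rw [uAtZ, hset₂, if_pos hbd₂, hzk, hvZ]
  have hdu₂ : duAtZ u 2 α₂ = deriv (u α₂) Z := by rw [duAtZ, hset₂, if_pos hbd₂, hzk]
  have hze₂ : ZkE u 2 α₂ = (Z : WithTop ℝ) := by rw [ZkE, hset₂, if_pos hbd₂, hzk]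
  refine ⟨mem_Nk_two.mpr ⟨hN₂, hF₂, hu₂, hdu₂ ▸ hdvZ⟩, ?_⟩
  rw [abs_of_nonneg hdu, hdu₂, abs_of_pos hdvZ, hze₂]
  by_cases hbd : BddAbove (Rise (u α₁) T₁)
  · rw [uAtZ, hset₁, if_pos hbd, zk_two, hset₁] at hu
    rw [ZkE, duAtZ, hset₁, if_pos hbd, if_pos hbd, zk_two, hset₁]
    have hZ₁ := mem_rise_sSup hne₁ hbd
    have := hsep (sSup (Rise (u α₁) T₁)) Z hZ₁.1 hZ.1 (fun t ht => (hZ₁.2 t ht).2) hdZ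
      (hu.trans hvZ.symm) (by rw [hu]; linarith) hu.le (by
        rw [hu, neg_zero, N.prim_zero, mul_zero, add_zero]; positivity)
    exact ⟨WithTop.coe_lt_coe.mpr this.2.1, this.1⟩
  · rw [uAtZ, hset₁, if_neg hbd] at hu
    rw [ZkE, duAtZ, hset₁, if_neg hbd, if_neg hbd]
    have hall := forall_of_not_bddAbove_rise hbd
    have hlim := S₁.tendsto_deriv_zero N hT₁.le hall (S₁.tendsto_zero_of_limUnder hT₁.le hall hu)
    exact ⟨WithTop.coe_lt_top _, by rw [hlim.limUnder_eq]; exact hdvZ⟩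

/-- After its first minimum, a solution falls in one of the three classes. -/
theorem trichotomy (N : Nonlin k f b β) (D : Descent k f β (u α₁) T₁) (hα : 0 < α₁) :
    α₁ ∈ Gk u 2 ∨ α₁ ∈ Nk u 2 ∨ α₁ ∈ Fk u 2 := by
  obtain ⟨hN, hF, -⟩ := D.mem_Nk_one_and N hα
  have hset := D.rise_eq N hα
  have hne := D.rise_nonempty N
  obtain ⟨hu, hdu⟩ : uAtZ u 2 α₁ ≤ 0 ∧ (uAtZ u 2 α₁ = 0 → 0 ≤ duAtZ u 2 α₁) := by
    rw [uAtZ, duAtZ, hset]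
    by_cases hbd : BddAbove (Rise (u α₁) T₁)
    · rw [if_pos hbd, if_pos hbd, zk_two, hset]
      have := D.sol.le_of_mem_rise D.pos.le (mem_rise_sSup hne hbd)
      exact ⟨this.1, fun _ => this.2⟩
    · rw [if_neg hbd, if_neg hbd]
      have hall := forall_of_not_bddAbove_rise hbd
      obtain ⟨L, hL, hlim⟩ := D.sol.exists_tendsto D.pos.le hall
      rw [hlim.limUnder_eq]
      refine ⟨hL, fun h => ?_⟩
      rw [(D.sol.tendsto_deriv_zero N D.pos.le hall (h ▸ hlim)).limUnder_eq]
  rcases hu.lt_or_eq with h | h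
  · exact Or.inr (Or.inr (mem_Fk_two.mpr ⟨hN, hF, h⟩))
  · rcases (hdu h).lt_or_eq with h' | h'
    · exact Or.inr (Or.inl (mem_Nk_two.mpr ⟨hN, hF, h, h'⟩))
    · exact Or.inl (mem_Gk_two.mpr ⟨hN, hF, h, h'.symm⟩)

end Descent

end Paper

namespace Paper

/-- The solution of a bound state comes arbitrarily close to `0` with arbitrarily small slope. -/
theorem Descent.exists_small_slope {k : ℕ} {f : ℝ → ℝ} {u : ℝ → ℝ → ℝ} {b β α T ε η : ℝ}
    (N : Nonlin k f b β) (D : Descent k f β (u α) T) (hα : α ∈ Gk u 2) (hε : 0 < ε) (hη : 0 < η) :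
    ∃ y X, T < y ∧ y < X ∧ (∀ t ∈ Ioc T X, u α t < 0 ∧ 0 < deriv (u α) t) ∧ -ε < u α y ∧
      deriv (u α) y < η := by
  obtain ⟨hN, -, h0, h1⟩ := mem_Gk_two.mp hα
  have hset := D.rise_eq N hN.1
  have key : ∃ l : Filter ℝ, l.NeBot ∧ Tendsto (u α) l (𝓝 0) ∧ Tendsto (deriv (u α)) l (𝓝 0) ∧
      ∀ᶠ y in l, T < y ∧ ∃ X, y < X ∧ ∀ t ∈ Ioc T X, u α t < 0 ∧ 0 < deriv (u α) t := by
    by_cases hb : BddAbove (Rise (u α) T)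
    · rw [uAtZ, hset, if_pos hb, zk_two, hset] at h0
      rw [duAtZ, hset, if_pos hb, zk_two, hset] at h1
      obtain ⟨hZ, hmem⟩ := mem_rise_sSup (D.rise_nonempty N) hb
      obtain ⟨Z, hZd⟩ : ∃ Z, Z = sSup (Rise (u α) T) := ⟨_, rfl⟩
      rw [← hZd] at h0 h1 hZ hmem
      have hZ0 : 0 < Z := D.pos.trans hZ
      refine ⟨𝓝[<] Z, inferInstance, ?_, ?_, ?_⟩
      · have := (D.sol.continuousAt hZ0).continuousWithinAt (s := Iio Z)
        rwa [ContinuousWithinAt, h0] at this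
      · have := (D.sol.continuousAt_deriv hZ0).continuousWithinAt (s := Iio Z)
        rwa [ContinuousWithinAt, h1] at this
      · filter_upwards [Ioo_mem_nhdsLT hZ] with y hy
        obtain ⟨X, hyX, hXZ⟩ := exists_between hy.2
        exact ⟨hy.1, X, hyX, fun t ht => hmem t ⟨ht.1, ht.2.trans_lt hXZ⟩⟩
    · have hall := forall_of_not_bddAbove_rise hb
      rw [uAtZ, hset, if_neg hb] at h0
      have hlim := D.sol.tendsto_zero_of_limUnder D.pos.le hall h0
      refine ⟨atTop, inferInstance, hlim, D.sol.tendsto_deriv_zero N D.pos.le hall hlim, ?_⟩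
      filter_upwards [eventually_gt_atTop T] with y hy
      exact ⟨hy, y + 1, by linarith, fun t ht => hall t ht.1⟩
  obtain ⟨l, hl, hv, hdv, hev⟩ := key
  obtain ⟨y, h2, h3, hTy, X, hyX, h4⟩ := ((hv.eventually_const_lt (neg_neg_of_pos hε)).and
    ((hdv.eventually_lt_const hη).and hev)).exists
  exact ⟨y, X, hTy, hyX, h4, h2, h3⟩

/-- Open conditions on a compact set of radii are stable under perturbation of the parameter. -/
theorem eventually_forall_mem {g : ℝ × ℝ → ℝ} {A K U : Set ℝ} {a : ℝ}
    (hg : ContinuousOn g (Ioi 0 ×ˢ A)) (ha : 0 < a) (hK : IsCompact K) (hKA : K ⊆ A)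
    (hU : IsOpen U) (h : ∀ r ∈ K, g (a, r) ∈ U) : ∀ᶠ α in 𝓝 a, ∀ r ∈ K, g (α, r) ∈ U := by
  have : ∀ᶠ α in 𝓝 a, ∀ r ∈ K, (α, r) ∈ Ioi (0 : ℝ) ×ˢ A → g (α, r) ∈ U := by
    refine hK.eventually_forall_of_forall_eventually fun r hr => ?_
    exact eventually_nhdsWithin_iff.mp
      ((hg (a, r) ⟨ha, hKA hr⟩).eventually_mem (hU.mem_nhds (h r hr)))
  filter_upwards [this, lt_mem_nhds ha] with α h1 h2 r hr using h1 r hr ⟨h2, hKA hr⟩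

variable {k : ℕ} {f : ℝ → ℝ} {u : ℝ → ℝ → ℝ} {a : ℝ}

/-- A level crossed transversally is crossed by nearby solutions, with nearby slope. -/
theorem Family.eventually_exists_level (hu : Family (k + 2) f u) (ha : 0 < a) {A B x : ℝ}
    {V : Set ℝ} (hA : 0 ≤ A) (hx : x ∈ Ioo A B) (hpos : 0 < deriv (u a) x) (hV : IsOpen V)
    (hxV : deriv (u a) x ∈ V) :
    ∀ᶠ α in 𝓝 a, ∃ x' ∈ Ioo A B, u α x' = u a x ∧ deriv (u α) x' ∈ V := by
  have S := hu.sol ha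
  have hx0 : 0 < x := hA.trans_lt hx.1
  have hW : IsOpen (V ∩ Ioi 0) := hV.inter isOpen_Ioi
  obtain ⟨e, he, hball⟩ := Metric.nhds_basis_closedBall.mem_iff.mp
    (inter_mem (Ioo_mem_nhds hx.1 hx.2)
      ((S.continuousAt_deriv hx0).preimage_mem_nhds (hW.mem_nhds ⟨hxV, hpos⟩)))
  rw [Real.closedBall_eq_Icc] at hball
  have hsub : Icc (x - e) (x + e) ⊆ Ici 0 := fun t ht => hA.trans (hball ht).1.1.le
  have mono : StrictMonoOn (u a) (Icc (x - e) (x + e)) :=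
    S.strictMonoOn (hsub (left_mem_Icc.mpr (by linarith)))
      fun t ht => (hball (Ioo_subset_Icc_self ht)).2.2
  have hl : x - e ∈ Icc (x - e) (x + e) := left_mem_Icc.mpr (by linarith)
  have hr : x + e ∈ Icc (x - e) (x + e) := right_mem_Icc.mpr (by linarith)
  have hm : x ∈ Icc (x - e) (x + e) := ⟨by linarith, by linarith⟩
  filter_upwards [lt_mem_nhds ha,
    eventually_forall_mem hu.2.2 ha isCompact_Icc hsub hW fun t ht => (hball ht).2,
    eventually_forall_mem hu.2.1 ha (isCompact_singleton (x := x - e))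
      (singleton_subset_iff.mpr (hsub hl)) (isOpen_Iio (a := u a x))
      (by simpa using mono hl hm (by linarith)),
    eventually_forall_mem hu.2.1 ha (isCompact_singleton (x := x + e))
      (singleton_subset_iff.mpr (hsub hr)) (isOpen_Ioi (a := u a x))
      (by simpa using mono hm hr (by linarith))] with α h0 h1 h2 h3
  obtain ⟨x', hx', hval⟩ := intermediate_value_Icc (by linarith)
    ((hu.sol h0).cont.mono hsub) ⟨(h2 _ rfl).le, (h3 _ rfl).le⟩
  exact ⟨x', (hball hx').1, hval, (h1 x' hx').1⟩

/-- While a solution stays above `b`, it decreases. -/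
theorem Sol.deriv_neg_of_lt {b β : ℝ} {v : ℝ → ℝ} (S : Sol k f v) (N : Nonlin k f b β) {r : ℝ}
    (hr : 0 < r) (h : ∀ t ∈ Icc 0 r, b < v t) : deriv v r < 0 := by
  have anti : StrictAntiOn (fun t => t ^ (k + 1) * deriv v t) (Icc 0 r) := by
    refine strictAntiOn_Icc_of_hasDerivAt (g' := fun t => -(t ^ (k + 1) * f (v t)))
      ((continuousOn_id.pow _).mul (S.cont_deriv.mono fun t ht => ht.1)) (fun t ht => ?_)
      fun t ht => ?_
    · refine ((hasDerivAt_pow (k + 1) t).mul (S.hasDerivAt_deriv t ht.1)).congr_deriv ?_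
      have := ht.1.ne'
      push_cast
      field_simp
      ring
    · have h1 := N.pos _ (h t (Ioo_subset_Icc_self ht))
      have h2 : 0 < t ^ (k + 1) := pow_pos ht.1 _
      have := mul_pos h2 h1
      linarith
  have := anti (left_mem_Icc.mpr hr.le) (right_mem_Icc.mpr hr.le) hr
  simp only [ne_eq, Nat.add_eq_zero_iff, one_ne_zero, and_false, not_false_eq_true, zero_pow,
    zero_mul] at this
  exact neg_of_mul_neg_right this (pow_nonneg hr.le _)

/-- The first minimum persists, near its original position. -/
theorem Descent.eventually_exists {b β T d : ℝ} (N : Nonlin k f b β) (hu : Family (k + 2) f u)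
    (ha : 0 < a) (D : Descent k f β (u a) T) (hd : 0 < d) :
    ∃ c ∈ Ioo T (T + d), ∀ X, (∀ t ∈ Ioc T X, 0 < deriv (u a) t) →
      ∀ᶠ α in 𝓝 a, ∃ T', T - d < T' ∧ T' < c ∧ Descent k f β (u α) T' ∧
        ∀ t ∈ Ioo T' X, 0 < deriv (u α) t := by
  have S := D.sol
  have hβ := N.b_lt
  obtain ⟨G, hG⟩ : ∃ G : ℝ × ℝ → ℝ,
    G = fun q => -((k + 1) / q.2 * deriv (u q.1) q.2) - f (u q.1 q.2) := ⟨_, rfl⟩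
  have hsub0 : Ioi (0 : ℝ) ×ˢ Ioi (0 : ℝ) ⊆ Ioi 0 ×ˢ Ici 0 := prod_mono_right Ioi_subset_Ici_self
  have hGc : ContinuousOn G (Ioi 0 ×ˢ Ioi 0) := by
    rw [hG]
    refine (((continuousOn_const.div continuousOn_snd fun q hq => (mem_Ioi.mp hq.2).ne').mul
      (hu.2.2.mono hsub0)).neg).sub (N.cont.comp_continuousOn (hu.2.1.mono hsub0))
  have hGT : 0 < G (a, T) := by
    have h1 := N.pos (-u a T) (by linarith [D.bot])
    rw [N.odd] at h1
    simpa [hG, D.deriv_eq] using h1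
  have hGat : ContinuousAt (fun t => G (a, t)) T :=
    (hGc.continuousAt (prod_mem_nhds (Ioi_mem_nhds ha) (Ioi_mem_nhds D.pos))).comp
      (f := fun t => (a, t)) (by fun_prop)
  obtain ⟨e, he, hball⟩ := Metric.nhds_basis_closedBall.mem_iff.mp
    (inter_mem (Ioo_mem_nhds (max_lt (sub_lt_self T hd) D.pos) (lt_add_of_pos_right T hd))
      (inter_mem ((S.continuousAt D.pos).eventually_lt_const D.bot)
        (hGat.eventually_const_lt hGT)))
  rw [Real.closedBall_eq_Icc] at hball
  have hl : T - e ∈ Icc (T - e) (T + e) := left_mem_Icc.mpr (by linarith)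
  have hr : T + e ∈ Icc (T - e) (T + e) := right_mem_Icc.mpr (by linarith)
  have hm : T ∈ Icc (T - e) (T + e) := ⟨by linarith, by linarith⟩
  have hsub : Icc (T - e) (T + e) ⊆ Ioi 0 := fun t ht =>
    (le_max_right _ _).trans_lt (hball ht).1.1
  have hsub' : Icc (T - e) (T + e) ⊆ Ici 0 := hsub.trans Ioi_subset_Ici_self
  have hmono : ∀ α, 0 < α → (∀ t ∈ Icc (T - e) (T + e), G (α, t) ∈ Ioi 0) →
      StrictMonoOn (deriv (u α)) (Icc (T - e) (T + e)) := by
    intro α hα h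
    refine strictMonoOn_of_deriv_pos (convex_Icc _ _) ((hu.sol hα).cont_deriv.mono hsub')
      fun t ht => ?_
    rw [interior_Icc] at ht
    have ht := Ioo_subset_Icc_self ht
    rw [((hu.sol hα).hasDerivAt_deriv t (hsub ht)).deriv]
    simpa [hG] using h t ht
  have hdl : deriv (u a) (T - e) < 0 := D.deriv_neg _ ⟨hsub hl, by linarith⟩
  have hdr : 0 < deriv (u a) (T + e) := by
    rw [← D.deriv_eq]
    exact hmono a ha (fun t ht => (hball ht).2.2) hm hr (by linarith)
  obtain ⟨r₀, hr₀, hr₀'⟩ : ∃ r₀ > 0, ∀ t ∈ Icc 0 r₀, β < u a t := by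
    have := (S.cont 0 (mem_Ici.mpr le_rfl)).eventually_const_lt D.top
    obtain ⟨r, hr, h⟩ := (mem_nhdsGE_iff_exists_Icc_subset).mp this
    exact ⟨r, hr, h⟩
  refine ⟨T + e, ⟨by linarith, (hball hr).1.2⟩, fun X hX => ?_⟩
  filter_upwards [lt_mem_nhds ha,
    eventually_forall_mem hGc ha isCompact_Icc hsub isOpen_Ioi fun t ht => (hball ht).2.2,
    eventually_forall_mem hu.2.1 ha isCompact_Icc hsub' isOpen_Iio fun t ht => (hball ht).2.1,
    eventually_forall_mem hu.2.1 ha isCompact_Icc Icc_subset_Ici_self isOpen_Ioi hr₀',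
    eventually_forall_mem hu.2.2 ha isCompact_Icc
      (Icc_subset_Ici_self.trans (Ici_subset_Ici.mpr hr₀.le)) (isOpen_Iio (a := 0))
      (K := Icc r₀ (T - e)) fun t ht => D.deriv_neg t ⟨hr₀.trans_le ht.1, by linarith [ht.2]⟩,
    eventually_forall_mem hu.2.2 ha isCompact_Icc
      (Icc_subset_Ici_self.trans (Ici_subset_Ici.mpr (hsub' hr))) (isOpen_Ioi (a := 0))
      (K := Icc (T + e) X) fun t ht => hX t ⟨by linarith [ht.1], ht.2⟩,
    eventually_forall_mem hu.2.2 ha (isCompact_singleton (x := T - e))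
      (singleton_subset_iff.mpr (hsub' hl)) (isOpen_Iio (a := 0)) (by simpa using hdl),
    eventually_forall_mem hu.2.2 ha (isCompact_singleton (x := T + e))
      (singleton_subset_iff.mpr (hsub' hr)) (isOpen_Ioi (a := 0)) (by simpa using hdr)]
    with α hα h1 h2 h3 h4 h5 h6 h7
  have hS := hu.sol hα
  have mono := hmono α hα h1
  obtain ⟨T', hT', hT'0⟩ := intermediate_value_Ioo (by linarith) (hS.cont_deriv.mono hsub')
    ⟨h6 _ rfl, h7 _ rfl⟩
  have hT'' := Ioo_subset_Icc_self hT'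
  refine ⟨T', (le_max_left _ _).trans_lt (hball hT'').1.1, hT'.2,
    ⟨hS, hsub hT'', fun t ht => ?_, hT'0, h3 0 (left_mem_Icc.mpr hr₀.le), h2 T' hT''⟩,
    fun t ht => ?_⟩
  · rcases le_total t r₀ with h | h
    · exact hS.deriv_neg_of_lt N ht.1 fun s hs => hβ.trans (h3 s ⟨hs.1, hs.2.trans h⟩)
    rcases le_total t (T - e) with h' | h'
    · exact h4 t ⟨h, h'⟩
    · rw [← hT'0]
      exact mono ⟨h', by linarith [ht.2, hT'.2]⟩ hT'' ht.2
  · rcases le_total t (T + e) with h | h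
    · rw [← hT'0]
      exact mono hT'' ⟨by linarith [ht.1, hT'.1], h⟩ ht.1
    · exact h5 t ⟨h, ht.2.le⟩

/-- Near a bound state, all solutions share the descent and ascent geometry, with slopes as small
as the threshold requires. -/
theorem Family.exists_threshold_eventually {b β : ℝ} (N : Nonlin k f b β)
    (hu : Family (k + 2) f u) (ha : a ∈ Gk u 2) :
    ∃ ε ρ R σ τ η, 0 < ε ∧ ε < b / 2 ∧ Threshold k f b ρ R σ τ η ∧
      ∀ᶠ α in 𝓝 a, ∃ T x y X, Descent k f β (u α) T ∧ Ascent b ε ρ R σ τ η (u α) T x y X := by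
  have ha0 : 0 < a := ha.1.1
  have hb := N.b_pos
  have hbβ := N.b_lt
  obtain ⟨T, D⟩ := Descent.exists_of_mem_Gk N (hu.sol ha0) (hu.1 a ha0).1 ha
  have S := D.sol
  have bot := D.bot
  have hT := D.pos
  obtain ⟨y₀, X₀, hTy₀, hyX₀, hrise₀, hlev₀, -⟩ :=
    D.exists_small_slope N ha (half_pos hb) one_pos
  obtain ⟨x, hx, hxv⟩ := intermediate_value_Ioo hTy₀.le (S.cont.mono fun t ht => hT.le.trans ht.1)
    (show -(b / 2) ∈ Ioo (u a T) (u a y₀) from ⟨by linarith, hlev₀⟩)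
  have hx' : 0 < deriv (u a) x := (hrise₀ x ⟨hx.1, (hx.2.trans hyX₀).le⟩).2
  obtain ⟨Q, hQ⟩ := (isCompact_Icc (a := (0 : ℝ)) (b := b)).bddAbove_image
    (f := fun s => -f s) N.cont.neg.continuousOn
  obtain ⟨η, hη, hthr⟩ := Branch.exists_crossing_threshold (ρ := T / 2) (R := x + 1)
    (σ := deriv (u a) x / 2) (τ := 2 * deriv (u a) x) k hb N.nonpos
    (fun s hs => hQ ⟨s, hs, rfl⟩) (by linarith) (by linarith [hx.1]) (by linarith) (by linarith)
  obtain ⟨y, X, hTy, hyX, hrise, hlev, hslope⟩ := D.exists_small_slope N ha (half_pos hb) hη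
  have hxy : x < y := by
    by_contra! h
    have := (S.strictMonoOn (B := X₀) hT.le fun t ht =>
      (hrise₀ t (Ioo_subset_Ioc_self ht)).2).monotoneOn
      ⟨hTy.le, by linarith [hx.2]⟩ ⟨hx.1.le, by linarith [hx.2]⟩ h
    linarith
  have hy := hrise y ⟨hTy, hyX.le⟩
  obtain ⟨c, hc, hev⟩ := D.eventually_exists N hu ha0 (d := min (T / 2) (x - T))
    (lt_min (by linarith) (by linarith [hx.1]))
  have hcx : c < x := by linarith [hc.2, min_le_right (T / 2) (x - T)]
  have hc0 : 0 ≤ c := by linarith [hc.1]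
  refine ⟨-u a y, T / 2, x + 1, deriv (u a) x / 2, 2 * deriv (u a) x, η, by linarith, by linarith,
    hthr, ?_⟩
  filter_upwards [hev X fun t ht => (hrise t ht).2,
    hu.eventually_exists_level ha0 (B := min X (x + 1)) hc0
      ⟨hcx, lt_min (hxy.trans hyX) (lt_add_one x)⟩ hx'
      (isOpen_Ioo (a := deriv (u a) x / 2) (b := 2 * deriv (u a) x))
      ⟨by linarith, by linarith⟩,
    hu.eventually_exists_level ha0 hc0 ⟨hcx.trans hxy, hyX⟩ hy.2 (isOpen_Iio (a := η)) hslope]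
    with α ⟨T', hT', hT'c, D', hpos⟩ ⟨x', hx'm, hx'v, hx's⟩ ⟨y', hy'm, hy'v, hy's⟩
  obtain ⟨hx1, hx2⟩ := lt_min_iff.mp hx'm.2
  exact ⟨T', x', y', X, D', by linarith [min_le_left (T / 2) (x - T)],
    ⟨by linarith [hx'm.1], hx1.le⟩, ⟨by linarith [hy'm.1], hy'm.2⟩, hpos, hx'v.trans hxv, hx2.le,
    hx's.1.le, hx's.2.le, by rw [hy'v, neg_neg], le_of_lt hy's⟩

end Paper

open Paper Set Filter MeasureTheory

/-- **Proposition 4.10.** Under (f1)–(f3) and (f4), for `α* ∈ G₂`: nearby initial values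
`α₁ < α₂` satisfy: if `α₁ ∈ G₂ ∪ N₂` then `α₂ ∈ N₂`, `Z₂(α₁) > Z₂(α₂)` and
`|u₁'(Z₂(α₁))| < |u₂'(Z₂(α₂))|`; if `α₂ ∈ G₂` then `α₁ ∈ F₂`. -/
theorem G2_N2_F2_trichotomy
    (n : ℕ) (hn : 2 ≤ n)
    (f : ℝ → ℝ) (b β : ℝ) (hf : Continuous f)
    (h1 : Hf1 f b β) (h2 : Hf2 f) (h3 : Hf3 f β) (h4 : Hf4 n f β)
    (u : ℝ → ℝ → ℝ) (hu : Family n f u)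
    (αs : ℝ) (hαs : αs ∈ Gk u 2) :
    ∃ δ : ℝ, 0 < δ ∧
      ∀ α₁ ∈ Ioo (αs - δ) (αs + δ), ∀ α₂ ∈ Ioo (αs - δ) (αs + δ), α₁ < α₂ →
        (α₁ ∈ Gk u 2 ∪ Nk u 2 →
          α₂ ∈ Nk u 2 ∧ ZkE u 2 α₂ < ZkE u 2 α₁ ∧
            |duAtZ u 2 α₁| < |duAtZ u 2 α₂|) ∧
        (α₂ ∈ Gk u 2 → α₁ ∈ Fk u 2) := by
  obtain ⟨k, rfl⟩ := Nat.exists_eq_add_of_le' hn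
  have N := nonlin_of_hyps hf h1 h2 h3 h4
  have hαs0 : 0 < αs := hαs.1.1
  obtain ⟨ε, ρ, R, σ, τ, η, hε, hεb, hthr, hev⟩ := hu.exists_threshold_eventually N hαs
  obtain ⟨δ, hδ, hball⟩ := Metric.eventually_nhds_iff_ball.mp (hev.and (lt_mem_nhds hαs0))
  rw [Real.ball_eq_Ioo] at hball
  refine ⟨δ, hδ, fun α₁ hα₁ α₂ hα₂ hlt => ?_⟩
  obtain ⟨⟨T₁, x₁, y₁, X₁, D₁, A₁⟩, hp₁⟩ := hball α₁ hα₁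
  obtain ⟨⟨T₂, x₂, y₂, X₂, D₂, A₂⟩, hp₂⟩ := hball α₂ hα₂
  have main : α₁ ∈ Gk u 2 ∪ Nk u 2 → α₂ ∈ Nk u 2 ∧ ZkE u 2 α₂ < ZkE u 2 α₁ ∧
      |duAtZ u 2 α₁| < |duAtZ u 2 α₂| := by
    intro h
    obtain ⟨hv, hdv⟩ : uAtZ u 2 α₁ = 0 ∧ 0 ≤ duAtZ u 2 α₁ := by
      rcases h with h | h
      · exact ⟨(mem_Gk_two.mp h).2.2.1, (mem_Gk_two.mp h).2.2.2.ge⟩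
      · exact ⟨(mem_Nk_two.mp h).2.2.1, (mem_Nk_two.mp h).2.2.2.le⟩
    refine D₁.mem_Nk_and_lt N D₂ ?_ hp₁ hp₂ hε hεb hthr A₁ A₂ hv hdv
    rwa [(hu.1 α₁ hp₁).1, (hu.1 α₂ hp₂).1]
  refine ⟨main, fun hG => ?_⟩
  have hnot : α₁ ∉ Gk u 2 ∪ Nk u 2 := fun h =>
    (mem_Nk_two.mp (main h).1).2.2.2.ne' (mem_Gk_two.mp hG).2.2.2
  rcases D₁.trichotomy N hp₁ with h | h | h
  · exact absurd (Or.inl h) hnot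
  · exact absurd (Or.inr h) hnot
  · exact h
end

section
/- Let n ≥ 2 and let f : ℝ → ℝ be continuous. Suppose u is a bounded C² solution of u''(r) + ((n−1)/r)u'(r) + f(u(r)) = 0 on (R,∞) for some R > 0 which is monotone on (R,∞). Then there exists L ∈ ℝ such that lim_{r→∞} u(r) = L, lim_{r→∞} u'(r) = 0, and f(L) = 0. -/
open Set Filter MeasureTheory

open Paper Set Filter MeasureTheory

theorem MonotoneOn.exists_tendsto_atTop_of_abs_le {u : ℝ → ℝ} {R C : ℝ}
    (hu : MonotoneOn u (Ioi R)) (hC : ∀ r ∈ Ioi R, |u r| ≤ C) :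
    ∃ L, Tendsto u atTop (nhds L) := by
  have hmem : ∀ r : ℝ, max r (R + 1) ∈ Ioi R := fun r =>
    (lt_add_one R).trans_le (le_max_right _ _)
  have hmono : Monotone fun r => u (max r (R + 1)) := fun a b hab =>
    hu (hmem a) (hmem b) (max_le_max_right _ hab)
  have hbdd : BddAbove (range fun r => u (max r (R + 1))) := by
    refine ⟨C, ?_⟩
    rintro _ ⟨r, rfl⟩
    exact (le_abs_self _).trans (hC _ (hmem r))
  refine ⟨_, (tendsto_atTop_ciSup hmono hbdd).congr' ?_⟩
  filter_upwards [eventually_ge_atTop (R + 1)] with r hr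
  rw [max_eq_left hr]

/-- A nonnegative derivative whose own derivative is bounded above vanishes at infinity
as soon as the function converges. -/
theorem tendsto_deriv_zero_of_second_deriv_le {u v w : ℝ → ℝ} {L M : ℝ}
    (hu : ∀ᶠ r in atTop, HasDerivAt u (v r) r) (hv : ∀ᶠ r in atTop, HasDerivAt v (w r) r)
    (hv0 : ∀ᶠ r in atTop, 0 ≤ v r) (hw : ∀ᶠ r in atTop, w r ≤ M)
    (hL : Tendsto u atTop (nhds L)) : Tendsto v atTop (nhds 0) := by
  obtain ⟨A, hA⟩ := eventually_atTop.1 (hu.and (hv.and hw))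
  have key : ∀ h > 0, ∀ r, A + h ≤ r → v r ≤ (u r - u (r - h)) / h + |M| * h := by
    intro h hh r hr
    obtain ⟨c, hc, hc'⟩ := exists_hasDerivAt_eq_slope u v (sub_lt_self r hh)
      (fun x hx => (hA x (by linarith [hx.1])).1.continuousAt.continuousWithinAt)
      (fun x hx => (hA x (by linarith [hx.1])).1)
    obtain ⟨d, hd, hd'⟩ := exists_hasDerivAt_eq_slope v w hc.2
      (fun x hx => (hA x (by linarith [hx.1, hc.1])).2.1.continuousAt.continuousWithinAt)
      (fun x hx => (hA x (by linarith [hx.1, hc.1])).2.1)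
    have hdM : w d ≤ |M| := (hA d (by linarith [hd.1, hc.1])).2.2.trans (le_abs_self M)
    rw [hd', div_le_iff₀ (sub_pos.2 hc.2)] at hdM
    have hle : |M| * (r - c) ≤ |M| * h :=
      mul_le_mul_of_nonneg_left (by linarith [hc.1]) (abs_nonneg M)
    rw [sub_sub_cancel] at hc'
    linarith
  rw [tendsto_order]
  refine ⟨fun a ha => hv0.mono fun r hr => ha.trans_le hr, fun a ha => ?_⟩
  obtain ⟨h, hh, hha⟩ : ∃ h > 0, |M| * h < a := by
    refine ⟨a / (|M| + 1), by positivity, ?_⟩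
    rw [← mul_div_assoc, div_lt_iff₀ (by positivity)]
    linarith
  have hlim : Tendsto (fun r => (u r - u (r - h)) / h + |M| * h) atTop (nhds (|M| * h)) := by
    simpa [sub_eq_add_neg] using ((hL.sub (hL.comp (tendsto_atTop_add_const_right atTop (-h)
      tendsto_id))).div_const h).add_const (|M| * h)
  filter_upwards [hlim.eventually_lt_const hha, eventually_ge_atTop (A + h)] with r hr hrA
  exact (key h hh r hrA).trans_lt hr

/-- If a function and its derivative both converge at infinity, the derivative tends to `0`. -/
theorem deriv_limit_eq_zero_of_tendsto {v w : ℝ → ℝ} {l a : ℝ}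
    (hv : ∀ᶠ r in atTop, HasDerivAt v (w r) r)
    (hl : Tendsto v atTop (nhds l)) (ha : Tendsto w atTop (nhds a)) : a = 0 := by
  obtain ⟨A, hA⟩ := eventually_atTop.1 hv
  have hmvt : ∀ r, ∃ c, r < c ∧ (A ≤ r → w c = v (r + 1) - v r) := by
    intro r
    by_cases hr : A ≤ r
    · obtain ⟨c, hc, hc'⟩ := exists_hasDerivAt_eq_slope v w (lt_add_one r)
        (fun x hx => (hA x (hr.trans hx.1)).continuousAt.continuousWithinAt)
        (fun x hx => hA x (hr.trans hx.1.le))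
      exact ⟨c, hc.1, fun _ => by simpa using hc'⟩
    · exact ⟨r + 1, lt_add_one r, fun h => absurd h hr⟩
  choose c hc hc' using hmvt
  have hwc : Tendsto (fun r => w (c r)) atTop (nhds a) :=
    ha.comp (tendsto_atTop_mono (fun r => (hc r).le) tendsto_id)
  have hdiff : Tendsto (fun r => v (r + 1) - v r) atTop (nhds 0) := by
    simpa using (hl.comp (tendsto_atTop_add_const_right atTop 1 tendsto_id)).sub hl
  refine tendsto_nhds_unique hwc (hdiff.congr' ?_)
  filter_upwards [eventually_ge_atTop A] with r hr
  exact (hc' r hr).symm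

/-- The nondecreasing case, with a general nonnegative damping constant `k`. -/
theorem monotone_damped_solution_limit {k R C : ℝ} {f u v w : ℝ → ℝ} (hk : 0 ≤ k)
    (hf : Continuous f) (hC : ∀ r ∈ Ioi R, |u r| ≤ C) (hmono : MonotoneOn u (Ioi R))
    (hu : ∀ r ∈ Ioi R, HasDerivAt u (v r) r) (hv : ∀ r ∈ Ioi R, HasDerivAt v (w r) r)
    (heq : ∀ r ∈ Ioi R, w r + k / r * v r + f (u r) = 0) :
    ∃ L : ℝ, Tendsto u atTop (nhds L) ∧ Tendsto v atTop (nhds 0) ∧ f L = 0 := by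
  obtain ⟨L, hL⟩ := hmono.exists_tendsto_atTop_of_abs_le hC
  have hR : ∀ᶠ r : ℝ in atTop, r ∈ Ioi R := eventually_gt_atTop R
  have hfL : Tendsto (fun r => f (u r)) atTop (nhds (f L)) := (hf.tendsto L).comp hL
  have hv0 : ∀ᶠ r in atTop, 0 ≤ v r := by
    filter_upwards [hR] with r hr
    rw [← (hu r hr).deriv, ← derivWithin_of_isOpen isOpen_Ioi hr]
    exact hmono.derivWithin_nonneg
  have hw : ∀ᶠ r in atTop, w r ≤ -f L + 1 := by
    filter_upwards [hR, hv0, eventually_ge_atTop 0,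
      hfL.eventually_const_lt (sub_one_lt (f L))] with r hr hvr hr0 hfr
    have := mul_nonneg (div_nonneg hk hr0) hvr
    linarith [heq r hr]
  have hvt := tendsto_deriv_zero_of_second_deriv_le (hR.mono hu) (hR.mono hv) hv0 hw hL
  have hwt : Tendsto w atTop (nhds (-f L)) := by
    have hlim : Tendsto (fun r => -(k / r * v r) - f (u r)) atTop (nhds (-f L)) := by
      simpa using (((tendsto_const_nhds (x := k)).div_atTop tendsto_id).mul hvt).neg.sub hfL
    refine hlim.congr' ?_
    filter_upwards [hR] with r hr
    linarith [heq r hr]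
  exact ⟨L, hL, hvt, neg_eq_zero.1 (deriv_limit_eq_zero_of_tendsto (hR.mono hv) hvt hwt)⟩

/-- A bounded monotone C² solution of (E) on `(R,∞)` converges to a zero `L` of `f`,
and its derivative tends to `0`. -/
theorem monotone_bounded_solution_limit
    (n : ℕ) (hn : 2 ≤ n)
    (f : ℝ → ℝ) (hf : Continuous f)
    (R : ℝ) (hR : 0 < R)
    (u : ℝ → ℝ)
    (hbdd : ∃ C : ℝ, ∀ r ∈ Ioi R, |u r| ≤ C)
    (hmono : MonotoneOn u (Ioi R) ∨ AntitoneOn u (Ioi R))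
    (hud : ∀ r ∈ Ioi R, DifferentiableAt ℝ u r ∧ DifferentiableAt ℝ (deriv u) r)
    (hc2 : ContinuousOn (deriv (deriv u)) (Ioi R))
    (hueq : ∀ r ∈ Ioi R,
      deriv (deriv u) r + ((n : ℝ) - 1) / r * deriv u r + f (u r) = 0) :
    ∃ L : ℝ, Tendsto u atTop (nhds L) ∧ Tendsto (deriv u) atTop (nhds 0) ∧ f L = 0 := by
  obtain ⟨C, hC⟩ := hbdd
  have hk : (0 : ℝ) ≤ (n : ℝ) - 1 := by
    have : (2 : ℝ) ≤ n := by exact_mod_cast hn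
    linarith
  rcases hmono with hmono | hanti
  · exact monotone_damped_solution_limit hk hf hC hmono (fun r hr => (hud r hr).1.hasDerivAt)
      (fun r hr => (hud r hr).2.hasDerivAt) hueq
  · obtain ⟨L, hL, hv, hfL⟩ := monotone_damped_solution_limit (f := fun s => -f (-s))
      (u := fun r => -u r) (v := fun r => -deriv u r) (w := fun r => -deriv (deriv u) r) hk
      (by fun_prop) (fun r hr => by simpa using hC r hr) hanti.neg
      (fun r hr => (hud r hr).1.hasDerivAt.neg) (fun r hr => (hud r hr).2.hasDerivAt.neg)
      (fun r hr => by
        have := hueq r hr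
        simp only [neg_neg]
        linarith)
    exact ⟨-L, by simpa using hL.neg, by simpa using hv.neg, neg_eq_zero.1 hfL⟩
end
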